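/- Let ε ∈ {1,−1} and consider the 2-parameter family of surfaces given by f(x,y;t,u) = y² + εx⁴ + x²y³ + tx² + ux²y. Then the family of asymptotic BDEs of f(·,·;t,u), parametrized by (t,u) ∈ ℝ², is fiber topologically equivalent at 0 to the family of BDEs dy² + (εx² + y³ + uy + t)dx² = 0, i.e. the family with coefficients (a,b,c) = (1, 0, εx² + y³ + uy + t). -/

import Mathlib

open Asymptotics Filter Set

noncomputable section

/-- Partial derivative in the first variable (∂/∂x). -/
def pdx (f : ℝ × ℝ → ℝ) (p : ℝ × ℝ) : ℝ := deriv (fun s => f (s, p.2)) p.1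

/-- Partial derivative in the second variable (∂/∂y). -/
def pdy (f : ℝ × ℝ → ℝ) (p : ℝ × ℝ) : ℝ := deriv (fun s => f (p.1, s)) p.2

/-- f_xx -/
def fxx (f : ℝ × ℝ → ℝ) : ℝ × ℝ → ℝ := pdx (pdx f)
/-- f_xy -/
def fxy (f : ℝ × ℝ → ℝ) : ℝ × ℝ → ℝ := pdy (pdx f)
/-- f_yy -/
def fyy (f : ℝ × ℝ → ℝ) : ℝ × ℝ → ℝ := pdy (pdy f)

/-- The discriminant δ = f_xy² − f_xx·f_yy of the asymptotic BDE of `f`. -/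
def bdeDiscr (f : ℝ × ℝ → ℝ) : ℝ × ℝ → ℝ := fun p => (fxy f p) ^ 2 - fxx f p * fyy f p

/-- The BDE `a dy² + 2b dxdy + c dx² = 0`, regarded as the family of quadratic
forms `ω_p(v) = a(p)v₂² + 2b(p)v₁v₂ + c(p)v₁²`. -/
def BDE (a b c : ℝ × ℝ → ℝ) : (ℝ × ℝ) → (ℝ × ℝ) → ℝ :=
  fun p v => a p * v.2 ^ 2 + 2 * b p * v.1 * v.2 + c p * v.1 ^ 2

/-- The asymptotic BDE `f_yy dy² + 2 f_xy dxdy + f_xx dx² = 0` of the surface `z = f(x,y)`. -/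
def asymBDE (f : ℝ × ℝ → ℝ) : (ℝ × ℝ) → (ℝ × ℝ) → ℝ := BDE (fyy f) (fxy f) (fxx f)

/-- `j^k f(0) = P` : the degree-k Taylor polynomial of `f` at the origin is `P`,
i.e. `f − P = o(‖(x,y)‖^k)` as `(x,y) → 0`. -/
def HasJetAt0 (f P : ℝ × ℝ → ℝ) (k : ℕ) : Prop :=
  (fun p => f p - P p) =o[nhds (0 : ℝ × ℝ)] fun p => ‖p‖ ^ k

/-- `γ` is an integral curve of the BDE `ω` on the open interval `I`:
`γ` is C¹ on `I` with nowhere-vanishing derivative annihilating `ω`. -/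
def IsIntegralCurveOnBDE (ω : (ℝ × ℝ) → (ℝ × ℝ) → ℝ) (γ : ℝ → ℝ × ℝ) (I : Set ℝ) : Prop :=
  (∃ a b : ℝ, I = Set.Ioo a b) ∧
  ∃ dγ : ℝ → ℝ × ℝ, ContinuousOn dγ I ∧
    ∀ t ∈ I, HasDerivAt γ (dγ t) t ∧ dγ t ≠ 0 ∧ ω (γ t) (dγ t) = 0

/-- Topological equivalence of two BDEs at the origin: a local homeomorphism
fixing `0` sending integral curves of one to integral curves of the other. -/
def TopEquivAt0 (ω Ω : (ℝ × ℝ) → (ℝ × ℝ) → ℝ) : Prop :=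
  ∃ (U V : Set (ℝ × ℝ)) (h hinv : ℝ × ℝ → ℝ × ℝ),
    IsOpen U ∧ IsOpen V ∧ (0 : ℝ × ℝ) ∈ U ∧ (0 : ℝ × ℝ) ∈ V ∧ h 0 = 0 ∧
    ContinuousOn h U ∧ ContinuousOn hinv V ∧
    Set.BijOn h U V ∧ Set.InvOn hinv h U V ∧
    (∀ γ I, IsIntegralCurveOnBDE ω γ I → Set.MapsTo γ I U →
      ∃ σ J, IsIntegralCurveOnBDE Ω σ J ∧ h '' (γ '' I) = σ '' J) ∧
    (∀ σ J, IsIntegralCurveOnBDE Ω σ J → Set.MapsTo σ J V →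
      ∃ γ I, IsIntegralCurveOnBDE ω γ I ∧ hinv '' (σ '' J) = γ '' I)

/-- Smooth equivalence of two BDEs at the origin: a local C^∞ diffeomorphism `h`
fixing `0` pulling one family of quadratic forms back to a nonvanishing multiple
of the other. -/
def SmoothEquivAt0 (ω Ω : (ℝ × ℝ) → (ℝ × ℝ) → ℝ) : Prop :=
  ∃ (U V : Set (ℝ × ℝ)) (h hinv : ℝ × ℝ → ℝ × ℝ) (ρ : ℝ × ℝ → ℝ),
    IsOpen U ∧ IsOpen V ∧ (0 : ℝ × ℝ) ∈ U ∧ (0 : ℝ × ℝ) ∈ V ∧ h 0 = 0 ∧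
    ContDiffOn ℝ (⊤ : ℕ∞) h U ∧ ContDiffOn ℝ (⊤ : ℕ∞) hinv V ∧
    Set.BijOn h U V ∧ Set.InvOn hinv h U V ∧
    ContDiffOn ℝ (⊤ : ℕ∞) ρ U ∧ (∀ p ∈ U, ρ p ≠ 0) ∧
    (∀ p ∈ U, ∀ v : ℝ × ℝ, Ω (h p) (fderiv ℝ h p v) = ρ p * ω p v)

/-- Fiber topological equivalence at `0` of two 2-parameter families of BDEs:
a homeomorphism `φ` of parameter spaces (onto its image), fixing `0`, such that
corresponding members of the families are topologically equivalent at `0`. -/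
def FiberTopEquivAt0 (ω Ω : (ℝ × ℝ) → (ℝ × ℝ) → (ℝ × ℝ) → ℝ) : Prop :=
  ∃ (W : Set (ℝ × ℝ)) (φ ψ : ℝ × ℝ → ℝ × ℝ),
    W ∈ nhds (0 : ℝ × ℝ) ∧ φ 0 = 0 ∧
    ContinuousOn φ W ∧ ContinuousOn ψ (φ '' W) ∧
    Set.InvOn ψ φ W (φ '' W) ∧
    ∀ q ∈ W, TopEquivAt0 (ω q) (Ω (φ q))

/-!
Since `f_yy dy + f_xy dx = d(f_y)`, completing the square in the asymptotic BDE is an exact change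
of coordinates: in `(x, f_y / 2)` it reads `dy² = g(x², y) dx²`, and `g` restricts to the axis
`x = 0` as `-(y³ + uy + t)`, just like the coefficient of the target BDE. It remains to compare two
normal forms `dy² = g(|x|, y) dx²` whose coefficients agree on the axis and are strictly monotone in
`|x|` in the same direction.

If `g(0, 0) < 0`, there are no integral curves near the origin. Otherwise, after clamping the
coordinates and continuing the leaves `y' = ±√g` horizontally through `g < 0`, exactly one leaf of
each sign passes through each point, and where `g ≥ 0` these two leaves are pinned down by the
heights of their feet on the axis `x = 0`, which together determine the point. If `g` increases
with `|x|`, or if `g(0, 0) > 0`, matching the points with the same pair of feet is the required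
homeomorphism. If `g` decreases with `|x|` and `g(0, 0) = 0`, the leaf through a point of the axis
bounces off the curve `g = 0` and returns to the axis; this defines a return map, and the points are
matched through a conjugacy between the return maps of the two forms.
-/

/-! ## Existence of solutions by approximation -/

section Existence

open Function Metric
open scoped NNReal

variable {E : Type*} [NormedAddCommGroup E] [NormedSpace ℝ E]

lemma norm_sub_sub_smul_le_of_hasDerivWithinAt {Y Y' : ℝ → E} {c : E} {C x z : ℝ}
    (hY : ∀ w ∈ uIcc x z, HasDerivWithinAt Y (Y' w) (uIcc x z) w)
    (hC : ∀ w ∈ uIcc x z, ‖Y' w - c‖ ≤ C) : ‖Y z - Y x - (z - x) • c‖ ≤ C * |z - x| := by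
  have hder (w : ℝ) (hw : w ∈ uIcc x z) :
      HasDerivWithinAt (fun w => Y w - w • c) (Y' w - (1 : ℝ) • c) (uIcc x z) w :=
    (hY w hw).sub ((hasDerivWithinAt_id w _).smul_const c)
  have h := (convex_uIcc x z).norm_image_sub_le_of_norm_hasDerivWithin_le hder
    (fun w hw => by simpa only [one_smul] using hC w hw) left_mem_uIcc right_mem_uIcc
  rwa [Real.norm_eq_abs, sub_sub_sub_comm, ← sub_smul] at h

theorem exists_forall_hasDerivWithinAt_of_lipschitzWith [CompleteSpace E] {f : ℝ → E → E}
    {K B : ℝ≥0} (hlip : ∀ x, LipschitzWith K (f x)) (hcont : ∀ y, Continuous (f · y))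
    (hbound : ∀ x y, ‖f x y‖ ≤ B) {a b x₁ : ℝ} (hx₁ : x₁ ∈ Icc a b) (y₁ : E) :
    ∃ y : ℝ → E, y x₁ = y₁ ∧
      ∀ x ∈ Icc a b, HasDerivWithinAt y (f x (y x)) (Icc a b) x := by
  have hab : 0 ≤ b - a := sub_nonneg.2 (hx₁.1.trans hx₁.2)
  have hPL : IsPicardLindelof f (⟨x₁, hx₁⟩ : Icc a b) y₁ (B * (b - a).toNNReal) 0 B K :=
    { lipschitzOnWith := fun x _ => (hlip x).lipschitzOnWith
      continuousOn := fun y _ => (hcont y).continuousOn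
      norm_le := fun x _ y _ => hbound x y
      mul_max_le := by
        rw [NNReal.coe_mul, Real.coe_toNNReal _ hab, NNReal.coe_zero, sub_zero]
        gcongr
        exact max_le (by linarith [hx₁.1]) (by linarith [hx₁.2]) }
  exact hPL.exists_eq_forall_mem_Icc_hasDerivWithinAt₀

section Limit

variable {f : ℝ → E → E} {F : ℕ → ℝ → E → E} {Y : ℕ → ℝ → E} {B : ℝ≥0} {a b x₁ : ℝ} {y₁ : E}
  (hbound : ∀ n x y, ‖F n x y‖ ≤ B)
  (hY : ∀ n, Y n x₁ = y₁ ∧ ∀ x ∈ Icc a b, HasDerivWithinAt (Y n) (F n x (Y n x)) (Icc a b) x)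

include hbound hY

lemma approx_norm_sub_le {n : ℕ} {x z : ℝ} (hx : x ∈ Icc a b) (hz : z ∈ Icc a b) :
    ‖Y n z - Y n x‖ ≤ B * |z - x| :=
  (convex_Icc a b).norm_image_sub_le_of_norm_hasDerivWithin_le (hY n).2
    (fun w _ => hbound n w (Y n w)) hx hz

lemma approx_mem_closedBall (hx₁ : x₁ ∈ Icc a b) {n : ℕ} {x : ℝ} (hx : x ∈ Icc a b) :
    Y n x ∈ closedBall y₁ (B * (b - a)) := by
  rw [mem_closedBall, dist_eq_norm, ← (hY n).1]
  refine (approx_norm_sub_le hbound hY hx₁ hx).trans ?_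
  gcongr
  rw [abs_le]
  constructor <;> linarith [hx.1, hx.2, hx₁.1, hx₁.2]

lemma exists_eventually_approx_taylor_le [ProperSpace E] (hx₁ : x₁ ∈ Icc a b)
    (hf : Continuous (uncurry f))
    (hF : TendstoUniformly (fun n => uncurry (F n)) (uncurry f) atTop) {x c : ℝ}
    (hx : x ∈ Icc a b) (hc : 0 < c) :
    ∃ δ > 0, ∀ z ∈ Icc a b, |z - x| < δ → ∀ᶠ n in atTop,
      ‖Y n z - Y n x - (z - x) • f x (Y n x)‖ ≤ c * |z - x| := by
  have hunif : UniformContinuousOn (uncurry f) (Icc a b ×ˢ closedBall y₁ (B * (b - a))) :=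
    (isCompact_Icc.prod (isCompact_closedBall _ _)).uniformContinuousOn_of_continuous
      hf.continuousOn
  obtain ⟨δ, hδ, hfδ⟩ := Metric.uniformContinuousOn_iff.1 hunif (c / 2) (half_pos hc)
  refine ⟨δ / (B + 1), by positivity, fun z hz hzx => ?_⟩
  filter_upwards [Metric.tendstoUniformly_iff.1 hF (c / 2) (half_pos hc)] with n hn
  have hsub : uIcc x z ⊆ Icc a b := uIcc_subset_Icc hx hz
  refine norm_sub_sub_smul_le_of_hasDerivWithinAt
    (fun w hw => ((hY n).2 w (hsub hw)).mono hsub) fun w hw => ?_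
  have hwx : (B + 1) * |w - x| < δ := by
    rw [lt_div_iff₀' (by positivity)] at hzx
    exact (mul_le_mul_of_nonneg_left (abs_sub_left_of_mem_uIcc hw) (by positivity)).trans_lt hzx
  have hdist : dist (w, Y n w) (x, Y n x) < δ := by
    rw [Prod.dist_eq, Real.dist_eq, dist_eq_norm, max_lt_iff]
    have := approx_norm_sub_le hbound hY (n := n) hx (hsub hw)
    constructor <;> nlinarith [abs_nonneg (w - x), B.coe_nonneg]
  have hfw := hfδ (w, Y n w) ⟨hsub hw, approx_mem_closedBall hbound hY hx₁ (hsub hw)⟩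
    (x, Y n x) ⟨hx, approx_mem_closedBall hbound hY hx₁ hx⟩ hdist
  rw [← dist_eq_norm]
  calc dist (F n w (Y n w)) (f x (Y n x))
      ≤ dist (F n w (Y n w)) (f w (Y n w)) + dist (f w (Y n w)) (f x (Y n x)) :=
        dist_triangle _ _ _
    _ ≤ c / 2 + c / 2 := add_le_add (by rw [dist_comm]; exact (hn (w, Y n w)).le) hfw.le
    _ = c := add_halves c

/-- Peano's compactness argument; an ultrafilter on `ℕ` replaces the Arzelà–Ascoli subsequence,
so that pointwise limits suffice. -/
theorem exists_forall_hasDerivWithinAt_of_tendstoUniformly [ProperSpace E]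
    (hx₁ : x₁ ∈ Icc a b) (hf : Continuous (uncurry f))
    (hF : TendstoUniformly (fun n => uncurry (F n)) (uncurry f) atTop) :
    ∃ y : ℝ → E, y x₁ = y₁ ∧
      ∀ x ∈ Icc a b, HasDerivWithinAt y (f x (y x)) (Icc a b) x := by
  let 𝓤 : Ultrafilter ℕ := hyperfilter ℕ
  have h𝓤 : (𝓤 : Filter ℕ) ≤ atTop := Nat.hyperfilter_le_atTop
  have hlim (x : ℝ) (hx : x ∈ Icc a b) : ∃ l, Tendsto (fun n => Y n x) 𝓤 (nhds l) := by
    obtain ⟨l, -, hl⟩ := (isCompact_closedBall y₁ (B * (b - a))).ultrafilter_le_nhds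
      (𝓤.map fun n => Y n x) (le_principal_iff.2 <| mem_map.2 <| univ_mem' fun n =>
        approx_mem_closedBall hbound hY hx₁ hx)
    exact ⟨l, hl⟩
  choose! y hy using hlim
  refine ⟨y, tendsto_nhds_unique (hy x₁ hx₁) ?_, fun x hx => ?_⟩
  · simp only [(hY _).1, tendsto_const_nhds]
  rw [hasDerivWithinAt_iff_isLittleO, isLittleO_iff]
  intro c hc
  obtain ⟨δ, hδ, hTaylor⟩ := exists_eventually_approx_taylor_le hbound hY hx₁ hf hF hx hc
  filter_upwards [self_mem_nhdsWithin, nhdsWithin_le_nhds (Metric.ball_mem_nhds x hδ)]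
    with z hz hzx
  have hfx : Tendsto (fun n => f x (Y n x)) 𝓤 (nhds (f x (y x))) :=
    (hf.comp (Continuous.prodMk_right x)).continuousAt.tendsto.comp (hy x hx)
  exact le_of_tendsto (((hy z hz).sub (hy x hx)).sub (hfx.const_smul (z - x))).norm
    (h𝓤 (hTaylor z hz hzx))

end Limit

end Existence

section SqrtODE

open Function
open scoped NNReal

lemma abs_sqrt_sub_sqrt_le_div {a b c : ℝ} (hc : 0 < c) (ha : c ^ 2 ≤ a) (hb : c ^ 2 ≤ b) :
    |√a - √b| ≤ |a - b| / (2 * c) := by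
  have hca : c ≤ √a := Real.le_sqrt_of_sq_le ha
  have hcb : c ≤ √b := Real.le_sqrt_of_sq_le hb
  have hfactor : a - b = (√a - √b) * (√a + √b) := by
    linear_combination -Real.sq_sqrt ((sq_nonneg c).trans ha) +
      Real.sq_sqrt ((sq_nonneg c).trans hb)
  rw [hfactor, abs_mul, abs_of_pos (by linarith : 0 < √a + √b), le_div_iff₀ (by positivity)]
  gcongr
  linarith

lemma abs_sqrt_max_zero_add_sub_sqrt_le (a : ℝ) {d : ℝ} (hd : 0 ≤ d) :
    |√(max a 0 + d) - √a| ≤ √d := by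
  have hmax : √a = √(max a 0) := by
    rcases le_total a 0 with h | h
    · rw [max_eq_right h, Real.sqrt_eq_zero_of_nonpos h, Real.sqrt_zero]
    · rw [max_eq_left h]
  rw [hmax, abs_of_nonneg (sub_nonneg.2 (Real.sqrt_le_sqrt (by linarith))), sub_le_iff_le_add]
  refine Real.sqrt_le_iff.2 ⟨by positivity, ?_⟩
  nlinarith [Real.sq_sqrt hd, Real.sq_sqrt (le_max_right a 0), Real.sqrt_nonneg d,
    Real.sqrt_nonneg (max a 0), mul_nonneg (Real.sqrt_nonneg d) (Real.sqrt_nonneg (max a 0))]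

lemma lipschitzWith_sqrt_max_zero_add {h : ℝ → ℝ} {K : ℝ≥0} (hlip : LipschitzWith K h) (σ : ℝ)
    {d : ℝ} (hd : 0 < d) :
    LipschitzWith (‖σ‖₊ * (K / (2 * √d).toNNReal)) fun y => σ * √(max (h y) 0 + d) := by
  refine LipschitzWith.of_dist_le_mul fun y z => ?_
  have hsqrt : 0 < √d := Real.sqrt_pos.2 hd
  have hle (w : ℝ) : √d ^ 2 ≤ max (h w) 0 + d := by
    rw [Real.sq_sqrt hd.le]; linarith [le_max_right (h w) 0]
  have hmax : |max (h y) 0 - max (h z) 0| ≤ K * |y - z| :=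
    (abs_max_sub_max_le_abs (h y) (h z) 0).trans (hlip.dist_le_mul y z)
  have hdiff := abs_sqrt_sub_sqrt_le_div hsqrt (hle y) (hle z)
  rw [add_sub_add_right_eq_sub] at hdiff
  rw [Real.dist_eq, Real.dist_eq, ← mul_sub, abs_mul, NNReal.coe_mul, NNReal.coe_div,
    Real.coe_toNNReal _ (by positivity), coe_nnnorm, Real.norm_eq_abs, mul_assoc,
    div_mul_eq_mul_div]
  gcongr
  exact hdiff.trans (by gcongr)

lemma tendstoUniformly_sqrt_max_zero_add {X : Type*} (G : X → ℝ) (σ : ℝ) :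
    TendstoUniformly (fun (n : ℕ) p => σ * √(max (G p) 0 + 1 / ((n : ℝ) + 1)))
      (fun p => σ * √(G p)) atTop := by
  rw [Metric.tendstoUniformly_iff]
  intro c hc
  have hlim : Tendsto (fun n : ℕ => |σ| * √(1 / ((n : ℝ) + 1))) atTop (nhds (|σ| * √0)) :=
    ((Real.continuous_sqrt.tendsto 0).comp tendsto_one_div_add_atTop_nhds_zero_nat).const_mul _
  rw [Real.sqrt_zero, mul_zero] at hlim
  filter_upwards [hlim.eventually_lt_const hc] with n hn p
  rw [dist_comm, Real.dist_eq, ← mul_sub, abs_mul]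
  refine lt_of_le_of_lt ?_ hn
  gcongr
  exact abs_sqrt_max_zero_add_sub_sqrt_le _ (by positivity)

/-- `y` is a leaf on `[α, β]`: a solution of `y' = σ √(g(x, y))`. With `σ = ±1` these are the two
families of integral curves of `dy² = g(x, y) dx²`. As `√` vanishes on negative numbers, leaves
are continued horizontally through the region `g < 0`. -/
def IsLeafOn (g : ℝ → ℝ → ℝ) (σ α β : ℝ) (y : ℝ → ℝ) : Prop :=
  ∀ x ∈ Icc α β, HasDerivWithinAt y (σ * √(g x (y x))) (Icc α β) x

theorem exists_isLeafOn {g : ℝ → ℝ → ℝ} (hg : Continuous (uncurry g)) {K : ℝ≥0}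
    (hlip : ∀ x, LipschitzWith K (g x)) {M : ℝ} (hM : ∀ x y, g x y ≤ M) (σ : ℝ) {α β x₁ : ℝ}
    (hx₁ : x₁ ∈ Icc α β) (y₁ : ℝ) : ∃ y, y x₁ = y₁ ∧ IsLeafOn g σ α β y := by
  let F : ℕ → ℝ → ℝ → ℝ := fun n x y => σ * √(max (g x y) 0 + 1 / ((n : ℝ) + 1))
  have hbound (n : ℕ) (x y : ℝ) :
      ‖F n x y‖ ≤ (‖σ‖₊ * NNReal.sqrt (max M 0 + 1).toNNReal : ℝ≥0) := by
    have hn : 1 / ((n : ℝ) + 1) ≤ 1 := by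
      rw [div_le_one (by positivity)]; linarith [(Nat.cast_nonneg n : (0 : ℝ) ≤ n)]
    rw [norm_mul, NNReal.coe_mul, coe_nnnorm, Real.coe_sqrt, Real.coe_toNNReal _ (by positivity),
      Real.norm_of_nonneg (Real.sqrt_nonneg _)]
    gcongr
    exact hM x y
  choose Y hY using fun n => exists_forall_hasDerivWithinAt_of_lipschitzWith (f := F n)
    (fun x => lipschitzWith_sqrt_max_zero_add (hlip x) σ Nat.one_div_pos_of_nat)
    (fun y => by have := hg.comp (Continuous.prodMk_left y); simp only [F]; fun_prop)
    (hbound n) hx₁ y₁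
  exact exists_forall_hasDerivWithinAt_of_tendstoUniformly hbound hY hx₁
    (f := fun x y => σ * √(g x y)) (continuous_const.mul (Real.continuous_sqrt.comp hg))
    (tendstoUniformly_sqrt_max_zero_add (uncurry g) σ)

end SqrtODE

/-! ## Uniqueness of leaves -/

section Nagumo

variable {D D' : ℝ → ℝ} {e β : ℝ}
  (hD : ∀ s ∈ Icc e β, HasDerivWithinAt D (D' s) (Icc e β) s)
  (hbound : ∀ s ∈ Ioc e β, |D' s| ≤ |D s| / (2 * (s - e)))

include hD hbound

lemma antitoneOn_sq_div_sub_of_abs_deriv_le :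
    AntitoneOn (fun s => D s ^ 2 / (s - e)) (Ioc e β) := by
  have hcont : ContinuousOn (fun s => D s ^ 2 / (s - e)) (Ioc e β) := fun s hs =>
    (((hD s (Ioc_subset_Icc_self hs)).continuousWithinAt.mono Ioc_subset_Icc_self).pow 2).div
      (by fun_prop) (sub_pos.2 hs.1).ne'
  refine antitoneOn_of_hasDerivWithinAt_nonpos (convex_Ioc e β) hcont
    (f' := fun s => (2 * D s * D' s * (s - e) - D s ^ 2 * 1) / (s - e) ^ 2)
    (fun s hs => ?_) (fun s hs => ?_) <;> rw [interior_Ioc] at hs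
  · rw [interior_Ioc]
    have h := ((hD s (Ioo_subset_Icc_self hs)).mono Ioo_subset_Icc_self).pow 2 |>.div
      ((hasDerivWithinAt_id s (Ioo e β)).sub_const e) (sub_pos.2 hs.1).ne'
    exact h.congr_deriv (by simp)
  · have hpos : 0 < s - e := sub_pos.2 hs.1
    refine div_nonpos_of_nonpos_of_nonneg ?_ (sq_nonneg _)
    have hb := hbound s (Ioo_subset_Ioc_self hs)
    rw [le_div_iff₀ (by positivity)] at hb
    nlinarith [le_abs_self (D s * D' s), abs_mul (D s) (D' s), sq_abs (D s),
      mul_le_mul_of_nonneg_left hb (abs_nonneg (D s))]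

/-- Nagumo's uniqueness criterion: `D ^ 2 / (s - e)` decreases, yet tends to `0` at `e`. -/
lemma eq_zero_of_abs_deriv_le_div_sub (h0 : D e = 0) {s : ℝ} (hs : s ∈ Icc e β) : D s = 0 := by
  rcases eq_or_lt_of_le hs.1 with rfl | hes
  · exact h0
  have hDe := hD e ⟨le_rfl, hs.1.trans hs.2⟩
  have hlim : Tendsto (fun z => D z ^ 2 / (z - e)) (nhdsWithin e (Ioc e s)) (nhds 0) := by
    have hslope := (hasDerivWithinAt_iff_tendsto_slope.1 hDe).mono_left
      (nhdsWithin_mono e fun z (hz : z ∈ Ioc e s) =>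
        (⟨⟨hz.1.le, hz.2.trans hs.2⟩, hz.1.ne'⟩ : z ∈ Icc e β \ {e}))
    have hzero : Tendsto D (nhdsWithin e (Ioc e s)) (nhds (D e)) :=
      hDe.continuousWithinAt.mono (Ioc_subset_Icc_self.trans (Icc_subset_Icc_right hs.2))
    have hmul := hslope.mul hzero
    rw [h0, mul_zero] at hmul
    refine hmul.congr fun z => ?_
    rw [slope_def_field, h0]
    ring
  have : (nhdsWithin e (Ioc e s)).NeBot := left_nhdsWithin_Ioc_neBot hes
  have hle : D s ^ 2 / (s - e) ≤ 0 := ge_of_tendsto hlim <| by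
    filter_upwards [self_mem_nhdsWithin] with z hz
    exact antitoneOn_sq_div_sub_of_abs_deriv_le hD hbound ⟨hz.1, hz.2.trans hs.2⟩ ⟨hes, hs.2⟩ hz.2
  have hsq : D s ^ 2 ≤ 0 := by
    rwa [div_le_iff₀ (sub_pos.2 hes), zero_mul] at hle
  exact pow_eq_zero_iff two_ne_zero |>.1 (hsq.antisymm (sq_nonneg _))

end Nagumo

lemma continuousOn_apply_graph {g : ℝ → ℝ → ℝ} (hg : Continuous (Function.uncurry g))
    {y : ℝ → ℝ} {s : Set ℝ} (hy : ContinuousOn y s) : ContinuousOn (fun x => g x (y x)) s :=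
  hg.comp_continuousOn (continuousOn_id.prodMk hy)

namespace IsLeafOn

variable {g : ℝ → ℝ → ℝ} {σ α β : ℝ} {y y₁ y₂ : ℝ → ℝ}

lemma continuousOn (h : IsLeafOn g σ α β y) : ContinuousOn y (Icc α β) :=
  fun x hx => (h x hx).continuousWithinAt

lemma mono (h : IsLeafOn g σ α β y) {α' β' : ℝ} (hα : α ≤ α') (hβ : β' ≤ β) :
    IsLeafOn g σ α' β' y := fun x hx =>
  (h x ⟨hα.trans hx.1, hx.2.trans hβ⟩).mono (Icc_subset_Icc hα hβ)

lemma comp_neg (h : IsLeafOn g σ α β y) :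
    IsLeafOn (fun x => g (-x)) (-σ) (-β) (-α) (fun x => y (-x)) := by
  intro x hx
  have hleaf := h (-x) ⟨by linarith [hx.2], by linarith [hx.1]⟩
  have hneg : HasDerivWithinAt (fun x : ℝ => -x) (-1) (Icc (-β) (-α)) x :=
    (hasDerivAt_neg x).hasDerivWithinAt
  have hcomp := hleaf.scomp x hneg fun z hz => ⟨by linarith [hz.2], by linarith [hz.1]⟩
  exact hcomp.congr_deriv (by simp)

lemma abs_sub_le (hσ : |σ| ≤ 1) (h : IsLeafOn g σ α β y) {q : ℝ}
    (hq : ∀ s ∈ Icc α β, √(g s (y s)) ≤ q) {s s' : ℝ} (hs : s ∈ Icc α β) (hs' : s' ∈ Icc α β) :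
    |y s - y s'| ≤ q * |s - s'| := by
  refine (convex_Icc α β).norm_image_sub_le_of_norm_hasDerivWithin_le h (fun x hx => ?_) hs' hs
  rw [Real.norm_eq_abs, abs_mul, abs_of_nonneg (Real.sqrt_nonneg _)]
  exact (mul_le_of_le_one_left (Real.sqrt_nonneg _) hσ).trans (hq x hx)

lemma eqOn_of_sq_le_right (hσ : |σ| ≤ 1) (hlip : ∀ x y y', |g x y - g x y'| ≤ |y - y'| / 8)
    (h₁ : IsLeafOn g σ α β y₁) (h₂ : IsLeafOn g σ α β y₂) (heq : y₁ α = y₂ α)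
    (hpos₁ : ∀ s ∈ Ioc α β, ((s - α) / 8) ^ 2 ≤ g s (y₁ s))
    (hpos₂ : ∀ s ∈ Ioc α β, ((s - α) / 8) ^ 2 ≤ g s (y₂ s)) : EqOn y₁ y₂ (Icc α β) := by
  intro s hs
  refine sub_eq_zero.1 (eq_zero_of_abs_deriv_le_div_sub (D := fun s => y₁ s - y₂ s)
    (fun s hs => (h₁ s hs).sub (h₂ s hs)) (fun s hs => ?_) (sub_eq_zero.2 heq) hs)
  have hsα : 0 < s - α := sub_pos.2 hs.1
  rw [← mul_sub, abs_mul]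
  calc |σ| * |√(g s (y₁ s)) - √(g s (y₂ s))|
      ≤ |√(g s (y₁ s)) - √(g s (y₂ s))| := mul_le_of_le_one_left (abs_nonneg _) hσ
    _ ≤ |g s (y₁ s) - g s (y₂ s)| / (2 * ((s - α) / 8)) :=
      abs_sqrt_sub_sqrt_le_div (by positivity) (hpos₁ s hs) (hpos₂ s hs)
    _ ≤ |y₁ s - y₂ s| / 8 / (2 * ((s - α) / 8)) := by gcongr; exact hlip _ _ _
    _ = |y₁ s - y₂ s| / (2 * (s - α)) := by field_simp

lemma eqOn_of_sq_le_left (hσ : |σ| ≤ 1) (hlip : ∀ x y y', |g x y - g x y'| ≤ |y - y'| / 8)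
    (h₁ : IsLeafOn g σ α β y₁) (h₂ : IsLeafOn g σ α β y₂) (heq : y₁ β = y₂ β)
    (hpos₁ : ∀ s ∈ Ico α β, ((β - s) / 8) ^ 2 ≤ g s (y₁ s))
    (hpos₂ : ∀ s ∈ Ico α β, ((β - s) / 8) ^ 2 ≤ g s (y₂ s)) : EqOn y₁ y₂ (Icc α β) := by
  intro s hs
  have hreflect {z : ℝ} (hz : z ∈ Ioc (-β) (-α)) : -z ∈ Ico α β :=
    ⟨by linarith [hz.2], by linarith [hz.1]⟩
  have h := eqOn_of_sq_le_right (by rwa [abs_neg]) (fun x => hlip (-x)) h₁.comp_neg h₂.comp_neg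
    (by simpa only [neg_neg] using heq)
    (fun z hz => by simpa only [sub_neg_eq_add, add_comm] using hpos₁ (-z) (hreflect hz))
    (fun z hz => by simpa only [sub_neg_eq_add, add_comm] using hpos₂ (-z) (hreflect hz))
    (⟨neg_le_neg hs.2, neg_le_neg hs.1⟩ : -s ∈ Icc (-β) (-α))
  simpa only [neg_neg] using h

lemma eventually_sq_le_of_pos (hg : Continuous (Function.uncurry g)) (h : IsLeafOn g σ α β y)
    (hαβ : α < β) (hpos : 0 < g β (y β)) :
    ∀ᶠ s in nhdsWithin β (Iic β), ((β - s) / 8) ^ 2 ≤ g s (y s) := by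
  have hcont : ContinuousWithinAt (fun s => g s (y s) - ((β - s) / 8) ^ 2) (Icc α β) β :=
    (continuousOn_apply_graph hg h.continuousOn β (right_mem_Icc.2 hαβ.le)).sub
      (by fun_prop)
  have hev := hcont.eventually_const_lt (u := 0) (by simpa using hpos)
  rw [nhdsWithin_Icc_eq_nhdsLE hαβ] at hev
  exact hev.mono fun s hs => (sub_pos.1 hs).le

lemma exists_lt_eq_of_pos (hσ : |σ| ≤ 1) (hg : Continuous (Function.uncurry g))
    (hlip : ∀ x y y', |g x y - g x y'| ≤ |y - y'| / 8)
    (h₁ : IsLeafOn g σ α β y₁) (h₂ : IsLeafOn g σ α β y₂) (hαβ : α < β) (heq : y₁ β = y₂ β)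
    (hpos : 0 < g β (y₁ β)) : ∃ a ∈ Ico α β, y₁ a = y₂ a := by
  obtain ⟨a, ha, hsub⟩ := (mem_nhdsLE_iff_exists_mem_Ico_Ioc_subset hαβ).1
    ((h₁.eventually_sq_le_of_pos hg hαβ hpos).and
      (h₂.eventually_sq_le_of_pos hg hαβ (heq ▸ hpos)))
  obtain ⟨b, hab, hbβ⟩ := exists_between ha.2
  have hIoc {s : ℝ} (hs : s ∈ Ico b β) : s ∈ Ioc a β := ⟨hab.trans_le hs.1, hs.2.le⟩
  exact ⟨b, ⟨ha.1.trans hab.le, hbβ⟩, eqOn_of_sq_le_left hσ hlip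
    (h₁.mono (ha.1.trans hab.le) le_rfl) (h₂.mono (ha.1.trans hab.le) le_rfl) heq
    (fun s hs => (hsub (hIoc hs)).1) (fun s hs => (hsub (hIoc hs)).2) (left_mem_Icc.2 hbβ.le)⟩

end IsLeafOn

/-- `g` is `1/8`-Lipschitz in `y` and grows at least quadratically in `x ∈ [α, β]`. This makes
`y' = σ √(g(x, y))` uniquely solvable although `√` is not Lipschitz at `0`. -/
structure QuadIncreasingOn (g : ℝ → ℝ → ℝ) (α β : ℝ) : Prop where
  continuous : Continuous (Function.uncurry g)
  lip : ∀ x y y', |g x y - g x y'| ≤ |y - y'| / 8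
  mono : ∀ x x' y, α ≤ x → x ≤ x' → x' ≤ β → (x' - x) ^ 2 / 2 ≤ g x' y - g x y

namespace QuadIncreasingOn

variable {g : ℝ → ℝ → ℝ} {σ α β : ℝ} {y y₁ y₂ : ℝ → ℝ}

lemma mono_left (H : QuadIncreasingOn g α β) {α' : ℝ} (hα : α ≤ α') : QuadIncreasingOn g α' β :=
  ⟨H.continuous, H.lip, fun x x' y hx => H.mono x x' y (hα.trans hx)⟩

lemma mono_right (H : QuadIncreasingOn g α β) {β' : ℝ} (hβ : β' ≤ β) : QuadIncreasingOn g α β' :=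
  ⟨H.continuous, H.lip, fun x x' y hx hxx' hx' => H.mono x x' y hx hxx' (hx'.trans hβ)⟩

/-- The leaf moves at speed at most `q`, with `q ^ 2` the maximum of `g` along it; this drift costs
`g` at most `q / 8` per unit of length and cannot cancel the quadratic growth in `x`. -/
lemma sq_div_le_of_nonneg (H : QuadIncreasingOn g α β) (hσ : |σ| ≤ 1) (h : IsLeafOn g σ α β y)
    (hαβ : α ≤ β) (hα : 0 ≤ g α (y α)) : ((β - α) / 8) ^ 2 ≤ g β (y β) := by
  have hleft : α ∈ Icc α β := left_mem_Icc.2 hαβ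
  obtain ⟨m, hm, hmax⟩ := isCompact_Icc.exists_isMaxOn ⟨α, hleft⟩
    (continuousOn_apply_graph H.continuous h.continuousOn)
  obtain ⟨q, hq⟩ : ∃ q, q = √(g m (y m)) := ⟨_, rfl⟩
  have hq0 : 0 ≤ q := hq ▸ Real.sqrt_nonneg _
  have hqsq : q ^ 2 = g m (y m) := hq ▸ Real.sq_sqrt (hα.trans (hmax hleft))
  have hspeed : ∀ s ∈ Icc α β, √(g s (y s)) ≤ q := fun s hs => hq ▸ Real.sqrt_le_sqrt (hmax hs)
  have hdrift₁ := h.abs_sub_le hσ hspeed hm hleft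
  have hdrift₂ := h.abs_sub_le hσ hspeed (right_mem_Icc.2 hαβ) hm
  rw [abs_of_nonneg (sub_nonneg.2 hm.1)] at hdrift₁
  rw [abs_of_nonneg (sub_nonneg.2 hm.2)] at hdrift₂
  have hgrow₁ := H.mono α m (y m) le_rfl hm.1 hm.2
  have hgrow₂ := H.mono m β (y β) hm.1 hm.2 le_rfl
  have hlip₁ := (abs_le.1 (H.lip α (y m) (y α))).1
  have hlip₂ := (abs_le.1 (H.lip m (y β) (y m))).1
  obtain ⟨δ, hδ⟩ : ∃ δ, δ = m - α := ⟨_, rfl⟩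
  obtain ⟨η, hη⟩ : ∃ η, η = β - m := ⟨_, rfl⟩
  have hδ0 : 0 ≤ δ := hδ ▸ sub_nonneg.2 hm.1
  have hη0 : 0 ≤ η := hη ▸ sub_nonneg.2 hm.2
  rw [← hδ] at hdrift₁ hgrow₁
  rw [← hη] at hdrift₂ hgrow₂
  have hδq : δ / 2 ≤ q := by
    by_contra! hlt
    nlinarith
  rw [show β - α = δ + η by rw [hδ, hη]; ring]
  nlinarith [sq_nonneg (q - η), mul_nonneg hq0 hη0, mul_nonneg hδ0 hη0]

lemma eqOn_const_of_nonpos (H : QuadIncreasingOn g α β) (hσ : |σ| ≤ 1)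
    (h : IsLeafOn g σ α β y) (hβ : g β (y β) ≤ 0) : EqOn y (fun _ => y β) (Icc α β) := by
  intro s hs
  have hspeed : ∀ s ∈ Icc α β, √(g s (y s)) ≤ 0 := by
    intro s hs
    refine (Real.sqrt_eq_zero_of_nonpos ?_).le
    by_contra! hpos
    have hle := (H.mono_left hs.1).sq_div_le_of_nonneg hσ (h.mono hs.1 le_rfl) hs.2 hpos.le
    rcases eq_or_lt_of_le hs.2 with rfl | hlt
    · linarith
    · nlinarith [pow_pos (sub_pos.2 hlt) 2]
  have hle := h.abs_sub_le hσ hspeed hs (right_mem_Icc.2 (hs.1.trans hs.2))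
  rw [zero_mul] at hle
  exact sub_eq_zero.1 (abs_nonpos_iff.1 hle)

lemma eqOn_right_of_nonneg (H : QuadIncreasingOn g α β) (hσ : |σ| ≤ 1)
    (h₁ : IsLeafOn g σ α β y₁) (h₂ : IsLeafOn g σ α β y₂) (heq : y₁ α = y₂ α)
    (hα : 0 ≤ g α (y₁ α)) : EqOn y₁ y₂ (Icc α β) := by
  have hpos {y : ℝ → ℝ} (h : IsLeafOn g σ α β y) (hy : 0 ≤ g α (y α)) :
      ∀ s ∈ Ioc α β, ((s - α) / 8) ^ 2 ≤ g s (y s) := fun s hs =>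
    (H.mono_right hs.2).sq_div_le_of_nonneg hσ (h.mono le_rfl hs.2) hs.1.le hy
  exact h₁.eqOn_of_sq_le_right hσ H.lip h₂ heq (hpos h₁ hα) (hpos h₂ (heq ▸ hα))

lemma eqOn_left (H : QuadIncreasingOn g α β) (hσ : |σ| ≤ 1)
    (h₁ : IsLeafOn g σ α β y₁) (h₂ : IsLeafOn g σ α β y₂) (heq : y₁ β = y₂ β) :
    EqOn y₁ y₂ (Icc α β) := by
  intro s hs
  by_contra hne
  have hcont : ContinuousOn (fun z => y₁ z - y₂ z) (Icc s β) :=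
    (h₁.continuousOn.sub h₂.continuousOn).mono (Icc_subset_Icc_left hs.1)
  have hcompact : IsCompact (Icc s β ∩ (fun z => y₁ z - y₂ z) ⁻¹' {0}) :=
    isCompact_Icc.of_isClosed_subset
      (hcont.preimage_isClosed_of_isClosed isClosed_Icc isClosed_singleton) inter_subset_left
  obtain ⟨e, ⟨heI, heZ⟩, hmin⟩ :=
    hcompact.exists_isLeast ⟨β, right_mem_Icc.2 hs.2, sub_eq_zero.2 heq⟩
  have hye : y₁ e = y₂ e := sub_eq_zero.1 heZ
  have hse : s < e := lt_of_le_of_ne heI.1 fun h => hne (h ▸ hye)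
  have hrestrict {y : ℝ → ℝ} (h : IsLeafOn g σ α β y) : IsLeafOn g σ s e y := h.mono hs.1 heI.2
  rcases le_or_gt (g e (y₁ e)) 0 with hG | hG
  · have He := (H.mono_left hs.1).mono_right heI.2
    refine hne ?_
    rw [He.eqOn_const_of_nonpos hσ (hrestrict h₁) hG (left_mem_Icc.2 hse.le),
      He.eqOn_const_of_nonpos hσ (hrestrict h₂) (hye ▸ hG) (left_mem_Icc.2 hse.le)]
    exact hye
  · obtain ⟨a, ha, haeq⟩ := (hrestrict h₁).exists_lt_eq_of_pos hσ H.continuous H.lip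
      (hrestrict h₂) hse hye hG
    exact ha.2.not_ge (hmin ⟨⟨ha.1, ha.2.le.trans heI.2⟩, sub_eq_zero.2 haeq⟩)

lemma eq_left_of_nonpos (H : QuadIncreasingOn g α β) (hσ : |σ| ≤ 1) (h : IsLeafOn g σ α β y)
    (hαβ : α ≤ β) (hβ : g β (y α) ≤ 0) : y β = y α := by
  rcases le_or_gt (g β (y β)) 0 with hG | hG
  · exact (H.eqOn_const_of_nonpos hσ h hG (left_mem_Icc.2 hαβ)).symm
  have hα : g α (y α) ≤ 0 := by nlinarith [H.mono α β (y α) le_rfl hαβ le_rfl]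
  obtain ⟨z, hz, hgz⟩ := intermediate_value_Icc hαβ
    (continuousOn_apply_graph H.continuous h.continuousOn) ⟨hα, hG.le⟩
  have hyz : y α = y z := (H.mono_right hz.2).eqOn_const_of_nonpos hσ (h.mono le_rfl hz.2) hgz.le
    (left_mem_Icc.2 hz.1)
  have hzβ : z = β := by
    have hgz' : g z (y α) = 0 := hyz ▸ hgz
    nlinarith [H.mono z β (y α) hz.1 hz.2 le_rfl, sq_nonneg (β - z)]
  rw [hyz, hzβ]

lemma eq_right (H : QuadIncreasingOn g α β) (hσ : |σ| ≤ 1)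
    (h₁ : IsLeafOn g σ α β y₁) (h₂ : IsLeafOn g σ α β y₂) (hαβ : α ≤ β) (heq : y₁ α = y₂ α) :
    y₁ β = y₂ β := by
  rcases le_or_gt 0 (g α (y₁ α)) with hG | hG
  · exact H.eqOn_right_of_nonneg hσ h₁ h₂ heq hG (right_mem_Icc.2 hαβ)
  rcases le_or_gt (g β (y₁ α)) 0 with hβ | hβ
  · rw [H.eq_left_of_nonpos hσ h₁ hαβ hβ, H.eq_left_of_nonpos hσ h₂ hαβ (heq ▸ hβ), heq]
  · obtain ⟨z, hz, hgz⟩ := intermediate_value_Icc hαβ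
      (continuousOn_apply_graph H.continuous (continuousOn_const (c := y₁ α)))
      ⟨hG.le, hβ.le⟩
    have hstay {y : ℝ → ℝ} (h : IsLeafOn g σ α β y) (hy : y α = y₁ α) : y z = y₁ α := by
      rw [← hy] at hgz ⊢
      exact (H.mono_right hz.2).eq_left_of_nonpos hσ (h.mono le_rfl hz.2) hz.1 hgz.le
    have h₁z := hstay h₁ rfl
    exact (H.mono_left hz.1).eqOn_right_of_nonneg hσ (h₁.mono hz.1 le_rfl) (h₂.mono hz.1 le_rfl)
      (h₁z.trans (hstay h₂ heq.symm).symm) (by rw [h₁z]; exact hgz.ge) (right_mem_Icc.2 hz.2)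

theorem eqOn (H : QuadIncreasingOn g α β) (hσ : |σ| ≤ 1)
    (h₁ : IsLeafOn g σ α β y₁) (h₂ : IsLeafOn g σ α β y₂) {x₀ : ℝ} (hx₀ : x₀ ∈ Icc α β)
    (heq : y₁ x₀ = y₂ x₀) : EqOn y₁ y₂ (Icc α β) := by
  intro s hs
  rcases le_total s x₀ with hsx | hxs
  · exact (H.mono_right hx₀.2).eqOn_left hσ (h₁.mono le_rfl hx₀.2) (h₂.mono le_rfl hx₀.2) heq
      ⟨hs.1, hsx⟩
  · exact ((H.mono_left hx₀.1).mono_right hs.2).eq_right hσ (h₁.mono hx₀.1 hs.2)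
      (h₂.mono hx₀.1 hs.2) hxs heq

end QuadIncreasingOn

/-- The standing hypotheses on the right half `x ∈ [0, r]` of a BDE `dy² = g(|x|, y) dx²`: `g` is
bounded above, `1/8`-Lipschitz in `y`, and `e g` with `e = ±1` grows at least like `x² / 2`. The
sign `e = 1` is the saddle case and `e = -1` the focus case. -/
structure IsAdmissible (g : ℝ → ℝ → ℝ) (r e : ℝ) : Prop where
  pos : 0 < r
  sign : e = 1 ∨ e = -1
  continuous : Continuous (Function.uncurry g)
  bddAbove : ∃ M, ∀ x y, g x y ≤ M
  lip : ∀ x y y', |g x y - g x y'| ≤ |y - y'| / 8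
  mono : ∀ x x' y, 0 ≤ x → x ≤ x' → x' ≤ r → (x' ^ 2 - x ^ 2) / 2 ≤ e * (g x' y - g x y)

namespace IsAdmissible

variable {g : ℝ → ℝ → ℝ} {r e σ α β : ℝ} {y₁ y₂ : ℝ → ℝ}

lemma quadIncreasingOn (H : IsAdmissible g r 1) (hα : 0 ≤ α) (hβ : β ≤ r) :
    QuadIncreasingOn g α β where
  continuous := H.continuous
  lip := H.lip
  mono x x' y hx hxx' hx' := by
    nlinarith [H.mono x x' y (hα.trans hx) hxx' (hx'.trans hβ)]

lemma quadIncreasingOn_comp_neg (H : IsAdmissible g r (-1)) (hα : 0 ≤ α) (hβ : β ≤ r) :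
    QuadIncreasingOn (fun x => g (-x)) (-β) (-α) where
  continuous := H.continuous.comp (continuous_fst.neg.prodMk continuous_snd)
  lip x := H.lip (-x)
  mono x x' y hx hxx' hx' := by
    nlinarith [H.mono (-x') (-x) y (by linarith) (by linarith) (by linarith)]

theorem eqOn (H : IsAdmissible g r e) (hσ : |σ| ≤ 1) (hα : 0 ≤ α) (hβ : β ≤ r)
    (h₁ : IsLeafOn g σ α β y₁) (h₂ : IsLeafOn g σ α β y₂) {x₀ : ℝ} (hx₀ : x₀ ∈ Icc α β)
    (heq : y₁ x₀ = y₂ x₀) : EqOn y₁ y₂ (Icc α β) := by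
  rcases H.sign with rfl | rfl
  · exact (H.quadIncreasingOn hα hβ).eqOn hσ h₁ h₂ hx₀ heq
  · intro s hs
    have h := (H.quadIncreasingOn_comp_neg hα hβ).eqOn (by rwa [abs_neg]) h₁.comp_neg h₂.comp_neg
      (x₀ := -x₀) ⟨neg_le_neg hx₀.2, neg_le_neg hx₀.1⟩ (by simpa only [neg_neg] using heq)
      (⟨neg_le_neg hs.2, neg_le_neg hs.1⟩ : -s ∈ Icc (-β) (-α))
    simpa only [neg_neg] using h

end IsAdmissible

/-! ## The leaf flow -/

/-- The nearest point retraction of `ℝ` onto `[a, b]`. Unlike `Set.projIcc` it is real valued and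
needs no proof of `a ≤ b`; for `b < a` it is junk. -/
def clamp (a b x : ℝ) : ℝ := max a (min b x)

section Clamp

variable {a b x : ℝ}

lemma clamp_mem_Icc (hab : a ≤ b) (x : ℝ) : clamp a b x ∈ Icc a b :=
  ⟨le_max_left _ _, max_le hab (min_le_left _ _)⟩

lemma clamp_of_mem (hx : x ∈ Icc a b) : clamp a b x = x := by
  rw [clamp, min_eq_right hx.2, max_eq_right hx.1]

lemma clamp_clamp (hab : a ≤ b) (x : ℝ) : clamp a b (clamp a b x) = clamp a b x :=
  clamp_of_mem (clamp_mem_Icc hab x)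

lemma continuous_clamp (a b : ℝ) : Continuous (clamp a b) :=
  continuous_const.max (continuous_const.min continuous_id)

lemma monotone_clamp (a b : ℝ) : Monotone (clamp a b) := fun _ _ h =>
  max_le_max le_rfl (min_le_min le_rfl h)

lemma abs_clamp_sub_clamp_le (a b x x' : ℝ) : |clamp a b x - clamp a b x'| ≤ |x - x'| :=
  (abs_max_sub_max_le_max a _ a _).trans <| by
    rw [sub_self, abs_zero, max_eq_right (abs_nonneg _)]
    refine (abs_min_sub_min_le_max b x b x').trans ?_
    rw [sub_self, abs_zero, max_eq_right (abs_nonneg _)]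

end Clamp

/-- `leaf g r σ x₁ y₁ x` is the height over `x` of the solution on `[0, r]` of `y' = σ √(g x y)`
with `y x₁ = y₁`. Abscissae outside `[0, r]` are clamped to it. -/
def leaf (g : ℝ → ℝ → ℝ) (r σ x₁ y₁ x : ℝ) : ℝ :=
  Classical.epsilon (fun y : ℝ → ℝ => y (clamp 0 r x₁) = y₁ ∧ IsLeafOn g σ 0 r y) (clamp 0 r x)

lemma leaf_clamp_clamp {g : ℝ → ℝ → ℝ} {r σ : ℝ} (hr : 0 ≤ r) (x₁ y x : ℝ) :
    leaf g r σ (clamp 0 r x₁) y (clamp 0 r x) = leaf g r σ x₁ y x := by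
  simp only [leaf, clamp_clamp hr]

lemma leaf_clamp {g : ℝ → ℝ → ℝ} {r σ : ℝ} (hr : 0 ≤ r) (x₁ y x : ℝ) :
    leaf g r σ x₁ y (clamp 0 r x) = leaf g r σ x₁ y x := by
  simp only [leaf, clamp_clamp hr]

lemma IsLeafOn.nonpos_of_eqOn_const {g : ℝ → ℝ → ℝ} {σ α β v : ℝ} {y : ℝ → ℝ}
    (h : IsLeafOn g σ α β y) (hσ : σ ≠ 0) (hαβ : α < β) (hc : EqOn y (fun _ => v) (Icc α β))
    {s : ℝ} (hs : s ∈ Icc α β) : g s v ≤ 0 := by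
  have hzero : HasDerivWithinAt y 0 (Icc α β) s :=
    (hasDerivWithinAt_const s _ v).congr hc (hc hs)
  have hslope := (uniqueDiffOn_Icc hαβ s hs).eq_deriv _ (h s hs) hzero
  rw [hc hs] at hslope
  exact Real.sqrt_eq_zero'.1 ((mul_eq_zero.1 hslope).resolve_left hσ)

namespace IsAdmissible

variable {g : ℝ → ℝ → ℝ} {r e σ : ℝ}

lemma lipschitzWith (H : IsAdmissible g r e) (x : ℝ) : LipschitzWith (1 / 8) (g x) :=
  LipschitzWith.of_dist_le_mul fun y y' => by
    simpa [Real.dist_eq, div_eq_inv_mul] using H.lip x y y'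

lemma leaf_spec (H : IsAdmissible g r e) (σ x₁ y₁ : ℝ) :
    leaf g r σ x₁ y₁ x₁ = y₁ ∧ IsLeafOn g σ 0 r (leaf g r σ x₁ y₁) := by
  obtain ⟨M, hM⟩ := H.bddAbove
  have h := Classical.epsilon_spec
    (exists_isLeafOn H.continuous H.lipschitzWith hM σ (clamp_mem_Icc H.pos.le x₁) y₁)
  refine ⟨h.1, fun x hx => ?_⟩
  have hcongr : EqOn (leaf g r σ x₁ y₁) (Classical.epsilon fun y : ℝ → ℝ =>
      y (clamp 0 r x₁) = y₁ ∧ IsLeafOn g σ 0 r y) (Icc 0 r) := fun z hz => by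
    rw [leaf, clamp_of_mem hz]
  rw [hcongr hx]
  exact (h.2 x hx).congr hcongr (hcongr hx)

lemma leaf_self (H : IsAdmissible g r e) (σ x₁ y₁ : ℝ) : leaf g r σ x₁ y₁ x₁ = y₁ :=
  (H.leaf_spec σ x₁ y₁).1

lemma isLeafOn_leaf (H : IsAdmissible g r e) (σ x₁ y₁ : ℝ) :
    IsLeafOn g σ 0 r (leaf g r σ x₁ y₁) :=
  (H.leaf_spec σ x₁ y₁).2

lemma leaf_eq (H : IsAdmissible g r e) (hσ : |σ| ≤ 1) {y : ℝ → ℝ} (hy : IsLeafOn g σ 0 r y)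
    {x₁ x y₁ : ℝ} (hx₁ : x₁ ∈ Icc 0 r) (hx : x ∈ Icc 0 r) (h : y x₁ = y₁) :
    leaf g r σ x₁ y₁ x = y x :=
  H.eqOn hσ le_rfl le_rfl (H.isLeafOn_leaf σ x₁ y₁) hy hx₁ (by rw [H.leaf_self, h]) hx

lemma leaf_leaf (H : IsAdmissible g r e) (hσ : |σ| ≤ 1) (x₀ y x₁ x : ℝ) :
    leaf g r σ x₁ (leaf g r σ x₀ y x₁) x = leaf g r σ x₀ y x := by
  have hr := H.pos.le
  rw [← leaf_clamp_clamp hr x₁, ← leaf_clamp hr x₀ _ x₁, ← leaf_clamp hr x₀ _ x]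
  exact H.leaf_eq hσ (H.isLeafOn_leaf σ _ _) (clamp_mem_Icc hr _) (clamp_mem_Icc hr _) rfl

lemma exists_lipschitzWith_leaf (H : IsAdmissible g r e) (hσ : |σ| ≤ 1) :
    ∃ L, ∀ x₁ y, LipschitzWith L (leaf g r σ x₁ y) := by
  obtain ⟨M, hM⟩ := H.bddAbove
  refine ⟨NNReal.sqrt M.toNNReal, fun x₁ y => LipschitzWith.of_dist_le_mul fun x x' => ?_⟩
  have hr := H.pos.le
  have hq : ((NNReal.sqrt M.toNNReal : NNReal) : ℝ) = √M := by
    rw [Real.sqrt]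
  rw [Real.dist_eq, Real.dist_eq, hq, ← leaf_clamp hr x₁ y x, ← leaf_clamp hr x₁ y x']
  refine ((H.isLeafOn_leaf σ x₁ y).abs_sub_le hσ (fun s _ => Real.sqrt_le_sqrt (hM _ _))
    (clamp_mem_Icc hr x) (clamp_mem_Icc hr x')).trans ?_
  exact mul_le_mul_of_nonneg_left (abs_clamp_sub_clamp_le 0 r x x') (Real.sqrt_nonneg M)

lemma continuous_leaf_right (H : IsAdmissible g r e) (hσ : |σ| ≤ 1) (x₁ y : ℝ) :
    Continuous (leaf g r σ x₁ y) :=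
  let ⟨_, hL⟩ := H.exists_lipschitzWith_leaf hσ
  (hL x₁ y).continuous

lemma strictMono_leaf (H : IsAdmissible g r e) (hσ : |σ| ≤ 1) (x₁ x : ℝ) :
    StrictMono (fun y => leaf g r σ x₁ y x) := by
  intro y y' hyy'
  by_contra! hle
  -- Leaves through different points of a vertical line cannot meet.
  obtain ⟨z, hz⟩ : ∃ z, leaf g r σ x₁ y' z - leaf g r σ x₁ y z = 0 :=
    mem_range_of_exists_le_of_exists_ge
      ((H.continuous_leaf_right hσ x₁ y').sub (H.continuous_leaf_right hσ x₁ y))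
      ⟨x, sub_nonpos.2 hle⟩ ⟨x₁, by simpa only [H.leaf_self] using (sub_pos.2 hyy').le⟩
  have h := congrArg (fun w => leaf g r σ z w x₁) (sub_eq_zero.1 hz)
  simp only [H.leaf_leaf hσ, H.leaf_self] at h
  exact hyy'.ne' h

lemma continuous_leaf_middle (H : IsAdmissible g r e) (hσ : |σ| ≤ 1) (x₁ x : ℝ) :
    Continuous (fun y => leaf g r σ x₁ y x) :=
  (H.strictMono_leaf hσ x₁ x).monotone.continuous_of_surjective fun z =>
    ⟨leaf g r σ x z x₁, by simp only [H.leaf_leaf hσ, H.leaf_self]⟩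

lemma continuous_leaf (H : IsAdmissible g r e) (hσ : |σ| ≤ 1) :
    Continuous (fun q : ℝ × ℝ × ℝ => leaf g r σ q.1 q.2.1 q.2.2) := by
  obtain ⟨L, hL⟩ := H.exists_lipschitzWith_leaf hσ
  rw [continuous_iff_continuousAt]
  rintro ⟨x₁, y, x⟩
  have hfst : Tendsto (fun q : ℝ × ℝ × ℝ => leaf g r σ q.1 q.2.1 x₁) (nhds (x₁, y, x))
      (nhds y) := by
    refine tendsto_of_tendsto_of_dist (f₁ := fun q : ℝ × ℝ × ℝ => q.2.1)
      ((continuous_fst.comp continuous_snd).tendsto (x₁, y, x))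
      (squeeze_zero (fun _ => dist_nonneg) (fun q => ?_) (g := fun q => L * dist q.1 x₁) ?_)
    · simpa only [H.leaf_self] using (hL q.1 q.2.1).dist_le_mul q.1 x₁
    · exact Continuous.tendsto' (by fun_prop) _ _ (by simp)
  have hmid : Tendsto (fun q : ℝ × ℝ × ℝ => leaf g r σ q.1 q.2.1 x) (nhds (x₁, y, x))
      (nhds (leaf g r σ x₁ y x)) := by
    simpa only [Function.comp_def, H.leaf_leaf hσ] using
      ((H.continuous_leaf_middle hσ x₁ x).tendsto y).comp hfst
  refine tendsto_of_tendsto_of_dist hmid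
    (squeeze_zero (fun _ => dist_nonneg) (fun q => (hL q.1 q.2.1).dist_le_mul x q.2.2) ?_)
  exact Continuous.tendsto' (by fun_prop) _ _ (by simp)

lemma monotone_leaf (H : IsAdmissible g r e) (x₁ y : ℝ) : Monotone (leaf g r 1 x₁ y) := by
  have hr := H.pos.le
  have hmono : MonotoneOn (leaf g r 1 x₁ y) (Icc 0 r) :=
    monotoneOn_of_hasDerivWithinAt_nonneg (convex_Icc 0 r) (H.isLeafOn_leaf 1 x₁ y).continuousOn
      (fun z hz => (H.isLeafOn_leaf 1 x₁ y z (interior_subset hz)).mono interior_subset)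
      (fun z _ => by rw [one_mul]; exact Real.sqrt_nonneg _)
  intro x x' hxx'
  rw [← leaf_clamp hr x₁ _ x, ← leaf_clamp hr x₁ _ x']
  exact hmono (clamp_mem_Icc hr x) (clamp_mem_Icc hr x') (monotone_clamp 0 r hxx')

lemma antitone_leaf (H : IsAdmissible g r e) (x₁ y : ℝ) : Antitone (leaf g r (-1) x₁ y) := by
  have hr := H.pos.le
  have hanti : AntitoneOn (leaf g r (-1) x₁ y) (Icc 0 r) :=
    antitoneOn_of_hasDerivWithinAt_nonpos (convex_Icc 0 r)
      (H.isLeafOn_leaf (-1) x₁ y).continuousOn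
      (fun z hz => (H.isLeafOn_leaf (-1) x₁ y z (interior_subset hz)).mono interior_subset)
      (fun z _ => by rw [neg_one_mul, neg_nonpos]; exact Real.sqrt_nonneg _)
  intro x x' hxx'
  rw [← leaf_clamp hr x₁ _ x, ← leaf_clamp hr x₁ _ x']
  exact hanti (clamp_mem_Icc hr x) (clamp_mem_Icc hr x') (monotone_clamp 0 r hxx')

lemma leaf_one_le (H : IsAdmissible g r e) {x x₁ : ℝ} (y : ℝ) (hx : x ≤ x₁) :
    leaf g r 1 x₁ y x ≤ y :=
  (H.monotone_leaf x₁ y hx).trans_eq (H.leaf_self 1 x₁ y)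

lemma le_leaf_one (H : IsAdmissible g r e) {x x₁ : ℝ} (y : ℝ) (hx : x₁ ≤ x) :
    y ≤ leaf g r 1 x₁ y x :=
  (H.leaf_self 1 x₁ y).ge.trans (H.monotone_leaf x₁ y hx)

lemma leaf_neg_one_le (H : IsAdmissible g r e) {x x₁ : ℝ} (y : ℝ) (hx : x₁ ≤ x) :
    leaf g r (-1) x₁ y x ≤ y :=
  (H.antitone_leaf x₁ y hx).trans_eq (H.leaf_self (-1) x₁ y)

lemma le_leaf_neg_one (H : IsAdmissible g r e) {x x₁ : ℝ} (y : ℝ) (hx : x ≤ x₁) :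
    y ≤ leaf g r (-1) x₁ y x :=
  (H.leaf_self (-1) x₁ y).ge.trans (H.antitone_leaf x₁ y hx)

lemma lt_leaf_one_of_pos (H : IsAdmissible g r e) {x x' y s : ℝ} (hx : 0 ≤ x) (hlt : x < x')
    (hx' : x' ≤ r) (hs : s ∈ Icc x x') (hg : 0 < g s y) : y < leaf g r 1 x y x' := by
  by_contra! hle
  have hconst : EqOn (leaf g r 1 x y) (fun _ => y) (Icc x x') := fun z hz =>
    le_antisymm ((H.monotone_leaf x y hz.2).trans hle) (H.le_leaf_one y hz.1)
  exact hg.not_ge (((H.isLeafOn_leaf 1 x y).mono hx hx').nonpos_of_eqOn_const one_ne_zero hlt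
    hconst hs)

lemma leaf_one_lt_of_pos (H : IsAdmissible g r e) {x y : ℝ} (hx : 0 < x) (hxr : x ≤ r)
    (hg : 0 < g x y) : leaf g r 1 x y 0 < y := by
  refine lt_of_le_of_ne (H.leaf_one_le y hx.le) fun heq => ?_
  have hlt := H.lt_leaf_one_of_pos le_rfl hx hxr (right_mem_Icc.2 hx.le) hg
  have hback : leaf g r 1 0 y x = y := by
    nth_rewrite 1 [← heq]
    rw [H.leaf_leaf (by simp), H.leaf_self]
  exact hlt.ne' hback

lemma leaf_eq_of_nonpos_left (H : IsAdmissible g r 1) (hσ : |σ| ≤ 1) {x y : ℝ}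
    (hx : x ∈ Icc 0 r) (hg : g x y ≤ 0) {s : ℝ} (hs : s ∈ Icc 0 x) : leaf g r σ x y s = y := by
  have h := (H.quadIncreasingOn le_rfl hx.2).eqOn_const_of_nonpos hσ
    ((H.isLeafOn_leaf σ x y).mono le_rfl hx.2) (by rwa [H.leaf_self]) hs
  rwa [H.leaf_self] at h

lemma leaf_eq_of_nonpos_right (H : IsAdmissible g r (-1)) (hσ : |σ| ≤ 1) {x y : ℝ}
    (hx : x ∈ Icc 0 r) (hg : g x y ≤ 0) {s : ℝ} (hs : s ∈ Icc x r) : leaf g r σ x y s = y := by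
  have h := (H.quadIncreasingOn_comp_neg hx.1 le_rfl).eqOn_const_of_nonpos (by rwa [abs_neg])
    ((H.isLeafOn_leaf σ x y).mono hx.1 le_rfl).comp_neg
    (by simpa only [neg_neg, H.leaf_self] using hg)
    (⟨neg_le_neg hs.2, neg_le_neg hs.1⟩ : -s ∈ Icc (-r) (-x))
  simpa only [neg_neg, H.leaf_self] using h

end IsAdmissible

/-! ## Integral curves are leaves -/

lemma exists_image_Ioo_eq_Ioo {f : ℝ → ℝ} {a b : ℝ} (hab : a < b) (hf : ContinuousOn f (Ioo a b))
    (hinj : InjOn f (Ioo a b)) (hbdd : Bornology.IsBounded (f '' Ioo a b)) :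
    ∃ c d, c < d ∧ f '' Ioo a b = Ioo c d := by
  set s := f '' Ioo a b
  have hne : s.Nonempty := (nonempty_Ioo.2 hab).image f
  have hconn : IsConnected s := ⟨hne, isPreconnected_Ioo.image f hf⟩
  have hends : ∀ z ∈ s, (∃ w ∈ s, w < z) ∧ ∃ w ∈ s, z < w := by
    rintro _ ⟨x, hx, rfl⟩
    obtain ⟨x₁, hx₁⟩ := nonempty_Ioo.2 hx.1
    obtain ⟨x₂, hx₂⟩ := nonempty_Ioo.2 hx.2
    have hmem₁ : x₁ ∈ Ioo a b := ⟨hx₁.1, hx₁.2.trans hx.2⟩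
    have hmem₂ : x₂ ∈ Ioo a b := ⟨hx.1.trans hx₂.1, hx₂.2⟩
    rcases hf.strictMonoOn_of_injOn_Ioo hab hinj with hmono | hanti
    · exact ⟨⟨_, mem_image_of_mem f hmem₁, hmono hmem₁ hx hx₁.2⟩,
        ⟨_, mem_image_of_mem f hmem₂, hmono hx hmem₂ hx₂.1⟩⟩
    · exact ⟨⟨_, mem_image_of_mem f hmem₂, hanti hx hmem₂ hx₂.1⟩,
        ⟨_, mem_image_of_mem f hmem₁, hanti hmem₁ hx hx₁.2⟩⟩
  have heq : s = Ioo (sInf s) (sSup s) := by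
    refine Subset.antisymm (fun z hz => ?_)
      (hconn.Ioo_csInf_csSup_subset hbdd.bddBelow hbdd.bddAbove)
    obtain ⟨⟨w₁, hw₁, hlt₁⟩, w₂, hw₂, hlt₂⟩ := hends z hz
    exact ⟨(csInf_le hbdd.bddBelow hw₁).trans_lt hlt₁, hlt₂.trans_le (le_csSup hbdd.bddAbove hw₂)⟩
  exact ⟨_, _, nonempty_Ioo.1 (heq ▸ hne), heq⟩

lemma injOn_Ioo_of_hasDerivAt_ne_zero {f f' : ℝ → ℝ} {a b : ℝ}
    (hf : ∀ t ∈ Ioo a b, HasDerivAt f (f' t) t) (hne : ∀ t ∈ Ioo a b, f' t ≠ 0) :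
    InjOn f (Ioo a b) := by
  intro t ht s hs hts
  by_contra hne'
  wlog hlt : t < s generalizing t s
  · exact this hs ht hts.symm (Ne.symm hne') (lt_of_le_of_ne (not_lt.1 hlt) (Ne.symm hne'))
  have hsub : Icc t s ⊆ Ioo a b := Icc_subset_Ioo ht.1 hs.2
  obtain ⟨z, hz, hz0⟩ := exists_hasDerivAt_eq_zero hlt
    (fun z hz => (hf z (hsub hz)).continuousAt.continuousWithinAt) hts
    (fun z hz => hf z (hsub (Ioo_subset_Icc_self hz)))
  exact hne z (hsub (Ioo_subset_Icc_self hz)) hz0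

theorem exists_inverse_of_hasDerivAt_ne_zero {f f' : ℝ → ℝ} {a b : ℝ} (hab : a < b)
    (hf : ∀ t ∈ Ioo a b, HasDerivAt f (f' t) t) (hf' : ContinuousOn f' (Ioo a b))
    (hne : ∀ t ∈ Ioo a b, f' t ≠ 0) (hbdd : Bornology.IsBounded (f '' Ioo a b)) :
    ∃ c d τ, c < d ∧ MapsTo f (Ioo a b) (Ioo c d) ∧ MapsTo τ (Ioo c d) (Ioo a b) ∧
      InvOn τ f (Ioo a b) (Ioo c d) ∧ ∀ x ∈ Ioo c d, HasDerivAt τ (f' (τ x))⁻¹ x := by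
  have hmap (t : ℝ) (ht : t ∈ Ioo a b) : map f (nhds t) = nhds (f t) :=
    (hasStrictDerivAt_of_hasDerivAt_of_continuousAt
      (eventually_of_mem (isOpen_Ioo.mem_nhds ht) hf)
      (hf'.continuousAt (isOpen_Ioo.mem_nhds ht))).map_nhds_eq (hne t ht)
  have hinj := injOn_Ioo_of_hasDerivAt_ne_zero hf hne
  obtain ⟨c, d, hcd, himg⟩ := exists_image_Ioo_eq_Ioo hab
    (fun t ht => (hf t ht).continuousAt.continuousWithinAt) hinj hbdd
  have hinv := hinj.bijOn_image.invOn_invFunOn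
  have hmaps := (surjOn_image f (Ioo a b)).mapsTo_invFunOn
  rw [himg] at hinv hmaps
  set τ := Function.invFunOn f (Ioo a b)
  refine ⟨c, d, τ, hcd, himg ▸ mapsTo_image f _, hmaps, hinv, fun x hx => ?_⟩
  have hcont : ContinuousAt τ x := by
    intro s hs
    have hmem := image_mem_map (m := f) (inter_mem hs (isOpen_Ioo.mem_nhds (hmaps hx)))
    rw [hmap _ (hmaps hx), hinv.2 hx] at hmem
    rw [mem_map]
    filter_upwards [hmem]
    rintro _ ⟨t, ht, rfl⟩
    rw [mem_preimage, hinv.1 ht.2]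
    exact ht.1
  exact HasDerivAt.of_local_left_inverse hcont (hf _ (hmaps hx)) (hne _ (hmaps hx))
    (eventually_of_mem (isOpen_Ioo.mem_nhds hx) fun z hz => hinv.2 hz)

/-- The BDE `dy² = g(|x|, y) dx²`, the normal form to which both families are reduced. -/
def normalForm (g : ℝ → ℝ → ℝ) : (ℝ × ℝ) → (ℝ × ℝ) → ℝ :=
  fun p v => v.2 ^ 2 - g |p.1| p.2 * v.1 ^ 2

/-- The graph of `η` over `(c, d)`, with `C¹` derivative `η'`, is an integral curve of
`normalForm g`. -/
structure IsIntegralGraph (g : ℝ → ℝ → ℝ) (c d : ℝ) (η η' : ℝ → ℝ) : Prop where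
  continuousOn : ContinuousOn η' (Ioo c d)
  hasDerivAt : ∀ x ∈ Ioo c d, HasDerivAt η (η' x) x
  sq_eq : ∀ x ∈ Ioo c d, η' x ^ 2 = g |x| (η x)

lemma fst_ne_zero_of_normalForm_eq_zero {g : ℝ → ℝ → ℝ} {p v : ℝ × ℝ} (hv : v ≠ 0)
    (h : normalForm g p v = 0) : v.1 ≠ 0 := fun h₀ => by
  have hsnd : v.2 = 0 := by simpa [normalForm, h₀] using h
  exact hv (Prod.ext h₀ hsnd)

theorem exists_isIntegralGraph {g : ℝ → ℝ → ℝ} {γ : ℝ → ℝ × ℝ} {I : Set ℝ}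
    (h : IsIntegralCurveOnBDE (normalForm g) γ I) (hne : I.Nonempty) {r : ℝ}
    (hr : ∀ t ∈ I, |(γ t).1| < r) :
    ∃ c d η η', c < d ∧ -r ≤ c ∧ d ≤ r ∧ γ '' I = (fun x => (x, η x)) '' Ioo c d ∧
      IsIntegralGraph g c d η η' := by
  obtain ⟨⟨a, b, rfl⟩, γ', hγ'c, hγ'⟩ := h
  have hfst (t) (ht : t ∈ Ioo a b) : (γ' t).1 ≠ 0 :=
    fst_ne_zero_of_normalForm_eq_zero (hγ' t ht).2.1 (hγ' t ht).2.2
  obtain ⟨c, d, τ, hcd, hmaps, hτ, hinv, hτ'⟩ := exists_inverse_of_hasDerivAt_ne_zero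
    (nonempty_Ioo.1 hne) (fun t ht => (hγ' t ht).1.fst) (continuous_fst.comp_continuousOn hγ'c) hfst
    ((Metric.isBounded_Ioo (-r) r).subset (image_subset_iff.2 fun t ht => abs_lt.1 (hr t ht)))
  have hfst_τ (x) (hx : x ∈ Ioo c d) : (γ (τ x)).1 = x := hinv.2 hx
  have hbounds : Ioo c d ⊆ Ioo (-r) r := fun x hx => by
    rw [← hfst_τ x hx]
    exact abs_lt.1 (hr _ (hτ hx))
  have hτc : ContinuousOn τ (Ioo c d) := fun x hx => (hτ' x hx).continuousAt.continuousWithinAt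
  have hγ'τ : ContinuousOn (fun x => γ' (τ x)) (Ioo c d) := hγ'c.comp hτc hτ
  obtain ⟨hc, hd⟩ := (Ioo_subset_Ioo_iff hcd).1 hbounds
  refine ⟨c, d, fun x => (γ (τ x)).2, fun x => (γ' (τ x)).2 * ((γ' (τ x)).1)⁻¹, hcd, hc, hd,
    Subset.antisymm ?_ ?_, ?_, fun x hx => ?_, fun x hx => ?_⟩
  · rintro _ ⟨t, ht, rfl⟩
    exact ⟨_, hmaps ht, Prod.ext rfl (congrArg (fun s => (γ s).2) (hinv.1 ht))⟩
  · rintro _ ⟨x, hx, rfl⟩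
    exact ⟨τ x, hτ hx, Prod.ext (hfst_τ x hx) rfl⟩
  · exact (continuous_snd.comp_continuousOn hγ'τ).mul
      ((continuous_fst.comp_continuousOn hγ'τ).inv₀ fun x hx => hfst _ (hτ hx))
  · have hsnd : HasDerivAt (fun t => (γ t).2) (γ' (τ x)).2 (τ x) := (hγ' _ (hτ hx)).1.snd
    exact hsnd.comp x (hτ' x hx)
  · have hzero := (hγ' _ (hτ hx)).2.2
    have hne := hfst _ (hτ hx)
    simp only [normalForm, hfst_τ x hx] at hzero
    field_simp
    linarith

lemma exists_sign_of_continuousOn_ne_zero {X : Type*} [TopologicalSpace X] {s : Set X}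
    (hs : IsPreconnected s) {f : X → ℝ} (hf : ContinuousOn f s) (hne : ∀ x ∈ s, f x ≠ 0) :
    ∃ σ : ℝ, |σ| = 1 ∧ ∀ x ∈ s, f x = σ * |f x| := by
  by_cases hpos : ∃ z ∈ s, 0 < f z
  · obtain ⟨z, hz, hfz⟩ := hpos
    refine ⟨1, abs_one, fun x hx => ?_⟩
    rw [one_mul, abs_of_pos]
    by_contra! hle
    obtain ⟨w, hw, hw0⟩ := hs.intermediate_value hx hz hf ⟨hle, hfz.le⟩
    exact hne w hw hw0
  · push Not at hpos
    refine ⟨-1, by simp, fun x hx => ?_⟩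
    rw [abs_of_nonpos (hpos x hx), neg_one_mul, neg_neg]

namespace IsIntegralGraph

variable {g : ℝ → ℝ → ℝ} {r e c d : ℝ} {η η' : ℝ → ℝ}

lemma mono (h : IsIntegralGraph g c d η η') {c' d' : ℝ} (hc : c ≤ c') (hd : d' ≤ d) :
    IsIntegralGraph g c' d' η η' :=
  have hsub := Ioo_subset_Ioo hc hd
  ⟨h.continuousOn.mono hsub, fun x hx => h.hasDerivAt x (hsub hx), fun x hx => h.sq_eq x (hsub hx)⟩

lemma comp_neg (h : IsIntegralGraph g c d η η') :
    IsIntegralGraph g (-d) (-c) (fun x => η (-x)) (fun x => -η' (-x)) := by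
  have hmaps : MapsTo Neg.neg (Ioo (-d) (-c)) (Ioo c d) := fun x hx =>
    ⟨lt_neg.1 hx.2, neg_lt.1 hx.1⟩
  refine ⟨(h.continuousOn.comp continuousOn_neg hmaps).neg, fun x hx => ?_, fun x hx => ?_⟩
  · exact ((h.hasDerivAt _ (hmaps hx)).scomp x (hasDerivAt_neg x)).congr_deriv (neg_one_smul ℝ _)
  · rw [neg_sq, h.sq_eq _ (hmaps hx), abs_neg]

lemma continuousOn_graph (h : IsIntegralGraph g c d η η') : ContinuousOn η (Ioo c d) :=
  fun x hx => (h.hasDerivAt x hx).continuousAt.continuousWithinAt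

lemma nonneg (h : IsIntegralGraph g c d η η') {x : ℝ} (hx : x ∈ Ioo c d) : 0 ≤ g |x| (η x) :=
  h.sq_eq x hx ▸ sq_nonneg _

lemma isIntegralCurveOnBDE (h : IsIntegralGraph g c d η η') :
    IsIntegralCurveOnBDE (normalForm g) (fun x => (x, η x)) (Ioo c d) := by
  refine ⟨⟨c, d, rfl⟩, fun x => (1, η' x), continuousOn_const.prodMk h.continuousOn,
    fun x hx => ⟨(hasDerivAt_id x).prodMk (h.hasDerivAt x hx), by simp, ?_⟩⟩
  simp only [normalForm, h.sq_eq x hx]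
  ring

-- At a zero of `η'` the graph would be flat, whereas `g` changes at a linear rate in `x`: the
-- graph would enter `g < 0` on one side.
lemma deriv_ne_zero (h : IsIntegralGraph g c d η η') (H : IsAdmissible g r e) (hd : d ≤ r) {x₀ : ℝ}
    (hx₀ : x₀ ∈ Ioo c d) (hpos : 0 < x₀) : η' x₀ ≠ 0 := fun h₀ => by
  have hg : g x₀ (η x₀) = 0 := by
    have hsq := h.sq_eq x₀ hx₀
    rw [h₀, abs_of_pos hpos, zero_pow two_ne_zero] at hsq
    exact hsq.symm
  have hflat := (hasDerivAt_iff_isLittleO.1 (h₀ ▸ h.hasDerivAt x₀ hx₀)).def hpos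
  simp only [smul_zero, sub_zero, Real.norm_eq_abs] at hflat
  have hmem : ∀ᶠ x in nhds x₀, x ∈ Ioo c d := isOpen_Ioo.mem_nhds hx₀
  have hnear := hflat.and (hmem.and (lt_mem_nhds hpos))
  rcases H.sign with rfl | rfl
  · obtain ⟨x, hlt, hx, hxcd, hx0⟩ := ((frequently_lt_nhds x₀).and_eventually hnear).exists
    have hmono := H.mono x x₀ (η x₀) hx0.le hlt.le (hx₀.2.le.trans hd)
    have hlip := (abs_le.1 (H.lip x (η x) (η x₀))).2
    have hnonneg := abs_of_pos hx0 ▸ h.nonneg hxcd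
    rw [abs_sub_comm x, abs_of_pos (sub_pos.2 hlt)] at hx
    nlinarith
  · obtain ⟨x, hlt, hx, hxcd, hx0⟩ := ((frequently_gt_nhds x₀).and_eventually hnear).exists
    have hmono := H.mono x₀ x (η x₀) hpos.le hlt.le (hxcd.2.le.trans hd)
    have hlip := (abs_le.1 (H.lip x (η x) (η x₀))).2
    have hnonneg := abs_of_pos hx0 ▸ h.nonneg hxcd
    rw [abs_of_pos (sub_pos.2 hlt)] at hx
    nlinarith

theorem exists_eqOn_leaf (h : IsIntegralGraph g c d η η') (H : IsAdmissible g r e) (hc : 0 ≤ c)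
    (hcd : c < d) (hd : d ≤ r) : ∃ σ a, |σ| = 1 ∧ EqOn η (leaf g r σ 0 a) (Ioo c d) ∧
      EqOn η' (fun x => σ * √(g |x| (η x))) (Ioo c d) := by
  obtain ⟨σ, hσ, hsign⟩ := exists_sign_of_continuousOn_ne_zero isPreconnected_Ioo h.continuousOn
    fun x hx => h.deriv_ne_zero H hd hx (hc.trans_lt hx.1)
  have hslope : EqOn η' (fun x => σ * √(g |x| (η x))) (Ioo c d) := fun x hx => by
    beta_reduce
    rw [← h.sq_eq x hx, Real.sqrt_sq_eq_abs]
    exact hsign x hx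
  obtain ⟨x₀, hx₀⟩ := nonempty_Ioo.2 hcd
  refine ⟨σ, leaf g r σ x₀ (η x₀) 0, hσ, fun x hx => ?_, hslope⟩
  rw [H.leaf_leaf hσ.le]
  have hsub : Icc (min x x₀) (max x x₀) ⊆ Ioo c d :=
    Icc_subset_Ioo (lt_min hx.1 hx₀.1) (max_lt hx.2 hx₀.2)
  have hmin : 0 ≤ min x x₀ := hc.trans (lt_min hx.1 hx₀.1).le
  have hmax : max x x₀ ≤ r := (max_lt hx.2 hx₀.2).le.trans hd
  have hη : IsLeafOn g σ (min x x₀) (max x x₀) η := fun z hz => by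
    have hderiv := h.hasDerivAt z (hsub hz)
    rw [hslope (hsub hz)] at hderiv
    beta_reduce at hderiv
    rw [abs_of_nonneg (hmin.trans hz.1)] at hderiv
    exact hderiv.hasDerivWithinAt
  exact H.eqOn hσ.le hmin hmax hη ((H.isLeafOn_leaf σ x₀ (η x₀)).mono hmin hmax)
    (x₀ := x₀) ⟨min_le_right _ _, le_max_right _ _⟩ (H.leaf_self σ _ _).symm
    ⟨min_le_left _ _, le_max_left _ _⟩

lemma exists_eqOn_leaf_of_zero_mem (h : IsIntegralGraph g c d η η') (H : IsAdmissible g r e)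
    (h₀ : 0 ∈ Ioo c d) (hd : d ≤ r) : ∃ σ, |σ| = 1 ∧ EqOn η (leaf g r σ 0 (η 0)) (Ico 0 d) ∧
      η' 0 = σ * √(g 0 (η 0)) := by
  obtain ⟨σ, a, hσ, hη, hη'⟩ := (h.mono h₀.1.le le_rfl).exists_eqOn_leaf H le_rfl h₀.2 hd
  have hsub : Ico 0 d ⊆ Ioo c d := fun x hx => ⟨h₀.1.trans_le hx.1, hx.2⟩
  have hclos : Ico 0 d ⊆ closure (Ioo 0 d) := by
    rw [closure_Ioo h₀.2.ne]
    exact Ico_subset_Icc_self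
  have hηc := h.continuousOn_graph.mono hsub
  have hηIco : EqOn η (leaf g r σ 0 a) (Ico 0 d) :=
    hη.of_subset_closure hηc (H.continuous_leaf_right hσ.le 0 a).continuousOn
      Ioo_subset_Ico_self hclos
  have hg : ContinuousOn (fun x => g |x| (η x)) (Ico 0 d) :=
    H.continuous.comp_continuousOn (continuous_abs.continuousOn.prodMk hηc)
  have hη'Ico := hη'.of_subset_closure (h.continuousOn.mono hsub)
    (continuousOn_const.mul (Real.continuous_sqrt.comp_continuousOn hg)) Ioo_subset_Ico_self hclos
  have hmem : (0 : ℝ) ∈ Ico 0 d := left_mem_Ico.2 h₀.2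
  have ha : η 0 = a := (hηIco hmem).trans (H.leaf_self σ 0 a)
  exact ⟨σ, hσ, ha ▸ hηIco, by simpa only [abs_zero] using hη'Ico hmem⟩

end IsIntegralGraph

/-- The union of the leaf of sign `σp` over `x ≥ 0` and of the mirror image of the leaf of sign
`σm` over `x ≤ 0`, both issuing from `(0, a)`. -/
def twoSidedLeaf (g : ℝ → ℝ → ℝ) (r σp σm a x : ℝ) : ℝ :=
  if 0 ≤ x then leaf g r σp 0 a x else leaf g r σm 0 a (-x)

/-- The part over `(c, d)` of the two-sided leaf with signs `σp`, `σm` through `(0, a)` is an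
integral curve: it stays in `g ≥ 0` and, if it crosses the axis, its one-sided slopes there agree.
-/
structure IsTwoSidedLeafOn (g : ℝ → ℝ → ℝ) (r c d σp σm a : ℝ) : Prop where
  abs_right : |σp| = 1
  abs_left : |σm| = 1
  neg_le : -r ≤ c
  le : d ≤ r
  nonneg : ∀ x ∈ Ioo c d, 0 ≤ g |x| (twoSidedLeaf g r σp σm a x)
  slope_zero : 0 ∈ Ioo c d → σp = -σm ∨ g 0 a = 0

section TwoSidedLeaf

variable {g : ℝ → ℝ → ℝ} {r e c d σp σm : ℝ} {η η' : ℝ → ℝ}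

lemma twoSidedLeaf_of_nonneg (a : ℝ) {x : ℝ} (hx : 0 ≤ x) :
    twoSidedLeaf g r σp σm a x = leaf g r σp 0 a x :=
  if_pos hx

lemma twoSidedLeaf_of_neg (a : ℝ) {x : ℝ} (hx : x < 0) :
    twoSidedLeaf g r σp σm a x = leaf g r σm 0 a (-x) :=
  if_neg hx.not_ge

namespace IsAdmissible

lemma twoSidedLeaf_zero (H : IsAdmissible g r e) (a : ℝ) : twoSidedLeaf g r σp σm a 0 = a := by
  rw [twoSidedLeaf_of_nonneg a le_rfl, H.leaf_self]

lemma twoSidedLeaf_neg (H : IsAdmissible g r e) (a x : ℝ) :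
    twoSidedLeaf g r σp σm a (-x) = twoSidedLeaf g r σm σp a x := by
  rcases lt_trichotomy x 0 with hx | rfl | hx
  · rw [twoSidedLeaf_of_nonneg a (neg_pos.2 hx).le, twoSidedLeaf_of_neg a hx]
  · rw [neg_zero, H.twoSidedLeaf_zero, H.twoSidedLeaf_zero]
  · rw [twoSidedLeaf_of_neg a (neg_lt_zero.2 hx), twoSidedLeaf_of_nonneg a hx.le, neg_neg]

lemma continuous_twoSidedLeaf (H : IsAdmissible g r e) (hp : |σp| ≤ 1) (hm : |σm| ≤ 1) (a : ℝ) :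
    Continuous (twoSidedLeaf g r σp σm a) := by
  refine Continuous.if_le (H.continuous_leaf_right hp 0 a)
    ((H.continuous_leaf_right hm 0 a).comp continuous_neg) continuous_const continuous_id ?_
  rintro x rfl
  rw [neg_zero, H.leaf_self, H.leaf_self]

theorem exists_isTwoSidedLeafOn (H : IsAdmissible g r e) (h : IsIntegralGraph g c d η η')
    (hcd : c < d) (hc : -r ≤ c) (hd : d ≤ r) :
    ∃ σp σm a, IsTwoSidedLeafOn g r c d σp σm a ∧ EqOn η (twoSidedLeaf g r σp σm a) (Ioo c d) := by
  suffices ∃ σp σm a, |σp| = 1 ∧ |σm| = 1 ∧ (0 ∈ Ioo c d → σp = -σm ∨ g 0 a = 0) ∧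
      EqOn η (twoSidedLeaf g r σp σm a) (Ioo c d) by
    obtain ⟨σp, σm, a, hp, hm, h₀, hη⟩ := this
    exact ⟨σp, σm, a, ⟨hp, hm, hc, hd, fun x hx => hη hx ▸ h.nonneg hx, h₀⟩, hη⟩
  rcases le_or_gt 0 c with hc₀ | hc₀
  · obtain ⟨σ, a, hσ, hη, -⟩ := h.exists_eqOn_leaf H hc₀ hcd hd
    refine ⟨σ, 1, a, hσ, abs_one, fun h₀ => absurd h₀.1 hc₀.not_gt, fun x hx => ?_⟩
    rw [hη hx, twoSidedLeaf_of_nonneg a (hc₀.trans hx.1.le)]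
  rcases le_or_gt d 0 with hd₀ | hd₀
  · obtain ⟨σ, a, hσ, hη, -⟩ := h.comp_neg.exists_eqOn_leaf H (neg_nonneg.2 hd₀) (neg_lt_neg hcd)
      (neg_le.1 hc)
    refine ⟨1, σ, a, abs_one, hσ, fun h₀ => absurd h₀.2 hd₀.not_gt, fun x hx => ?_⟩
    have hx' := hη ⟨neg_lt_neg hx.2, neg_lt_neg hx.1⟩
    beta_reduce at hx'
    rwa [neg_neg, ← twoSidedLeaf_of_neg a (hx.2.trans_le hd₀)] at hx'
  · obtain ⟨σp, hp, hηp, hslope⟩ := h.exists_eqOn_leaf_of_zero_mem H ⟨hc₀, hd₀⟩ hd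
    obtain ⟨σm, hm, hηm, hslope'⟩ := h.comp_neg.exists_eqOn_leaf_of_zero_mem H
      ⟨neg_lt_zero.2 hd₀, neg_pos.2 hc₀⟩ (neg_le.1 hc)
    simp only [neg_zero] at hηm hslope'
    refine ⟨σp, σm, η 0, hp, hm, fun h₀ => ?_, fun x hx => ?_⟩
    · rcases eq_or_ne (√(g 0 (η 0))) 0 with hz | hz
      · exact Or.inr (le_antisymm (Real.sqrt_eq_zero'.1 hz) (by simpa using h.nonneg h₀))
      · exact Or.inl (mul_right_cancel₀ hz (by linarith))
    · rcases le_or_gt 0 x with hx₀ | hx₀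
      · rw [twoSidedLeaf_of_nonneg _ hx₀, hηp ⟨hx₀, hx.2⟩]
      · have hx' := hηm ⟨(neg_pos.2 hx₀).le, neg_lt_neg hx.1⟩
        beta_reduce at hx'
        rwa [neg_neg, ← twoSidedLeaf_of_neg _ hx₀] at hx'

end IsAdmissible

/-! ## Leaves are integral curves -/

namespace IsAdmissible

lemma hasDerivWithinAt_twoSidedLeaf_Ici (H : IsAdmissible g r e) (σp σm a : ℝ) {x : ℝ}
    (hx : x ∈ Ico 0 r) : HasDerivWithinAt (twoSidedLeaf g r σp σm a)
      (σp * √(g |x| (twoSidedLeaf g r σp σm a x))) (Ici 0) x := by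
  have hleaf := H.isLeafOn_leaf σp 0 a x ⟨hx.1, hx.2.le⟩
  rw [twoSidedLeaf_of_nonneg a hx.1, abs_of_nonneg hx.1]
  have hmem : Icc 0 r ∈ nhdsWithin x (Ici 0) :=
    mem_of_superset (inter_mem_nhdsWithin _ (Iio_mem_nhds hx.2)) fun z hz => ⟨hz.1, hz.2.le⟩
  exact (hleaf.mono_of_mem_nhdsWithin hmem).congr
    (fun z hz => twoSidedLeaf_of_nonneg a hz) (twoSidedLeaf_of_nonneg a hx.1)

lemma hasDerivWithinAt_twoSidedLeaf_Iic (H : IsAdmissible g r e) (σp σm a : ℝ) {x : ℝ}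
    (hx : x ∈ Ioc (-r) 0) : HasDerivWithinAt (twoSidedLeaf g r σp σm a)
      (-σm * √(g |x| (twoSidedLeaf g r σp σm a x))) (Iic 0) x := by
  have hderiv := HasDerivWithinAt.scomp (h := fun z => -z) x
    (H.hasDerivWithinAt_twoSidedLeaf_Ici σm σp a ⟨neg_nonneg.2 hx.2, neg_lt.1 hx.1⟩)
    (hasDerivAt_neg x).hasDerivWithinAt (fun z (hz : z ∈ Iic 0) => neg_nonneg.2 hz)
  simpa only [Function.comp_def, H.twoSidedLeaf_neg, abs_neg, neg_one_smul, neg_mul] using hderiv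

end IsAdmissible

namespace IsTwoSidedLeafOn

variable {a : ℝ}

/-- The slope at `x` of a two-sided leaf. -/
def slope (g : ℝ → ℝ → ℝ) (r σp σm a x : ℝ) : ℝ :=
  (if 0 ≤ x then σp else -σm) * √(g |x| (twoSidedLeaf g r σp σm a x))

lemma slope_zero_eq (h : IsTwoSidedLeafOn g r c d σp σm a) (h₀ : 0 ∈ Ioo c d) :
    σp * √(g 0 a) = -σm * √(g 0 a) := by
  rcases h.slope_zero h₀ with hσ | hg
  · rw [hσ]
  · rw [hg, Real.sqrt_zero, mul_zero, mul_zero]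

lemma hasDerivAt (h : IsTwoSidedLeafOn g r c d σp σm a) (H : IsAdmissible g r e) {x : ℝ}
    (hx : x ∈ Ioo c d) : HasDerivAt (twoSidedLeaf g r σp σm a) (slope g r σp σm a x) x := by
  have hxr : x ∈ Ioo (-r) r := Ioo_subset_Ioo h.neg_le h.le hx
  rcases lt_trichotomy x 0 with hx₀ | rfl | hx₀
  · rw [slope, if_neg hx₀.not_ge]
    exact (H.hasDerivWithinAt_twoSidedLeaf_Iic σp σm a ⟨hxr.1, hx₀.le⟩).hasDerivAt
      (Iic_mem_nhds hx₀)
  · have hright := H.hasDerivWithinAt_twoSidedLeaf_Ici σp σm a ⟨le_rfl, hxr.2⟩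
    have hleft := H.hasDerivWithinAt_twoSidedLeaf_Iic σp σm a ⟨hxr.1, le_rfl⟩
    rw [abs_zero, H.twoSidedLeaf_zero] at hleft hright
    rw [← h.slope_zero_eq hx] at hleft
    have hboth := hleft.union hright
    rw [Iic_union_Ici, hasDerivWithinAt_univ] at hboth
    simpa only [slope, le_refl, if_true, abs_zero, H.twoSidedLeaf_zero] using hboth
  · rw [slope, if_pos hx₀.le]
    exact (H.hasDerivWithinAt_twoSidedLeaf_Ici σp σm a ⟨hx₀.le, hxr.2⟩).hasDerivAt
      (Ici_mem_nhds hx₀)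

lemma continuousOn_slope (h : IsTwoSidedLeafOn g r c d σp σm a) (H : IsAdmissible g r e) :
    ContinuousOn (slope g r σp σm a) (Ioo c d) := by
  have hsqrt : Continuous fun x => √(g |x| (twoSidedLeaf g r σp σm a x)) :=
    (H.continuous.comp (continuous_abs.prodMk
      (H.continuous_twoSidedLeaf h.abs_right.le h.abs_left.le a))).sqrt
  have hright := (hsqrt.const_mul σp).continuousOn (s := Ioo c d)
  have hleft := (hsqrt.const_mul (-σm)).continuousOn (s := Ioo c d)
  by_cases h₀ : (0 : ℝ) ∈ Ioo c d
  · have hif : Continuous fun x : ℝ => if 0 ≤ x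
        then σp * √(g |x| (twoSidedLeaf g r σp σm a x))
        else -σm * √(g |x| (twoSidedLeaf g r σp σm a x)) := by
      refine Continuous.if_le (hsqrt.const_mul _) (hsqrt.const_mul _) continuous_const
        continuous_id ?_
      rintro x rfl
      simpa only [abs_zero, H.twoSidedLeaf_zero] using h.slope_zero_eq h₀
    exact hif.continuousOn.congr fun x _ => ite_mul _ _ _ _
  · rcases le_or_gt 0 c with hc | hc
    · exact hright.congr fun x hx => by rw [slope, if_pos (hc.trans hx.1.le)]
    · have hd : d ≤ 0 := not_lt.1 fun hd => h₀ ⟨hc, hd⟩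
      exact hleft.congr fun x hx => by rw [slope, if_neg (hx.2.trans_le hd).not_ge]

theorem isIntegralGraph (h : IsTwoSidedLeafOn g r c d σp σm a) (H : IsAdmissible g r e) :
    IsIntegralGraph g c d (twoSidedLeaf g r σp σm a) (slope g r σp σm a) where
  continuousOn := h.continuousOn_slope H
  hasDerivAt _ hx := h.hasDerivAt H hx
  sq_eq x hx := by
    rw [slope, mul_pow, Real.sq_sqrt (h.nonneg x hx)]
    split_ifs
    · rw [← sq_abs, h.abs_right, one_pow, one_mul]
    · rw [neg_sq, ← sq_abs, h.abs_left, one_pow, one_mul]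

end IsTwoSidedLeafOn

end TwoSidedLeaf

/-! ## Leaf coordinates -/

/-- Coordinates of a point of the half-strip `0 ≤ x ≤ r`: the heights at which the rising and the
falling leaf through it meet the axis `x = 0`, completed by `max (-g) 0`, which separates the points
of the region `g ≤ 0`, where the two leaves are not transverse. -/
def leafCoords (g : ℝ → ℝ → ℝ) (r x y : ℝ) : ℝ × ℝ × ℝ :=
  (leaf g r 1 x y 0, leaf g r (-1) x y 0, max (-g x y) 0)

/-- The action on leaf coordinates of a map `θ` of the axis `x = 0`. -/
def mapLeafCoords (θ : ℝ → ℝ) (w : ℝ × ℝ × ℝ) : ℝ × ℝ × ℝ := (θ w.1, θ w.2.1, w.2.2)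

namespace IsAdmissible

variable {g : ℝ → ℝ → ℝ} {r e σ : ℝ}

lemma continuous_leaf_apply_zero (H : IsAdmissible g r e) (hσ : |σ| ≤ 1) :
    Continuous fun p : ℝ × ℝ => leaf g r σ p.1 p.2 0 :=
  (H.continuous_leaf hσ).comp
    (continuous_fst.prodMk (continuous_snd.prodMk continuous_const))

lemma continuous_leafCoords (H : IsAdmissible g r e) :
    Continuous fun p : ℝ × ℝ => leafCoords g r p.1 p.2 :=
  (H.continuous_leaf_apply_zero (by simp)).prodMk
    ((H.continuous_leaf_apply_zero (by simp)).prodMk (H.continuous.neg.max continuous_const))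

lemma leafCoords_zero (H : IsAdmissible g r e) (a : ℝ) :
    leafCoords g r 0 a = (a, a, max (-g 0 a) 0) := by
  rw [leafCoords, H.leaf_self, H.leaf_self]

lemma eq_leaf_of_leaf_eq (H : IsAdmissible g r e) (hσ : |σ| ≤ 1) {x y a : ℝ}
    (h : leaf g r σ x y 0 = a) : y = leaf g r σ 0 a x := by
  rw [← h, H.leaf_leaf hσ, H.leaf_self]

lemma apply_ne_of_lt (H : IsAdmissible g r e) {x x' : ℝ} (y : ℝ) (hx : 0 ≤ x) (hlt : x < x')
    (hx' : x' ≤ r) : g x y ≠ g x' y := fun h => by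
  have hmono := H.mono x x' y hx hlt.le hx'
  rw [h, sub_self, mul_zero] at hmono
  nlinarith

-- A rising leaf and a falling leaf which meet twice are constant in between, hence lie in `g ≤ 0`
-- there; but `g` is strictly monotone in `x`.
lemma fst_eq_of_leafCoords_eq (H : IsAdmissible g r e) {x y x' y' : ℝ} (hx : x ∈ Icc 0 r)
    (hx' : x' ∈ Icc 0 r) (h : leafCoords g r x y = leafCoords g r x' y') : x = x' := by
  by_contra hne
  wlog hlt : x < x' generalizing x y x' y'
  · exact this hx' hx h.symm (Ne.symm hne) (lt_of_le_of_ne (not_lt.1 hlt) (Ne.symm hne))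
  simp only [leafCoords, Prod.mk.injEq] at h
  obtain ⟨hrise, hfall, hneg⟩ := h
  set a := leaf g r 1 x' y' 0
  set b := leaf g r (-1) x' y' 0
  have hy_rise : y = leaf g r 1 0 a x := H.eq_leaf_of_leaf_eq (by simp) hrise
  have hy'_rise : y' = leaf g r 1 0 a x' := H.eq_leaf_of_leaf_eq (by simp) rfl
  have hy_fall : y = leaf g r (-1) 0 b x := H.eq_leaf_of_leaf_eq (by simp) hfall
  have hy'_fall : y' = leaf g r (-1) 0 b x' := H.eq_leaf_of_leaf_eq (by simp) rfl
  have hle : y ≤ y' := by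
    rw [hy_rise, hy'_rise]
    exact H.monotone_leaf 0 a hlt.le
  have hge : y' ≤ y := by
    rw [hy_fall, hy'_fall]
    exact H.antitone_leaf 0 b hlt.le
  obtain rfl : y = y' := le_antisymm hle hge
  have hconst : leaf g r 1 x y x' = y := by
    nth_rewrite 1 [hy_rise]
    rw [H.leaf_leaf (by simp), ← hy'_rise]
  have hnonpos {s : ℝ} (hs : s ∈ Icc x x') : g s y ≤ 0 :=
    not_lt.1 fun hpos => (H.lt_leaf_one_of_pos hx.1 hlt hx'.2 hs hpos).ne' hconst
  rw [max_eq_left (neg_nonneg.2 (hnonpos (left_mem_Icc.2 hlt.le))),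
    max_eq_left (neg_nonneg.2 (hnonpos (right_mem_Icc.2 hlt.le)))] at hneg
  exact H.apply_ne_of_lt y hx.1 hlt hx'.2 (neg_inj.1 hneg)

lemma snd_eq_of_leafCoords_eq (H : IsAdmissible g r e) {x y x' y' : ℝ} (hx : x ∈ Icc 0 r)
    (hx' : x' ∈ Icc 0 r) (h : leafCoords g r x y = leafCoords g r x' y') : y = y' := by
  obtain rfl := H.fst_eq_of_leafCoords_eq hx hx' h
  exact (H.strictMono_leaf (σ := 1) (by simp) x 0).injective (congrArg Prod.fst h)

end IsAdmissible

/-! ## Matching two normal forms through their leaf coordinates -/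

/-- `θ` maps the part of the axis `x = 0` on which `g₁ ≤ 0` onto the part on which `g₂ ≤ 0`, and
preserves the values there. -/
def AxisCompatible (g₁ g₂ : ℝ → ℝ → ℝ) (θ : ℝ → ℝ) : Prop :=
  ∀ a, g₁ 0 a ≤ 0 ∨ g₂ 0 (θ a) ≤ 0 → g₁ 0 a = g₂ 0 (θ a)

/-- The points `p` and `q` lie on the same side of the axis, and the leaf coordinates of `q` for
`g₂` are the images under `θ` of those of `p` for `g₁`. -/
structure LeafRel (g₁ : ℝ → ℝ → ℝ) (r₁ : ℝ) (g₂ : ℝ → ℝ → ℝ) (r₂ : ℝ) (θ : ℝ → ℝ)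
    (p q : ℝ × ℝ) : Prop where
  abs_left_le : |p.1| ≤ r₁
  abs_right_le : |q.1| ≤ r₂
  coords_eq : leafCoords g₂ r₂ |q.1| q.2 = mapLeafCoords θ (leafCoords g₁ r₁ |p.1| p.2)
  mul_nonneg : 0 ≤ p.1 * q.1

/-- Every point of the square of half-side `δ` is related by `LeafRel` to some point, for a
homeomorphism `θ` of the axis fixing `0` and compatible with `g₁` and `g₂`. -/
structure LeafMatch (g₁ : ℝ → ℝ → ℝ) (r₁ : ℝ) (g₂ : ℝ → ℝ → ℝ) (r₂ : ℝ) (θ : ℝ ≃o ℝ)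
    (δ : ℝ) : Prop where
  pos : 0 < δ
  le : δ ≤ r₁
  map_zero : θ 0 = 0
  axis : AxisCompatible g₁ g₂ θ
  exists_coords_eq : ∀ x ∈ Icc 0 δ, ∀ y ∈ Icc (-δ) δ, ∃ x' ∈ Icc 0 r₂, ∃ y',
    leafCoords g₂ r₂ x' y' = mapLeafCoords θ (leafCoords g₁ r₁ x y)

section LeafRel

variable {g₁ g₂ : ℝ → ℝ → ℝ} {r₁ r₂ e₁ e₂ δ : ℝ} {θ : ℝ ≃o ℝ} {p q : ℝ × ℝ}

lemma AxisCompatible.symm (h : AxisCompatible g₁ g₂ θ) : AxisCompatible g₂ g₁ θ.symm :=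
  fun a ha => by simpa using (h (θ.symm a) (by simpa using ha.symm)).symm

lemma AxisCompatible.max_neg_eq (h : AxisCompatible g₁ g₂ θ) (a : ℝ) :
    max (-g₂ 0 (θ a)) 0 = max (-g₁ 0 a) 0 := by
  by_cases hle : g₁ 0 a ≤ 0 ∨ g₂ 0 (θ a) ≤ 0
  · rw [h a hle]
  · push Not at hle
    rw [max_eq_right (by linarith), max_eq_right (by linarith)]

lemma AxisCompatible.leafRel (h : AxisCompatible g₁ g₂ θ) (H₁ : IsAdmissible g₁ r₁ e₁)
    (H₂ : IsAdmissible g₂ r₂ e₂) (a : ℝ) : LeafRel g₁ r₁ g₂ r₂ θ (0, a) (0, θ a) where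
  abs_left_le := by simpa using H₁.pos.le
  abs_right_le := by simpa using H₂.pos.le
  coords_eq := by
    rw [abs_zero, H₁.leafCoords_zero, H₂.leafCoords_zero, mapLeafCoords, h.max_neg_eq]
  mul_nonneg := by simp

namespace LeafRel

lemma symm (h : LeafRel g₁ r₁ g₂ r₂ θ p q) : LeafRel g₂ r₂ g₁ r₁ θ.symm q p where
  abs_left_le := h.abs_right_le
  abs_right_le := h.abs_left_le
  coords_eq := by simp [h.coords_eq, mapLeafCoords]
  mul_nonneg := mul_comm q.1 p.1 ▸ h.mul_nonneg

lemma leaf_eq (h : LeafRel g₁ r₁ g₂ r₂ θ p q) {σ : ℝ} (hσ : |σ| = 1) :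
    leaf g₂ r₂ σ |q.1| q.2 0 = θ (leaf g₁ r₁ σ |p.1| p.2 0) := by
  rcases eq_or_eq_neg_of_abs_eq hσ with rfl | rfl
  · exact congrArg Prod.fst h.coords_eq
  · exact congrArg (fun w => w.2.1) h.coords_eq

lemma right_eq_zero (h : LeafRel g₁ r₁ g₂ r₂ θ p q) (H₁ : IsAdmissible g₁ r₁ e₁)
    (H₂ : IsAdmissible g₂ r₂ e₂) (hax : AxisCompatible g₁ g₂ θ) (hp : p.1 = 0) : q.1 = 0 := by
  have haxis := hax.leafRel H₁ H₂ p.2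
  have heq : leafCoords g₂ r₂ |q.1| q.2 = leafCoords g₂ r₂ |0| (θ p.2) := by
    rw [h.coords_eq, haxis.coords_eq, hp]
  have habs := H₂.fst_eq_of_leafCoords_eq ⟨abs_nonneg _, h.abs_right_le⟩
    ⟨abs_nonneg _, haxis.abs_right_le⟩ heq
  simpa using habs

lemma left_eq_zero (h : LeafRel g₁ r₁ g₂ r₂ θ p q) (H₁ : IsAdmissible g₁ r₁ e₁)
    (H₂ : IsAdmissible g₂ r₂ e₂) (hax : AxisCompatible g₁ g₂ θ) (hq : q.1 = 0) : p.1 = 0 :=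
  h.symm.right_eq_zero H₂ H₁ hax.symm hq

lemma right_unique (h : LeafRel g₁ r₁ g₂ r₂ θ p q) (H₁ : IsAdmissible g₁ r₁ e₁)
    (H₂ : IsAdmissible g₂ r₂ e₂) (hax : AxisCompatible g₁ g₂ θ) {q' : ℝ × ℝ}
    (h' : LeafRel g₁ r₁ g₂ r₂ θ p q') : q = q' := by
  have heq := h.coords_eq.trans h'.coords_eq.symm
  have hq : |q.1| ∈ Icc 0 r₂ := ⟨abs_nonneg _, h.abs_right_le⟩
  have hq' : |q'.1| ∈ Icc 0 r₂ := ⟨abs_nonneg _, h'.abs_right_le⟩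
  refine Prod.ext ?_ (H₂.snd_eq_of_leafCoords_eq hq hq' heq)
  rcases abs_eq_abs.1 (H₂.fst_eq_of_leafCoords_eq hq hq' heq) with hsame | hopp
  · exact hsame
  by_cases hp : p.1 = 0
  · rw [h.right_eq_zero H₁ H₂ hax hp, h'.right_eq_zero H₁ H₂ hax hp]
  · have hsign := h.mul_nonneg
    rw [hopp, mul_neg] at hsign
    have hzero : q'.1 = 0 :=
      (mul_eq_zero.1 (le_antisymm (neg_nonneg.1 hsign) h'.mul_nonneg)).resolve_left hp
    rw [hopp, hzero, neg_zero]

lemma left_unique (h : LeafRel g₁ r₁ g₂ r₂ θ p q) (H₁ : IsAdmissible g₁ r₁ e₁)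
    (H₂ : IsAdmissible g₂ r₂ e₂) (hax : AxisCompatible g₁ g₂ θ) {p' : ℝ × ℝ}
    (h' : LeafRel g₁ r₁ g₂ r₂ θ p' q) : p = p' :=
  h.symm.right_unique H₂ H₁ hax.symm h'.symm

lemma nonneg_iff (h : LeafRel g₁ r₁ g₂ r₂ θ p q) (H₁ : IsAdmissible g₁ r₁ e₁)
    (H₂ : IsAdmissible g₂ r₂ e₂) (hax : AxisCompatible g₁ g₂ θ) : 0 ≤ p.1 ↔ 0 ≤ q.1 := by
  have hsign := h.mul_nonneg
  rcases eq_or_ne p.1 0 with hp | hp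
  · simp only [hp, h.right_eq_zero H₁ H₂ hax hp]
  · have hq : q.1 ≠ 0 := fun hq => hp (h.left_eq_zero H₁ H₂ hax hq)
    rcases mul_nonneg_iff.1 hsign with hpos | hneg
    · exact iff_of_true hpos.1 hpos.2
    · exact iff_of_false (lt_of_le_of_ne hneg.1 hp).not_ge (lt_of_le_of_ne hneg.2 hq).not_ge

lemma nonneg_apply (h : LeafRel g₁ r₁ g₂ r₂ θ p q) (hp : 0 ≤ g₁ |p.1| p.2) :
    0 ≤ g₂ |q.1| q.2 := by
  have hmax : max (-g₂ |q.1| q.2) 0 = max (-g₁ |p.1| p.2) 0 :=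
    congrArg (fun w => w.2.2) h.coords_eq
  rw [max_eq_right (neg_nonpos.2 hp)] at hmax
  exact neg_nonpos.1 (hmax ▸ le_max_left _ _)

lemma right_mem_Icc (h : LeafRel g₁ r₁ g₂ r₂ θ p q) (H₂ : IsAdmissible g₂ r₂ e₂) :
    q.2 ∈ Icc (θ (leaf g₁ r₁ 1 |p.1| p.2 0)) (θ (leaf g₁ r₁ (-1) |p.1| p.2 0)) := by
  rw [← h.leaf_eq abs_one, ← h.leaf_eq (σ := -1) (by simp)]
  exact ⟨H₂.leaf_one_le _ (abs_nonneg _), H₂.le_leaf_neg_one _ (abs_nonneg _)⟩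

lemma right_eq_twoSidedLeaf (H₁ : IsAdmissible g₁ r₁ e₁) (H₂ : IsAdmissible g₂ r₂ e₂)
    (hax : AxisCompatible g₁ g₂ θ) {σp σm a x : ℝ} (hp : |σp| = 1) (hm : |σm| = 1)
    (h : LeafRel g₁ r₁ g₂ r₂ θ (x, twoSidedLeaf g₁ r₁ σp σm a x) q) :
    q.2 = twoSidedLeaf g₂ r₂ σp σm (θ a) q.1 := by
  rcases le_or_gt 0 x with hx | hx
  · have hq : 0 ≤ q.1 := (h.nonneg_iff H₁ H₂ hax).1 hx
    have hleaf := h.leaf_eq hp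
    rw [abs_of_nonneg hq, abs_of_nonneg hx, twoSidedLeaf_of_nonneg a hx, H₁.leaf_leaf hp.le,
      H₁.leaf_self] at hleaf
    rw [twoSidedLeaf_of_nonneg _ hq]
    exact H₂.eq_leaf_of_leaf_eq hp.le hleaf
  · have hq : q.1 < 0 := not_le.1 fun hq => hx.not_ge ((h.nonneg_iff H₁ H₂ hax).2 hq)
    have hleaf := h.leaf_eq hm
    rw [abs_of_neg hq, abs_of_neg hx, twoSidedLeaf_of_neg a hx, H₁.leaf_leaf hm.le,
      H₁.leaf_self] at hleaf
    rw [twoSidedLeaf_of_neg _ hq]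
    exact H₂.eq_leaf_of_leaf_eq hm.le hleaf

lemma isClosed_setOf (H₁ : IsAdmissible g₁ r₁ e₁) (H₂ : IsAdmissible g₂ r₂ e₂) (θ : ℝ ≃o ℝ) :
    IsClosed {z : (ℝ × ℝ) × (ℝ × ℝ) | LeafRel g₁ r₁ g₂ r₂ θ z.1 z.2} := by
  have hθ := θ.continuous
  have hmap : Continuous (mapLeafCoords θ) := by
    unfold mapLeafCoords
    fun_prop
  have hcoords : IsClosed {z : (ℝ × ℝ) × (ℝ × ℝ) | leafCoords g₂ r₂ |z.2.1| z.2.2 =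
      mapLeafCoords θ (leafCoords g₁ r₁ |z.1.1| z.1.2)} :=
    isClosed_eq (H₂.continuous_leafCoords.comp (g := fun p : ℝ × ℝ => leafCoords g₂ r₂ p.1 p.2)
      (f := fun z : (ℝ × ℝ) × (ℝ × ℝ) => (|z.2.1|, z.2.2)) (by fun_prop))
      (hmap.comp (H₁.continuous_leafCoords.comp
        (f := fun z : (ℝ × ℝ) × (ℝ × ℝ) => (|z.1.1|, z.1.2)) (by fun_prop)))
  have habs₁ : IsClosed {z : (ℝ × ℝ) × (ℝ × ℝ) | |z.1.1| ≤ r₁} :=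
    isClosed_le (by fun_prop) continuous_const
  have habs₂ : IsClosed {z : (ℝ × ℝ) × (ℝ × ℝ) | |z.2.1| ≤ r₂} :=
    isClosed_le (by fun_prop) continuous_const
  have hsign : IsClosed {z : (ℝ × ℝ) × (ℝ × ℝ) | 0 ≤ z.1.1 * z.2.1} :=
    isClosed_le continuous_const (by fun_prop)
  convert habs₁.inter (habs₂.inter (hcoords.inter hsign)) using 1
  ext z
  exact ⟨fun h => ⟨h.1, h.2, h.3, h.4⟩, fun h => ⟨h.1, h.2.1, h.2.2.1, h.2.2.2⟩⟩

end LeafRel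

end LeafRel

lemma continuousOn_of_isClosed_of_unique {X Y : Type*} [TopologicalSpace X] [TopologicalSpace Y]
    {R : Set (X × Y)} (hR : IsClosed R) {K : Set Y} (hK : IsCompact K) {s : Set X} {f : X → Y}
    (hfK : MapsTo f s K) (hfR : ∀ x ∈ s, (x, f x) ∈ R)
    (hunique : ∀ x ∈ s, ∀ y, (x, y) ∈ R → y = f x) : ContinuousOn f s := by
  intro x hx
  refine hK.tendsto_nhds_of_unique_mapClusterPt (eventually_nhdsWithin_of_forall hfK)
    fun y _ hy => hunique x hx y ?_
  rw [← hR.closure_eq, mem_closure_iff_nhds]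
  intro t ht
  obtain ⟨u, hu, v, hv, huv⟩ := mem_nhds_prod_iff.1 ht
  have hev : ∀ᶠ z in nhdsWithin x s, z ∈ u ∧ z ∈ s :=
    inter_mem (mem_nhdsWithin_of_mem_nhds hu) self_mem_nhdsWithin
  obtain ⟨z, hzv, hzu, hzs⟩ := ((mapClusterPt_iff_frequently.1 hy v hv).and_eventually hev).exists
  exact ⟨(z, f z), huv ⟨hzu, hzv⟩, hfR z hzs⟩

namespace LeafMatch

open Metric

variable {g₁ g₂ : ℝ → ℝ → ℝ} {r₁ r₂ e₁ e₂ δ : ℝ} {θ : ℝ ≃o ℝ} {h : ℝ × ℝ → ℝ × ℝ}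

lemma exists_leafRel (M : LeafMatch g₁ r₁ g₂ r₂ θ δ) {p : ℝ × ℝ} (hp : p ∈ closedBall 0 δ) :
    ∃ q, LeafRel g₁ r₁ g₂ r₂ θ p q := by
  obtain ⟨hp₁, hp₂⟩ := norm_prod_le_iff.1 (mem_closedBall_zero_iff.1 hp)
  rw [Real.norm_eq_abs] at hp₁ hp₂
  obtain ⟨x', hx', y', h⟩ :=
    M.exists_coords_eq |p.1| ⟨abs_nonneg _, hp₁⟩ p.2 (abs_le.1 hp₂)
  have hrel (s : ℝ) (hs : |s| = x') (hsign : 0 ≤ p.1 * s) :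
      LeafRel g₁ r₁ g₂ r₂ θ p (s, y') :=
    ⟨hp₁.trans M.le, hs.trans_le hx'.2, by rw [hs, h], hsign⟩
  rcases le_total 0 p.1 with hp₀ | hp₀
  · exact ⟨_, hrel x' (abs_of_nonneg hx'.1) (mul_nonneg hp₀ hx'.1)⟩
  · exact ⟨_, hrel (-x') (by rw [abs_neg, abs_of_nonneg hx'.1])
      (mul_nonneg_of_nonpos_of_nonpos hp₀ (neg_nonpos.2 hx'.1))⟩

lemma continuousOn (M : LeafMatch g₁ r₁ g₂ r₂ θ δ) (H₁ : IsAdmissible g₁ r₁ e₁)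
    (H₂ : IsAdmissible g₂ r₂ e₂)
    (hh : ∀ p ∈ closedBall 0 δ, LeafRel g₁ r₁ g₂ r₂ θ p (h p)) :
    ContinuousOn h (closedBall 0 δ) := by
  have hcont {σ : ℝ} (hσ : |σ| ≤ 1) :
      Continuous fun p : ℝ × ℝ => θ (leaf g₁ r₁ σ |p.1| p.2 0) :=
    θ.continuous.comp ((H₁.continuous_leaf_apply_zero hσ).comp
      (f := fun p : ℝ × ℝ => (|p.1|, p.2)) (by fun_prop))
  have hcompact : IsCompact (closedBall (0 : ℝ × ℝ) δ) := isCompact_closedBall 0 δ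
  obtain ⟨A, hA⟩ := hcompact.exists_bound_of_continuousOn
    (hcont (σ := 1) (by simp)).continuousOn
  obtain ⟨B, hB⟩ := hcompact.exists_bound_of_continuousOn
    (hcont (σ := -1) (by simp)).continuousOn
  refine continuousOn_of_isClosed_of_unique (LeafRel.isClosed_setOf H₁ H₂ θ)
    (isCompact_Icc.prod isCompact_Icc : IsCompact (Icc (-r₂) r₂ ×ˢ Icc (-A) B))
    (fun p hp => ⟨abs_le.1 (hh p hp).abs_right_le, ?_⟩) hh
    (fun p hp q hq => hq.right_unique H₁ H₂ M.axis (hh p hp))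
  obtain ⟨hlow, hup⟩ := (hh p hp).right_mem_Icc H₂
  exact ⟨(abs_le.1 (hA p hp)).1.trans hlow, hup.trans (abs_le.1 (hB p hp)).2⟩

lemma exists_continuousOn_leafRel (M : LeafMatch g₁ r₁ g₂ r₂ θ δ) (H₁ : IsAdmissible g₁ r₁ e₁)
    (H₂ : IsAdmissible g₂ r₂ e₂) : ∃ h : ℝ × ℝ → ℝ × ℝ, h 0 = 0 ∧
      ContinuousOn h (closedBall 0 δ) ∧
      ∀ p ∈ closedBall 0 δ, LeafRel g₁ r₁ g₂ r₂ θ p (h p) := by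
  choose! h hh using fun p (hp : p ∈ closedBall (0 : ℝ × ℝ) δ) => M.exists_leafRel hp
  have hzero := M.axis.leafRel H₁ H₂ 0
  rw [M.map_zero] at hzero
  exact ⟨h, (hh 0 (mem_closedBall_self M.pos.le)).right_unique H₁ H₂ M.axis hzero,
    M.continuousOn H₁ H₂ hh, hh⟩

end LeafMatch

section Transport

variable {g₁ g₂ : ℝ → ℝ → ℝ} {r₁ r₂ e₁ e₂ c d σp σm a : ℝ} {θ : ℝ ≃o ℝ}
  {h : ℝ × ℝ → ℝ × ℝ} {U : Set (ℝ × ℝ)}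

lemma IsTwoSidedLeafOn.exists_image_eq (hL : IsTwoSidedLeafOn g₁ r₁ c d σp σm a)
    (H₁ : IsAdmissible g₁ r₁ e₁) (H₂ : IsAdmissible g₂ r₂ e₂) (hax : AxisCompatible g₁ g₂ θ)
    (hcd : c < d) (hh : ContinuousOn h U) (hrel : ∀ p ∈ U, LeafRel g₁ r₁ g₂ r₂ θ p (h p))
    (hr₂ : ∀ p ∈ U, |(h p).1| < r₂)
    (hU : MapsTo (fun x => (x, twoSidedLeaf g₁ r₁ σp σm a x)) (Ioo c d) U) :
    ∃ c' d', IsTwoSidedLeafOn g₂ r₂ c' d' σp σm (θ a) ∧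
      h '' ((fun x => (x, twoSidedLeaf g₁ r₁ σp σm a x)) '' Ioo c d) =
        (fun x => (x, twoSidedLeaf g₂ r₂ σp σm (θ a) x)) '' Ioo c' d' := by
  set P : ℝ → ℝ × ℝ := fun x => (x, twoSidedLeaf g₁ r₁ σp σm a x)
  have hkey {x : ℝ} (hx : x ∈ Ioo c d) :
      (h (P x)).2 = twoSidedLeaf g₂ r₂ σp σm (θ a) (h (P x)).1 :=
    LeafRel.right_eq_twoSidedLeaf H₁ H₂ hax hL.abs_right hL.abs_left (hrel _ (hU hx))
  have hcont : ContinuousOn (fun x => (h (P x)).1) (Ioo c d) :=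
    continuous_fst.comp_continuousOn (hh.comp (continuous_id.prodMk
      (H₁.continuous_twoSidedLeaf hL.abs_right.le hL.abs_left.le a)).continuousOn hU)
  have hinj : InjOn (fun x => (h (P x)).1) (Ioo c d) := fun x hx x' hx'
      (heq : (h (P x)).1 = (h (P x')).1) => by
    have heq' : h (P x) = h (P x') := Prod.ext heq (by rw [hkey hx, hkey hx', heq])
    have hxx' := (heq' ▸ hrel _ (hU hx)).left_unique H₁ H₂ hax (hrel _ (hU hx'))
    exact congrArg Prod.fst hxx'
  have hsub : (fun x => (h (P x)).1) '' Ioo c d ⊆ Ioo (-r₂) r₂ :=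
    image_subset_iff.2 fun x hx => abs_lt.1 (hr₂ _ (hU hx))
  obtain ⟨c', d', hcd', himage⟩ := exists_image_Ioo_eq_Ioo hcd hcont hinj
    ((Metric.isBounded_Ioo _ _).subset hsub)
  obtain ⟨hc', hd'⟩ := (Ioo_subset_Ioo_iff hcd').1 (himage ▸ hsub)
  refine ⟨c', d', ⟨hL.abs_right, hL.abs_left, hc', hd', ?_, ?_⟩, ?_⟩
  · rw [← himage]
    rintro _ ⟨x, hx, rfl⟩
    rw [← hkey hx]
    exact (hrel _ (hU hx)).nonneg_apply (hL.nonneg x hx)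
  · rw [← himage]
    rintro ⟨x, hx, hx₀⟩
    obtain rfl : x = 0 := (hrel _ (hU hx)).left_eq_zero H₁ H₂ hax hx₀
    exact (hL.slope_zero hx).imp_right fun hg => (hax a (Or.inl hg.le)).symm.trans hg
  · rw [← himage, image_image, image_image]
    exact image_congr fun x hx => Prod.ext rfl (hkey hx)

lemma isIntegralCurveOnBDE_empty (ω : (ℝ × ℝ) → (ℝ × ℝ) → ℝ) (γ : ℝ → ℝ × ℝ) :
    IsIntegralCurveOnBDE ω γ ∅ :=
  ⟨⟨0, 0, (Ioo_self 0).symm⟩, fun _ => 0, continuousOn_empty _, fun _ => False.elim⟩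

lemma AxisCompatible.exists_isIntegralCurveOnBDE (hax : AxisCompatible g₁ g₂ θ)
    (H₁ : IsAdmissible g₁ r₁ e₁) (H₂ : IsAdmissible g₂ r₂ e₂)
    (hh : ContinuousOn h U) (hrel : ∀ p ∈ U, LeafRel g₁ r₁ g₂ r₂ θ p (h p))
    (hr₁ : ∀ p ∈ U, |p.1| < r₁) (hr₂ : ∀ p ∈ U, |(h p).1| < r₂) {γ : ℝ → ℝ × ℝ} {I : Set ℝ}
    (hγ : IsIntegralCurveOnBDE (normalForm g₁) γ I) (hU : MapsTo γ I U) :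
    ∃ σ J, IsIntegralCurveOnBDE (normalForm g₂) σ J ∧ h '' (γ '' I) = σ '' J := by
  rcases I.eq_empty_or_nonempty with rfl | hne
  · exact ⟨γ, ∅, isIntegralCurveOnBDE_empty _ γ, by simp only [image_empty]⟩
  obtain ⟨c, d, η, η', hcd, hc, hd, himage, hη⟩ :=
    exists_isIntegralGraph hγ hne fun t ht => hr₁ _ (hU ht)
  obtain ⟨σp, σm, a, hL, hleaf⟩ := H₁.exists_isTwoSidedLeafOn hη hcd hc hd
  have himage' : γ '' I = (fun x => (x, twoSidedLeaf g₁ r₁ σp σm a x)) '' Ioo c d :=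
    himage.trans (image_congr fun x hx => by rw [hleaf hx])
  have hU' := mapsTo_iff_image_subset.2 (himage' ▸ hU.image_subset)
  obtain ⟨c', d', hL', himage₂⟩ := hL.exists_image_eq H₁ H₂ hax hcd hh hrel hr₂ hU'
  exact ⟨_, _, (hL'.isIntegralGraph H₂).isIntegralCurveOnBDE, himage' ▸ himage₂⟩

end Transport

open Metric in
theorem LeafMatch.topEquivAt0 {g₁ g₂ : ℝ → ℝ → ℝ} {r₁ r₂ e₁ e₂ δ₁ δ₂ : ℝ} {θ : ℝ ≃o ℝ}
    (M₁ : LeafMatch g₁ r₁ g₂ r₂ θ δ₁) (M₂ : LeafMatch g₂ r₂ g₁ r₁ θ.symm δ₂)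
    (H₁ : IsAdmissible g₁ r₁ e₁) (H₂ : IsAdmissible g₂ r₂ e₂) :
    TopEquivAt0 (normalForm g₁) (normalForm g₂) := by
  obtain ⟨h, h₀, hh, hrel⟩ := M₁.exists_continuousOn_leafRel H₁ H₂
  obtain ⟨k, k₀, hk, krel⟩ := M₂.exists_continuousOn_leafRel H₂ H₁
  have hsub₁ : ball (0 : ℝ × ℝ) δ₁ ⊆ closedBall 0 δ₁ := ball_subset_closedBall
  have hsub₂ : ball (0 : ℝ × ℝ) δ₂ ⊆ closedBall 0 δ₂ := ball_subset_closedBall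
  have hr₁ {p : ℝ × ℝ} (hp : p ∈ ball 0 δ₁) : |p.1| < r₁ :=
    ((norm_fst_le p).trans_lt (mem_ball_zero_iff.1 hp)).trans_le M₁.le
  have hr₂ {p : ℝ × ℝ} (hp : p ∈ ball 0 δ₂) : |p.1| < r₂ :=
    ((norm_fst_le p).trans_lt (mem_ball_zero_iff.1 hp)).trans_le M₂.le
  set U := ball (0 : ℝ × ℝ) δ₁ ∩ h ⁻¹' ball 0 δ₂
  set V := ball (0 : ℝ × ℝ) δ₂ ∩ k ⁻¹' ball 0 δ₁
  have hkh : LeftInvOn k h U := fun p hp =>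
    (krel _ (hsub₂ hp.2)).right_unique H₂ H₁ M₂.axis (hrel p (hsub₁ hp.1)).symm
  have hhk : LeftInvOn h k V := fun q hq =>
    (hrel _ (hsub₁ hq.2)).right_unique H₁ H₂ M₁.axis (krel q (hsub₂ hq.1)).symm
  have hinv : InvOn k h U V := ⟨hkh, hhk⟩
  have hUV : MapsTo h U V := fun p hp => ⟨hp.2, by rw [mem_preimage, hkh hp]; exact hp.1⟩
  have hVU : MapsTo k V U := fun q hq => ⟨hq.2, by rw [mem_preimage, hhk hq]; exact hq.1⟩
  have hhU : ContinuousOn h U := hh.mono (inter_subset_left.trans hsub₁)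
  have hkV : ContinuousOn k V := hk.mono (inter_subset_left.trans hsub₂)
  refine ⟨U, V, h, k, (hh.mono hsub₁).isOpen_inter_preimage isOpen_ball isOpen_ball,
    (hk.mono hsub₂).isOpen_inter_preimage isOpen_ball isOpen_ball,
    ⟨mem_ball_self M₁.pos, by rw [mem_preimage, h₀]; exact mem_ball_self M₂.pos⟩,
    ⟨mem_ball_self M₂.pos, by rw [mem_preimage, k₀]; exact mem_ball_self M₁.pos⟩, h₀,
    hhU, hkV, hinv.bijOn hUV hVU, hinv, fun γ I hγ hU => ?_, fun γ I hγ hV => ?_⟩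
  · exact M₁.axis.exists_isIntegralCurveOnBDE H₁ H₂ hhU (fun p hp => hrel p (hsub₁ hp.1))
      (fun p hp => hr₁ hp.1) (fun p hp => hr₂ hp.2) hγ hU
  · exact M₂.axis.exists_isIntegralCurveOnBDE H₂ H₁ hkV (fun p hp => krel p (hsub₂ hp.1))
      (fun p hp => hr₂ hp.1) (fun p hp => hr₁ hp.2) hγ hV

open Topology in
lemma exists_leafMatch_of_eventually {g₁ g₂ : ℝ → ℝ → ℝ} {r₁ r₂ : ℝ} {θ : ℝ ≃o ℝ} (hr₁ : 0 < r₁)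
    (hθ : θ 0 = 0) (hax : AxisCompatible g₁ g₂ θ)
    (h : ∀ᶠ p : ℝ × ℝ in 𝓝 0, p.1 ∈ Icc 0 r₁ → ∃ x' ∈ Icc 0 r₂, ∃ y',
      leafCoords g₂ r₂ x' y' = mapLeafCoords θ (leafCoords g₁ r₁ p.1 p.2)) :
    ∃ δ, LeafMatch g₁ r₁ g₂ r₂ θ δ := by
  obtain ⟨η, hη, hsub⟩ := Metric.nhds_basis_closedBall.eventually_iff.1 h
  refine ⟨min η r₁, lt_min hη hr₁, min_le_right _ _, hθ, hax, fun x hx y hy => ?_⟩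
  have hmem : (x, y) ∈ Metric.closedBall (0 : ℝ × ℝ) η := by
    rw [mem_closedBall_zero_iff, Prod.norm_mk]
    refine max_le ?_ ?_
    · exact (abs_of_nonneg hx.1).trans_le (hx.2.trans (min_le_left _ _))
    · exact (abs_le.2 hy).trans (min_le_left _ _)
  exact hsub hmem ⟨hx.1, hx.2.trans (min_le_right _ _)⟩

namespace IsAdmissible

section

variable {g : ℝ → ℝ → ℝ} {r e : ℝ}

open Topology in
lemma tendsto_leaf_pair (H : IsAdmissible g r e) :
    Tendsto (fun p : ℝ × ℝ => (leaf g r 1 p.1 p.2 0, leaf g r (-1) p.1 p.2 0)) (𝓝 0) (𝓝 0) := by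
  have hcont := (H.continuous_leaf_apply_zero (σ := 1) (by simp)).prodMk
    (H.continuous_leaf_apply_zero (σ := -1) (by simp))
  simpa only [Prod.fst_zero, Prod.snd_zero, H.leaf_self, ← Prod.zero_eq_mk] using hcont.tendsto 0

end

/-! ## Matching when `g` increases with `|x|` -/

section Increasing

variable {g g₁ g₂ : ℝ → ℝ → ℝ} {r r₁ r₂ a b c : ℝ}

lemma exists_leafCoords_eq_of_lt (H : IsAdmissible g r 1) (hab : a < b)
    (hr : leaf g r (-1) 0 b r < leaf g r 1 0 a r) :
    ∃ x ∈ Icc 0 r, ∃ y, leafCoords g r x y = (a, b, 0) := by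
  have hcont : Continuous fun x => leaf g r 1 0 a x - leaf g r (-1) 0 b x :=
    (H.continuous_leaf_right (by simp) 0 a).sub (H.continuous_leaf_right (by simp) 0 b)
  obtain ⟨x, hx, hmeet⟩ : (0 : ℝ) ∈ (fun x => leaf g r 1 0 a x - leaf g r (-1) 0 b x) '' Icc 0 r :=
    intermediate_value_Icc H.pos.le hcont.continuousOn
      ⟨by simpa only [H.leaf_self, sub_nonpos] using hab.le, sub_nonneg.2 hr.le⟩
  have hrise : leaf g r 1 x (leaf g r 1 0 a x) 0 = a := by
    rw [H.leaf_leaf (by simp), H.leaf_self]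
  have hfall : leaf g r (-1) x (leaf g r 1 0 a x) 0 = b := by
    rw [sub_eq_zero.1 hmeet, H.leaf_leaf (by simp), H.leaf_self]
  have hpos : 0 ≤ g x (leaf g r 1 0 a x) := by
    by_contra! hneg
    have hzero : (0 : ℝ) ∈ Icc 0 x := left_mem_Icc.2 hx.1
    rw [H.leaf_eq_of_nonpos_left (by simp) hx hneg.le hzero] at hrise hfall
    exact hab.ne (hrise.symm.trans hfall)
  exact ⟨x, hx, leaf g r 1 0 a x, by rw [leafCoords, hrise, hfall, max_eq_right (by linarith)]⟩

lemma exists_leafCoords_eq_self (H : IsAdmissible g r 1) (hc : 0 ≤ c) (h₀ : g 0 a ≤ -c)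
    (hr : -c ≤ g r a) : ∃ x ∈ Icc 0 r, ∃ y, leafCoords g r x y = (a, a, c) := by
  have hcont : Continuous fun x => g x a :=
    H.continuous.comp (continuous_id.prodMk continuous_const)
  obtain ⟨x, hx, hgx : g x a = -c⟩ := intermediate_value_Icc H.pos.le hcont.continuousOn ⟨h₀, hr⟩
  have hnonpos : g x a ≤ 0 := hgx.trans_le (neg_nonpos.2 hc)
  have hzero : (0 : ℝ) ∈ Icc 0 x := left_mem_Icc.2 hx.1
  refine ⟨x, hx, a, ?_⟩
  rw [leafCoords, H.leaf_eq_of_nonpos_left (by simp) hx hnonpos hzero,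
    H.leaf_eq_of_nonpos_left (by simp) hx hnonpos hzero, hgx, neg_neg, max_eq_left hc]

lemma exists_leafCoords_eq_of_increasing (H₁ : IsAdmissible g₁ r₁ 1) (H₂ : IsAdmissible g₂ r₂ 1)
    (hax : ∀ a, g₁ 0 a = g₂ 0 a) {x y : ℝ} (hx : x ∈ Icc 0 r₁)
    (hpos : 0 < g₂ r₂ (leaf g₁ r₁ 1 x y 0))
    (hlt : leaf g₂ r₂ (-1) 0 (leaf g₁ r₁ (-1) x y 0) r₂ < leaf g₂ r₂ 1 0 (leaf g₁ r₁ 1 x y 0) r₂) :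
    ∃ x' ∈ Icc 0 r₂, ∃ y', leafCoords g₂ r₂ x' y' = leafCoords g₁ r₁ x y := by
  rcases hx.1.eq_or_lt with rfl | hx₀
  · exact ⟨0, left_mem_Icc.2 H₂.pos.le, y, by
      rw [H₁.leafCoords_zero, H₂.leafCoords_zero, hax]⟩
  rcases le_or_gt (g₁ x y) 0 with hnonpos | hg
  · have hleaf {σ : ℝ} (hσ : |σ| ≤ 1) : leaf g₁ r₁ σ x y 0 = y :=
      H₁.leaf_eq_of_nonpos_left hσ hx hnonpos (left_mem_Icc.2 hx.1)
    rw [hleaf (by simp)] at hpos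
    have hmono := H₁.mono 0 x y le_rfl hx.1 hx.2
    rw [leafCoords, hleaf (by simp), hleaf (by simp), max_eq_left (neg_nonneg.2 hnonpos)]
    refine H₂.exists_leafCoords_eq_self (neg_nonneg.2 hnonpos) ?_ (by linarith)
    rw [← hax, neg_neg]
    nlinarith
  · rw [leafCoords, max_eq_right (by linarith)]
    exact H₂.exists_leafCoords_eq_of_lt
      ((H₁.leaf_one_lt_of_pos hx₀ hx.2 hg).trans_le (H₁.le_leaf_neg_one y hx.1)) hlt

open Topology in
theorem exists_leafMatch_refl_of_increasing (H₁ : IsAdmissible g₁ r₁ 1)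
    (H₂ : IsAdmissible g₂ r₂ 1) (hax : ∀ a, g₁ 0 a = g₂ 0 a) (h₀ : 0 ≤ g₁ 0 0) :
    ∃ δ, LeafMatch g₁ r₁ g₂ r₂ (OrderIso.refl ℝ) δ := by
  have hpos : 0 < g₂ r₂ 0 := by
    have hmono := H₂.mono 0 r₂ 0 le_rfl H₂.pos.le le_rfl
    rw [← hax] at hmono
    nlinarith [H₂.pos]
  have hlt : leaf g₂ r₂ (-1) 0 0 r₂ < leaf g₂ r₂ 1 0 0 r₂ :=
    (H₂.leaf_neg_one_le 0 H₂.pos.le).trans_lt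
      (H₂.lt_leaf_one_of_pos le_rfl H₂.pos le_rfl (right_mem_Icc.2 H₂.pos.le) hpos)
  have hev : ∀ᶠ q : ℝ × ℝ in 𝓝 0,
      0 < g₂ r₂ q.1 ∧ leaf g₂ r₂ (-1) 0 q.2 r₂ < leaf g₂ r₂ 1 0 q.1 r₂ := by
    have hcont : Continuous fun q : ℝ × ℝ => g₂ r₂ q.1 :=
      H₂.continuous.comp (continuous_const.prodMk continuous_fst)
    have hfall := (H₂.continuous_leaf_middle (σ := -1) (by simp) 0 r₂).comp
      (continuous_snd (X := ℝ) (Y := ℝ))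
    have hrise := (H₂.continuous_leaf_middle (σ := 1) (by simp) 0 r₂).comp
      (continuous_fst (X := ℝ) (Y := ℝ))
    exact ((hcont.tendsto 0).eventually_const_lt hpos).and
      (hfall.continuousAt.eventually_lt hrise.continuousAt hlt)
  refine exists_leafMatch_of_eventually H₁.pos rfl (fun a _ => hax a) ?_
  filter_upwards [H₁.tendsto_leaf_pair.eventually hev] with p hp hx
  exact H₁.exists_leafCoords_eq_of_increasing H₂ hax hx hp.1 hp.2

end Increasing

end IsAdmissible

/-! ## Matching when `g` decreases with `|x|` -/

/-- The height at which the broken leaf made of the rising leaf from `(0, a)` up to abscissa `x`,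
followed by the falling leaf back from there, returns to the axis `x = 0`. -/
def returnMap (g : ℝ → ℝ → ℝ) (r x a : ℝ) : ℝ := leaf g r (-1) x (leaf g r 1 0 a x) 0

namespace IsAdmissible

section

variable {g : ℝ → ℝ → ℝ} {r e : ℝ}

lemma continuous_returnMap_left (H : IsAdmissible g r e) (a : ℝ) :
    Continuous fun x => returnMap g r x a :=
  (H.continuous_leaf_apply_zero (by simp)).comp
    (continuous_id.prodMk (H.continuous_leaf_right (by simp) 0 a))

lemma continuous_returnMap_right (H : IsAdmissible g r e) (x : ℝ) :
    Continuous (returnMap g r x) :=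
  (H.continuous_leaf_middle (by simp) x 0).comp (H.continuous_leaf_middle (by simp) 0 x)

lemma returnMap_zero (H : IsAdmissible g r e) (a : ℝ) : returnMap g r 0 a = a := by
  rw [returnMap, H.leaf_self, H.leaf_self]

lemma returnMap_leaf_one (H : IsAdmissible g r e) (x y : ℝ) :
    returnMap g r x (leaf g r 1 x y 0) = leaf g r (-1) x y 0 := by
  rw [returnMap, ← H.eq_leaf_of_leaf_eq (by simp) rfl]

lemma monotone_returnMap_left (H : IsAdmissible g r e) (a : ℝ) :
    Monotone fun x => returnMap g r x a := fun x x' hxx' => by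
  simp only [returnMap]
  rw [← H.leaf_leaf (σ := -1) (by simp) x' (leaf g r 1 0 a x') x 0]
  exact (H.strictMono_leaf (by simp) x 0).monotone
    ((H.monotone_leaf 0 a hxx').trans (H.le_leaf_neg_one _ hxx'))

lemma strictMono_returnMap (H : IsAdmissible g r e) (x : ℝ) : StrictMono (returnMap g r x) :=
  (H.strictMono_leaf (by simp) x 0).comp (H.strictMono_leaf (by simp) 0 x)

/-- The full return map `returnMap g r r` as a homeomorphism of the axis. -/
def returnIso (H : IsAdmissible g r e) : ℝ ≃o ℝ :=
  (H.strictMono_returnMap r).orderIsoOfRightInverse _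
    (fun b => leaf g r 1 r (leaf g r (-1) 0 b r) 0) fun b => by
      rw [H.returnMap_leaf_one, H.leaf_leaf (by simp), H.leaf_self]

@[simp]
lemma returnIso_apply (H : IsAdmissible g r e) (a : ℝ) : H.returnIso a = returnMap g r r a := rfl

end

section Decreasing

variable {g g₁ g₂ : ℝ → ℝ → ℝ} {r r₁ r₂ a b c x y : ℝ}

lemma returnMap_eq_of_nonpos (H : IsAdmissible g r (-1)) (hx : x ∈ Icc 0 r)
    (h : g x (leaf g r 1 0 a x) ≤ 0) : returnMap g r x a = returnMap g r r a := by
  have hr : r ∈ Icc x r := right_mem_Icc.2 hx.2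
  have hrise := H.leaf_eq_of_nonpos_right (σ := 1) (by simp) hx h hr
  rw [H.leaf_leaf (by simp)] at hrise
  have hfall := H.leaf_eq_of_nonpos_right (σ := -1) (by simp) hx h hr
  rw [returnMap, returnMap, hrise]
  conv_rhs => rw [← hfall, H.leaf_leaf (by simp)]

lemma returnMap_eq_self (H : IsAdmissible g r (-1)) (h : g 0 a ≤ 0) : returnMap g r r a = a := by
  rw [← H.returnMap_eq_of_nonpos (left_mem_Icc.2 H.pos.le) (by rwa [H.leaf_self]),
    H.returnMap_zero]

lemma lt_returnMap {e : ℝ} (H : IsAdmissible g r e) (h : 0 < g 0 a) : a < returnMap g r r a :=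
  (H.lt_leaf_one_of_pos le_rfl H.pos le_rfl (left_mem_Icc.2 H.pos.le) h).trans_le
    (H.le_leaf_neg_one _ H.pos.le)

lemma exists_leafCoords_eq_of_lt_returnMap (H : IsAdmissible g r (-1)) (hab : a ≤ b)
    (hb : b < returnMap g r r a) : ∃ x ∈ Icc 0 r, ∃ y, leafCoords g r x y = (a, b, 0) := by
  obtain ⟨x, hx, hxb : returnMap g r x a = b⟩ := intermediate_value_Icc H.pos.le
    (H.continuous_returnMap_left a).continuousOn ⟨by rwa [H.returnMap_zero], hb.le⟩
  have hg : 0 < g x (leaf g r 1 0 a x) := by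
    by_contra! hnonpos
    exact hb.ne (hxb.symm.trans (H.returnMap_eq_of_nonpos hx hnonpos))
  refine ⟨x, hx, leaf g r 1 0 a x, ?_⟩
  rw [leafCoords, H.leaf_leaf (by simp), H.leaf_self, max_eq_right (by linarith), ← hxb, returnMap]

lemma exists_leafCoords_eq_returnMap (H : IsAdmissible g r (-1)) (hc : 0 ≤ c) (h₀ : -c ≤ g 0 a)
    (hr : g r (leaf g r 1 0 a r) ≤ -c) :
    ∃ x ∈ Icc 0 r, ∃ y, leafCoords g r x y = (a, returnMap g r r a, c) := by
  have hcont : Continuous fun x => g x (leaf g r 1 0 a x) :=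
    H.continuous.comp (continuous_id.prodMk (H.continuous_leaf_right (by simp) 0 a))
  obtain ⟨x, hx, hgx : g x (leaf g r 1 0 a x) = -c⟩ := intermediate_value_Icc' H.pos.le
    hcont.continuousOn ⟨hr, by rwa [H.leaf_self]⟩
  refine ⟨x, hx, leaf g r 1 0 a x, ?_⟩
  rw [leafCoords, H.leaf_leaf (by simp), H.leaf_self, hgx, neg_neg, max_eq_left hc,
    ← H.returnMap_eq_of_nonpos hx (by linarith), returnMap]

lemma neg_max_le_apply_zero (H : IsAdmissible g r (-1)) (hx : x ∈ Icc 0 r) :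
    -max (-g x y) 0 ≤ g 0 (leaf g r 1 x y 0) := by
  rcases le_or_gt 0 (g 0 (leaf g r 1 x y 0)) with hnonneg | hneg
  · exact (neg_nonpos.2 (le_max_right _ _)).trans hnonneg
  have hy : leaf g r 1 x y 0 = y := by
    conv_rhs => rw [H.eq_leaf_of_leaf_eq (σ := 1) (x := x) (y := y) (by simp) rfl]
    exact (H.leaf_eq_of_nonpos_right (by simp) (left_mem_Icc.2 H.pos.le) hneg.le hx).symm
  rw [hy]
  have hmono := H.mono 0 x y le_rfl hx.1 hx.2
  nlinarith [le_max_left (-g x y) 0]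

open Topology in
theorem exists_leafMatch_refl_of_pos (H₁ : IsAdmissible g₁ r₁ (-1)) (H₂ : IsAdmissible g₂ r₂ (-1))
    (hax : ∀ a, g₁ 0 a = g₂ 0 a) (h₀ : 0 < g₁ 0 0) :
    ∃ δ, LeafMatch g₁ r₁ g₂ r₂ (OrderIso.refl ℝ) δ := by
  have hpos : ∀ᶠ p : ℝ × ℝ in 𝓝 0, 0 < g₁ p.1 p.2 :=
    (H₁.continuous.tendsto 0).eventually_const_lt h₀
  have hlt : ∀ᶠ q : ℝ × ℝ in 𝓝 0, q.2 < returnMap g₂ r₂ r₂ q.1 :=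
    continuous_snd.continuousAt.eventually_lt
      ((H₂.continuous_returnMap_right r₂).comp continuous_fst).continuousAt
      (H₂.lt_returnMap (hax 0 ▸ h₀))
  refine exists_leafMatch_of_eventually H₁.pos rfl (fun a _ => hax a) ?_
  filter_upwards [hpos, H₁.tendsto_leaf_pair.eventually hlt] with p hp hlt hx
  rw [leafCoords, max_eq_right (by linarith)]
  exact H₂.exists_leafCoords_eq_of_lt_returnMap
    ((H₁.leaf_one_le _ hx.1).trans (H₁.le_leaf_neg_one _ hx.1)) hlt

lemma exists_leafCoords_eq_of_conj (H₁ : IsAdmissible g₁ r₁ (-1)) (H₂ : IsAdmissible g₂ r₂ (-1))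
    {θ : ℝ ≃o ℝ} (hax : AxisCompatible g₁ g₂ θ)
    (hconj : ∀ a, θ (returnMap g₁ r₁ r₁ a) = returnMap g₂ r₂ r₂ (θ a)) (hx : x ∈ Icc 0 r₁)
    (hr : g₂ r₂ (leaf g₂ r₂ 1 0 (θ (leaf g₁ r₁ 1 x y 0)) r₂) < -max (-g₁ x y) 0) :
    ∃ x' ∈ Icc 0 r₂, ∃ y', leafCoords g₂ r₂ x' y' = mapLeafCoords θ (leafCoords g₁ r₁ x y) := by
  have hle : leaf g₁ r₁ (-1) x y 0 ≤ returnMap g₁ r₁ r₁ (leaf g₁ r₁ 1 x y 0) := by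
    rw [← H₁.returnMap_leaf_one]
    exact H₁.monotone_returnMap_left _ hx.2
  rw [leafCoords, mapLeafCoords]
  rcases hle.eq_or_lt with heq | hlt
  · dsimp only
    rw [heq, hconj]
    refine H₂.exists_leafCoords_eq_returnMap (le_max_right _ _) ?_ hr.le
    by_cases h : g₂ 0 (θ (leaf g₁ r₁ 1 x y 0)) ≤ 0
    · exact (H₁.neg_max_le_apply_zero hx).trans_eq (hax _ (Or.inr h))
    · exact (neg_nonpos.2 (le_max_right _ _)).trans (not_le.1 h).le
  · have hg : 0 < g₁ x y := by
      by_contra! hnonpos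
      rw [← H₁.returnMap_leaf_one] at hlt
      refine hlt.ne (H₁.returnMap_eq_of_nonpos hx ?_)
      rwa [← H₁.eq_leaf_of_leaf_eq (by simp) rfl]
    rw [max_eq_right (by linarith)]
    refine H₂.exists_leafCoords_eq_of_lt_returnMap
      (θ.monotone ((H₁.leaf_one_le _ hx.1).trans (H₁.le_leaf_neg_one _ hx.1))) ?_
    rw [← hconj]
    exact θ.strictMono hlt

open Topology in
theorem exists_leafMatch_of_conj (H₁ : IsAdmissible g₁ r₁ (-1)) (H₂ : IsAdmissible g₂ r₂ (-1))
    {θ : ℝ ≃o ℝ} (hθ : θ 0 = 0) (hax : AxisCompatible g₁ g₂ θ) (h₀ : g₁ 0 0 = 0)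
    (hconj : ∀ a, θ (returnMap g₁ r₁ r₁ a) = returnMap g₂ r₂ r₂ (θ a)) :
    ∃ δ, LeafMatch g₁ r₁ g₂ r₂ θ δ := by
  have h₀' : g₂ 0 0 = 0 := (hθ ▸ hax 0 (Or.inl h₀.le)).symm.trans h₀
  have hleaf : leaf g₂ r₂ 1 0 0 r₂ = 0 := H₂.leaf_eq_of_nonpos_right (by simp)
    (left_mem_Icc.2 H₂.pos.le) h₀'.le (right_mem_Icc.2 H₂.pos.le)
  have hneg : g₂ r₂ 0 < 0 := by
    have hmono := H₂.mono 0 r₂ 0 le_rfl H₂.pos.le le_rfl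
    nlinarith [H₂.pos]
  have hcont : Continuous fun p : ℝ × ℝ =>
      g₂ r₂ (leaf g₂ r₂ 1 0 (θ (leaf g₁ r₁ 1 p.1 p.2 0)) r₂) :=
    H₂.continuous.comp (continuous_const.prodMk ((H₂.continuous_leaf_middle (by simp) 0 r₂).comp
      (θ.continuous.comp (H₁.continuous_leaf_apply_zero (by simp)))))
  have hev : ∀ᶠ p : ℝ × ℝ in 𝓝 0,
      g₂ r₂ (leaf g₂ r₂ 1 0 (θ (leaf g₁ r₁ 1 p.1 p.2 0)) r₂) < -max (-g₁ p.1 p.2) 0 :=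
    hcont.continuousAt.eventually_lt (H₁.continuous.neg.max continuous_const).neg.continuousAt
      (by simpa [Function.uncurry, h₀, H₁.leaf_self, hθ, hleaf] using hneg)
  refine exists_leafMatch_of_eventually H₁.pos hθ hax ?_
  filter_upwards [hev] with p hp hx
  exact H₁.exists_leafCoords_eq_of_conj H₂ hax hconj hx hp

end Decreasing

end IsAdmissible

/-! ## Conjugacy of increasing homeomorphisms -/

section Translation

variable {ρ : ℝ ≃o ℝ}

lemma orderIso_zpow_add_one_apply (ρ : ℝ ≃o ℝ) (n : ℤ) (a : ℝ) :
    (ρ ^ (n + 1)) a = ρ ((ρ ^ n) a) := by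
  rw [add_comm, zpow_one_add, RelIso.mul_apply]

lemma strictMono_orderIso_zpow_apply (hρ : ∀ a, a < ρ a) (a : ℝ) :
    StrictMono fun n : ℤ => (ρ ^ n) a :=
  strictMono_int_of_lt_succ fun n => by
    rw [orderIso_zpow_add_one_apply]
    exact hρ _

-- A bound of an orbit would give a fixed point, its supremum or infimum.
lemma exists_lt_orderIso_zpow_apply (hρ : ∀ a, a < ρ a) (a b : ℝ) : ∃ n : ℤ, b < (ρ ^ n) a := by
  by_contra! hle
  have hbdd : BddAbove (range fun n : ℤ => (ρ ^ n) a) := ⟨b, forall_mem_range.2 hle⟩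
  have hfix : ρ (⨆ n : ℤ, (ρ ^ n) a) = ⨆ n : ℤ, (ρ ^ n) a := by
    rw [ρ.map_ciSup hbdd]
    simp_rw [← orderIso_zpow_add_one_apply]
    exact (Equiv.addRight (1 : ℤ)).surjective.iSup_comp fun n : ℤ => (ρ ^ n) a
  exact (hρ _).ne' hfix

lemma exists_orderIso_zpow_apply_lt (hρ : ∀ a, a < ρ a) (a b : ℝ) : ∃ n : ℤ, (ρ ^ n) a < b := by
  by_contra! hle
  have hbdd : BddBelow (range fun n : ℤ => (ρ ^ n) a) := ⟨b, forall_mem_range.2 hle⟩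
  have hfix : ρ (⨅ n : ℤ, (ρ ^ n) a) = ⨅ n : ℤ, (ρ ^ n) a := by
    rw [ρ.map_ciInf hbdd]
    simp_rw [← orderIso_zpow_add_one_apply]
    exact (Equiv.addRight (1 : ℤ)).surjective.iInf_comp fun n : ℤ => (ρ ^ n) a
  exact (hρ _).ne' hfix

lemma exists_mem_Ico_orderIso_zpow_apply (hρ : ∀ a, a < ρ a) (a b : ℝ) :
    ∃ n : ℤ, b ∈ Ico ((ρ ^ n) a) ((ρ ^ (n + 1)) a) := by
  obtain ⟨N, hN⟩ := exists_lt_orderIso_zpow_apply hρ a b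
  obtain ⟨m, hm⟩ := exists_orderIso_zpow_apply_lt hρ a b
  obtain ⟨n, hn, hmax⟩ := Int.exists_greatest_of_bdd (P := fun n : ℤ => (ρ ^ n) a ≤ b)
    ⟨N, fun z hz => ((strictMono_orderIso_zpow_apply hρ a).lt_iff_lt.1 (hz.trans_lt hN)).le⟩
    ⟨m, hm.le⟩
  exact ⟨n, hn, not_le.1 fun hle => (lt_add_one n).not_ge (hmax _ hle)⟩

/-- The solution `ψ` of Abel's equation `ψ (x + 1) = ρ (ψ x)` which maps `[0, 1]` affinely onto
the fundamental domain `[0, ρ 0]`. -/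
def abelMap (ρ : ℝ ≃o ℝ) (x : ℝ) : ℝ := (ρ ^ ⌊x⌋) (Int.fract x * ρ 0)

lemma abelMap_add_one (ρ : ℝ ≃o ℝ) (x : ℝ) : abelMap ρ (x + 1) = ρ (abelMap ρ x) := by
  rw [abelMap, abelMap, Int.floor_add_one, Int.fract_add_one, orderIso_zpow_add_one_apply]

lemma abelMap_mem_Ico (hρ : ∀ a, a < ρ a) (x : ℝ) :
    abelMap ρ x ∈ Ico ((ρ ^ ⌊x⌋) 0) ((ρ ^ (⌊x⌋ + 1)) 0) := by
  refine ⟨(ρ ^ ⌊x⌋).monotone (mul_nonneg (Int.fract_nonneg x) (hρ 0).le), ?_⟩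
  rw [zpow_add_one, RelIso.mul_apply]
  exact (ρ ^ ⌊x⌋).strictMono (mul_lt_of_lt_one_left (hρ 0) (Int.fract_lt_one x))

lemma strictMono_abelMap (hρ : ∀ a, a < ρ a) : StrictMono (abelMap ρ) := by
  intro x y hxy
  rcases (Int.floor_mono hxy.le).eq_or_lt with hfloor | hfloor
  · have hfract : Int.fract x < Int.fract y := by
      rw [Int.fract, Int.fract, hfloor]
      exact sub_lt_sub_right hxy _
    rw [abelMap, abelMap, hfloor]
    exact (ρ ^ ⌊y⌋).strictMono (mul_lt_mul_of_pos_right hfract (hρ 0))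
  · calc abelMap ρ x < (ρ ^ (⌊x⌋ + 1)) 0 := (abelMap_mem_Ico hρ x).2
      _ ≤ (ρ ^ ⌊y⌋) 0 :=
        (strictMono_orderIso_zpow_apply hρ 0).monotone (Int.add_one_le_of_lt hfloor)
      _ ≤ abelMap ρ y := (abelMap_mem_Ico hρ y).1

lemma surjective_abelMap (hρ : ∀ a, a < ρ a) : Function.Surjective (abelMap ρ) := by
  intro b
  obtain ⟨n, hn⟩ := exists_mem_Ico_orderIso_zpow_apply hρ 0 b
  obtain ⟨c, rfl⟩ := (ρ ^ n).surjective b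
  rw [zpow_add_one, RelIso.mul_apply, mem_Ico, OrderIso.le_iff_le, OrderIso.lt_iff_lt] at hn
  have hs : c / ρ 0 ∈ Ico (0 : ℝ) 1 := ⟨div_nonneg hn.1 (hρ 0).le, (div_lt_one (hρ 0)).2 hn.2⟩
  refine ⟨n + c / ρ 0, ?_⟩
  rw [abelMap, Int.floor_intCast_add, Int.fract_intCast_add, Int.floor_eq_zero_iff.2 hs, add_zero,
    Int.fract_eq_self.2 hs, div_mul_cancel₀ _ (hρ 0).ne']

theorem exists_orderIso_add_one_eq (hρ : ∀ a, a < ρ a) :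
    ∃ ψ : ℝ ≃o ℝ, ∀ x, ψ (x + 1) = ρ (ψ x) :=
  ⟨(strictMono_abelMap hρ).orderIsoOfSurjective _ (surjective_abelMap hρ), abelMap_add_one ρ⟩

end Translation

lemma exists_conj_of_forall_lt {α : Type*} [Preorder α] (E : ℝ ≃o α) {ρ₁ ρ₂ : α ≃o α}
    (h₁ : ∀ a, a < ρ₁ a) (h₂ : ∀ a, a < ρ₂ a) : ∃ θ : α ≃o α, ∀ a, θ (ρ₁ a) = ρ₂ (θ a) := by
  have hlift {ρ : α ≃o α} (hρ : ∀ a, a < ρ a) :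
      ∃ ψ : ℝ ≃o α, ∀ x, ψ (x + 1) = ρ (ψ x) := by
    obtain ⟨ψ, hψ⟩ := exists_orderIso_add_one_eq (ρ := (E.trans ρ).trans E.symm)
      fun a => E.lt_symm_apply.2 (hρ (E a))
    exact ⟨ψ.trans E, fun x => by simp [hψ]⟩
  obtain ⟨ψ₁, hψ₁⟩ := hlift h₁
  obtain ⟨ψ₂, hψ₂⟩ := hlift h₂
  refine ⟨ψ₁.symm.trans ψ₂, fun a => ?_⟩
  obtain ⟨x, rfl⟩ := ψ₁.surjective a
  simp only [← hψ₁, OrderIso.trans_apply, OrderIso.symm_apply_apply, hψ₂]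

lemma apply_mem_iff_of_forall_notMem_eq {α : Type*} {S : Set α} {f : α ≃ α}
    (hf : ∀ a ∉ S, f a = a) (a : α) : f a ∈ S ↔ a ∈ S := by
  by_cases ha : a ∈ S
  · refine iff_of_true (by_contra fun hfa => hfa ?_) ha
    rwa [f.injective (hf _ hfa)]
  · rw [hf a ha]

section Extension

variable {α : Type*} [LinearOrder α] {S : Set α}

open Classical in
lemma strictMono_ofSubtype (hS : S.OrdConnected) (θ : S ≃o S) :
    StrictMono (Equiv.Perm.ofSubtype θ.toEquiv) := by
  intro a b hab
  by_cases ha : a ∈ S <;> by_cases hb : b ∈ S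
  · rw [Equiv.Perm.ofSubtype_apply_of_mem _ ha, Equiv.Perm.ofSubtype_apply_of_mem _ hb]
    exact θ.strictMono (Subtype.mk_lt_mk.2 hab)
  · rw [Equiv.Perm.ofSubtype_apply_of_mem _ ha, Equiv.Perm.ofSubtype_apply_of_not_mem _ hb]
    exact not_le.1 fun hle => hb (hS.out ha (θ ⟨a, ha⟩).2 ⟨hab.le, hle⟩)
  · rw [Equiv.Perm.ofSubtype_apply_of_not_mem _ ha, Equiv.Perm.ofSubtype_apply_of_mem _ hb]
    exact not_le.1 fun hle => ha (hS.out (θ ⟨b, hb⟩).2 hb ⟨hle, hab.le⟩)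
  · rwa [Equiv.Perm.ofSubtype_apply_of_not_mem _ ha, Equiv.Perm.ofSubtype_apply_of_not_mem _ hb]

open Classical in
theorem exists_conj_of_forall_mem_lt (hS : S.OrdConnected) (E : ℝ ≃o S) {ρ₁ ρ₂ : α ≃o α}
    (h₁ : ∀ a ∈ S, a < ρ₁ a) (h₂ : ∀ a ∈ S, a < ρ₂ a) (hfix₁ : ∀ a ∉ S, ρ₁ a = a)
    (hfix₂ : ∀ a ∉ S, ρ₂ a = a) :
    ∃ θ : α ≃o α, (∀ a ∉ S, θ a = a) ∧ (∀ a ∈ S, θ a ∈ S) ∧ ∀ a, θ (ρ₁ a) = ρ₂ (θ a) := by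
  let restrict (ρ : α ≃o α) (hfix : ∀ a ∉ S, ρ a = a) : S ≃o S :=
    { Equiv.Perm.subtypePerm ρ.toEquiv (apply_mem_iff_of_forall_notMem_eq hfix) with
      map_rel_iff' := ρ.le_iff_le }
  have hrestrict (ρ : α ≃o α) (hfix : ∀ a ∉ S, ρ a = a) :
      Equiv.Perm.ofSubtype (restrict ρ hfix).toEquiv = ρ.toEquiv :=
    Equiv.Perm.ofSubtype_subtypePerm (apply_mem_iff_of_forall_notMem_eq hfix)
      fun a hne => by_contra fun ha => hne (hfix a ha)
  obtain ⟨θ, hθ⟩ := exists_conj_of_forall_lt E (ρ₁ := restrict ρ₁ hfix₁) (ρ₂ := restrict ρ₂ hfix₂)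
    (fun a => h₁ a a.2) (fun a => h₂ a a.2)
  have hθ' : θ.toEquiv * (restrict ρ₁ hfix₁).toEquiv = (restrict ρ₂ hfix₂).toEquiv * θ.toEquiv :=
    Equiv.ext hθ
  have hconj := congrArg Equiv.Perm.ofSubtype hθ'
  rw [map_mul, map_mul, hrestrict ρ₁ hfix₁, hrestrict ρ₂ hfix₂] at hconj
  refine ⟨(strictMono_ofSubtype hS θ).orderIsoOfSurjective _ (Equiv.surjective _),
    fun a ha => Equiv.Perm.ofSubtype_apply_of_not_mem _ ha,
    fun a ha => (Equiv.Perm.ofSubtype_apply_mem_iff_mem _ a).2 ha, DFunLike.congr_fun hconj⟩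

end Extension

/-! ## Topological equivalence of normal forms -/

namespace IsAdmissible

variable {g₁ g₂ : ℝ → ℝ → ℝ} {r₁ r₂ : ℝ}

theorem topEquivAt0_of_increasing (H₁ : IsAdmissible g₁ r₁ 1) (H₂ : IsAdmissible g₂ r₂ 1)
    (hax : ∀ a, g₁ 0 a = g₂ 0 a) (h₀ : 0 ≤ g₁ 0 0) :
    TopEquivAt0 (normalForm g₁) (normalForm g₂) := by
  obtain ⟨δ₁, M₁⟩ := H₁.exists_leafMatch_refl_of_increasing H₂ hax h₀
  obtain ⟨δ₂, M₂⟩ := H₂.exists_leafMatch_refl_of_increasing H₁ (fun a => (hax a).symm) (hax 0 ▸ h₀)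
  exact M₁.topEquivAt0 M₂ H₁ H₂

theorem topEquivAt0_of_decreasing_of_pos (H₁ : IsAdmissible g₁ r₁ (-1))
    (H₂ : IsAdmissible g₂ r₂ (-1)) (hax : ∀ a, g₁ 0 a = g₂ 0 a) (h₀ : 0 < g₁ 0 0) :
    TopEquivAt0 (normalForm g₁) (normalForm g₂) := by
  obtain ⟨δ₁, M₁⟩ := H₁.exists_leafMatch_refl_of_pos H₂ hax h₀
  obtain ⟨δ₂, M₂⟩ := H₂.exists_leafMatch_refl_of_pos H₁ (fun a => (hax a).symm) (hax 0 ▸ h₀)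
  exact M₁.topEquivAt0 M₂ H₁ H₂

theorem topEquivAt0_of_decreasing_of_eq_zero (H₁ : IsAdmissible g₁ r₁ (-1))
    (H₂ : IsAdmissible g₂ r₂ (-1)) (hax : ∀ a, g₁ 0 a = g₂ 0 a) (h₀ : g₁ 0 0 = 0)
    (hS : {a | 0 < g₁ 0 a}.OrdConnected) (E : ℝ ≃o {a | 0 < g₁ 0 a}) :
    TopEquivAt0 (normalForm g₁) (normalForm g₂) := by
  obtain ⟨θ, hfix, hmem, hconj⟩ := exists_conj_of_forall_mem_lt hS E (ρ₁ := H₁.returnIso)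
    (ρ₂ := H₂.returnIso) (fun a ha => H₁.lt_returnMap ha)
    (fun a ha => H₂.lt_returnMap (ha.trans_eq (hax a)))
    (fun a ha => H₁.returnMap_eq_self (not_lt.1 ha))
    (fun a ha => H₂.returnMap_eq_self ((hax a).ge.trans (not_lt.1 ha)))
  have hθ : θ 0 = 0 := hfix 0 h₀.not_gt
  have hax' : AxisCompatible g₁ g₂ θ := fun a ha => by
    by_cases hpos : 0 < g₁ 0 a
    · exact (ha.elim hpos.not_ge ((hmem a hpos).trans_eq (hax _)).not_ge).elim
    · rw [hfix a hpos, hax]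
  obtain ⟨δ₁, M₁⟩ := H₁.exists_leafMatch_of_conj H₂ hθ hax' h₀ hconj
  obtain ⟨δ₂, M₂⟩ := H₂.exists_leafMatch_of_conj H₁ (θ.symm_apply_eq.2 hθ.symm) hax'.symm
    (hax 0 ▸ h₀) fun a => θ.symm_apply_eq.2 <| by
      rw [← H₁.returnIso_apply, hconj, θ.apply_symm_apply, H₂.returnIso_apply]
  exact M₁.topEquivAt0 M₂ H₁ H₂

end IsAdmissible

/-! ## Local homeomorphisms and integral curves -/

/-- `h` sends the trace of every integral curve of `ω` inside `U` to the trace of an integral curve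
of `Ω`: one of the two halves of `TopEquivAt0`. -/
def MapsIntegralCurves (ω Ω : (ℝ × ℝ) → (ℝ × ℝ) → ℝ) (h : ℝ × ℝ → ℝ × ℝ) (U : Set (ℝ × ℝ)) :
    Prop :=
  ∀ γ I, IsIntegralCurveOnBDE ω γ I → MapsTo γ I U →
    ∃ σ J, IsIntegralCurveOnBDE Ω σ J ∧ h '' (γ '' I) = σ '' J

section Transport

variable {ω Ω Λ : (ℝ × ℝ) → (ℝ × ℝ) → ℝ} {h k : ℝ × ℝ → ℝ × ℝ} {U V : Set (ℝ × ℝ)}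

lemma MapsIntegralCurves.comp (hk : MapsIntegralCurves Ω Λ k V) (hh : MapsIntegralCurves ω Ω h U) :
    MapsIntegralCurves ω Λ (k ∘ h) (U ∩ h ⁻¹' V) := by
  intro γ I hγ hmaps
  obtain ⟨σ, J, hσ, hσimage⟩ := hh γ I hγ fun t ht => (hmaps ht).1
  have hσV : MapsTo σ J V := mapsTo_iff_image_subset.2 <| by
    rw [← hσimage, image_subset_iff, image_subset_iff]
    exact fun t ht => (hmaps ht).2
  obtain ⟨τ, K, hτ, hτimage⟩ := hk σ J hσ hσV
  exact ⟨τ, K, hτ, by rw [image_comp, hσimage, hτimage]⟩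

lemma mapsIntegralCurves_of_contDiffOn (hU : IsOpen U) (hh : ContDiffOn ℝ 1 h U)
    (hω : ∀ p ∈ U, ∀ v, v ≠ 0 → ω p v = 0 → fderiv ℝ h p v ≠ 0 ∧ Ω (h p) (fderiv ℝ h p v) = 0) :
    MapsIntegralCurves ω Ω h U := by
  rintro γ I ⟨hI, dγ, hdγ, hγ⟩ hmaps
  refine ⟨h ∘ γ, I, ⟨hI, fun t => fderiv ℝ h (γ t) (dγ t), ?_, fun t ht => ?_⟩,
    (image_comp h γ I).symm⟩
  · have hγcont : ContinuousOn γ I := HasDerivAt.continuousOn fun t ht => (hγ t ht).1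
    exact ((hh.continuousOn_fderiv_of_isOpen hU le_rfl).comp hγcont hmaps).clm_apply hdγ
  · obtain ⟨hderiv, hne, hzero⟩ := hγ t ht
    have hdiff : DifferentiableAt ℝ h (γ t) :=
      (hh.differentiableOn one_ne_zero).differentiableAt (hU.mem_nhds (hmaps ht))
    exact ⟨hdiff.hasFDerivAt.comp_hasDerivAt t hderiv, hω _ (hmaps ht) _ hne hzero⟩

lemma topEquivAt0_iff_exists_openPartialHomeomorph :
    TopEquivAt0 ω Ω ↔ ∃ e : OpenPartialHomeomorph (ℝ × ℝ) (ℝ × ℝ), 0 ∈ e.source ∧ e 0 = 0 ∧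
      MapsIntegralCurves ω Ω e e.source ∧ MapsIntegralCurves Ω ω e.symm e.target := by
  constructor
  · rintro ⟨U, V, h, k, hU, hV, hU0, -, h0, hh, hk, hbij, hinv, hcurves, hcurves'⟩
    exact ⟨{
        toFun := h
        invFun := k
        source := U
        target := V
        map_source' := hbij.mapsTo
        map_target' := hinv.1.mapsTo hbij.surjOn
        left_inv' := hinv.1
        right_inv' := hinv.2
        open_source := hU
        open_target := hV
        continuousOn_toFun := hh
        continuousOn_invFun := hk }, hU0, h0, hcurves, hcurves'⟩
  · rintro ⟨e, hsource, h0, hcurves, hcurves'⟩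
    exact ⟨e.source, e.target, e, e.symm, e.open_source, e.open_target, hsource,
      h0 ▸ e.map_source hsource, h0, e.continuousOn, e.continuousOn_symm, e.bijOn, e.invOn,
      hcurves, hcurves'⟩

lemma TopEquivAt0.trans (h₁ : TopEquivAt0 ω Ω) (h₂ : TopEquivAt0 Ω Λ) : TopEquivAt0 ω Λ := by
  rw [topEquivAt0_iff_exists_openPartialHomeomorph] at *
  obtain ⟨e₁, hsource₁, hzero₁, hcurves₁, hcurves₁'⟩ := h₁
  obtain ⟨e₂, hsource₂, hzero₂, hcurves₂, hcurves₂'⟩ := h₂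
  have hsource : (0 : ℝ × ℝ) ∈ (e₁.trans e₂).source := by
    rw [e₁.trans_source]
    exact ⟨hsource₁, by rwa [mem_preimage, hzero₁]⟩
  refine ⟨e₁.trans e₂, hsource, by rw [e₁.trans_apply, hzero₁, hzero₂], ?_, ?_⟩
  · rw [e₁.coe_trans, e₁.trans_source]
    exact hcurves₂.comp hcurves₁
  · rw [e₁.coe_trans_symm, e₁.trans_target]
    exact hcurves₁'.comp hcurves₂'

end Transport

lemma fderiv_symm_fderiv_apply {E F : Type*} [NormedAddCommGroup E] [NormedSpace ℝ E]
    [NormedAddCommGroup F] [NormedSpace ℝ F] (e : OpenPartialHomeomorph E F) {p : E}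
    (hp : p ∈ e.source) (he : DifferentiableAt ℝ e p) (he' : DifferentiableAt ℝ e.symm (e p))
    (v : E) : fderiv ℝ e.symm (e p) (fderiv ℝ e p v) = v := by
  have hid : HasFDerivAt (e.symm ∘ e) (ContinuousLinearMap.id ℝ E) p :=
    (hasFDerivAt_id p).congr_of_eventuallyEq (e.eventually_left_inverse hp)
  exact DFunLike.congr_fun ((he'.hasFDerivAt.comp p he.hasFDerivAt).unique hid) v

section Equivalence

variable {ω Ω : (ℝ × ℝ) → (ℝ × ℝ) → ℝ} {U : Set (ℝ × ℝ)}

theorem topEquivAt0_of_diffeo (e : OpenPartialHomeomorph (ℝ × ℝ) (ℝ × ℝ)) (hsource : 0 ∈ e.source)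
    (hzero : e 0 = 0) (he : ContDiffOn ℝ 1 e e.source) (he' : ContDiffOn ℝ 1 e.symm e.target)
    (hω : ∀ p ∈ e.source, ∀ v, ω p v = 0 ↔ Ω (e p) (fderiv ℝ e p v) = 0) : TopEquivAt0 ω Ω := by
  have hdiff {p : ℝ × ℝ} (hp : p ∈ e.source) : DifferentiableAt ℝ e p :=
    (he.differentiableOn one_ne_zero).differentiableAt (e.open_source.mem_nhds hp)
  have hdiff' {q : ℝ × ℝ} (hq : q ∈ e.target) : DifferentiableAt ℝ e.symm q :=
    (he'.differentiableOn one_ne_zero).differentiableAt (e.open_target.mem_nhds hq)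
  have hinv {p : ℝ × ℝ} (hp : p ∈ e.source) := fderiv_symm_fderiv_apply e hp (hdiff hp)
    (hdiff' (e.map_source hp))
  have hinv' {q : ℝ × ℝ} (hq : q ∈ e.target) := fderiv_symm_fderiv_apply e.symm hq (hdiff' hq)
    (hdiff (e.map_target hq))
  refine topEquivAt0_iff_exists_openPartialHomeomorph.2 ⟨e, hsource, hzero,
    mapsIntegralCurves_of_contDiffOn e.open_source he fun p hp v hv hzero => ⟨fun hc => hv ?_,
      (hω p hp v).1 hzero⟩,
    mapsIntegralCurves_of_contDiffOn e.open_target he' fun q hq v hv hzero => ⟨fun hc => hv ?_,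
      (hω _ (e.map_target hq) _).2 ?_⟩⟩
  · rw [← hinv hp v, hc, map_zero]
  · rw [← hinv' hq v, hc, map_zero]
  · rw [e.right_inv hq]
    exact (congrArg (Ω q) (hinv' hq v)).trans hzero

lemma topEquivAt0_of_eventually_iff (h : ∀ᶠ p in nhds 0, ∀ v, ω p v = 0 ↔ Ω p v = 0) :
    TopEquivAt0 ω Ω := by
  obtain ⟨V, hV, hVopen, hV0⟩ := mem_nhds_iff.1 h
  refine topEquivAt0_of_diffeo (OpenPartialHomeomorph.ofSet V hVopen) hV0 rfl contDiffOn_id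
    contDiffOn_id fun p hp v => ?_
  simpa using hV hp v

end Equivalence

lemma normalForm_eq_zero_iff_of_neg {g : ℝ → ℝ → ℝ} {p : ℝ × ℝ} (hp : g |p.1| p.2 < 0)
    (v : ℝ × ℝ) : normalForm g p v = 0 ↔ v = 0 := by
  have hsum : normalForm g p v = v.2 ^ 2 + -g |p.1| p.2 * v.1 ^ 2 := by rw [normalForm]; ring
  rw [hsum, add_eq_zero_iff_of_nonneg (sq_nonneg _)
    (mul_nonneg (neg_pos.2 hp).le (sq_nonneg _)), mul_eq_zero, or_iff_right (neg_pos.2 hp).ne',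
    sq_eq_zero_iff, sq_eq_zero_iff, Prod.ext_iff, and_comm]
  rfl

theorem topEquivAt0_normalForm_of_neg {g₁ g₂ : ℝ → ℝ → ℝ} (hg₁ : Continuous (Function.uncurry g₁))
    (hg₂ : Continuous (Function.uncurry g₂)) (h₁ : g₁ 0 0 < 0) (h₂ : g₂ 0 0 < 0) :
    TopEquivAt0 (normalForm g₁) (normalForm g₂) := by
  have hneg {g : ℝ → ℝ → ℝ} (hg : Continuous (Function.uncurry g)) (h : g 0 0 < 0) :
      ∀ᶠ p : ℝ × ℝ in nhds 0, g |p.1| p.2 < 0 := by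
    have hcont : Continuous fun p : ℝ × ℝ => g |p.1| p.2 :=
      hg.comp (continuous_fst.abs.prodMk continuous_snd)
    exact hcont.continuousAt.eventually_lt_const (by simpa using h)
  refine topEquivAt0_of_eventually_iff ?_
  filter_upwards [hneg hg₁ h₁, hneg hg₂ h₂] with p hp₁ hp₂ v
  rw [normalForm_eq_zero_iff_of_neg hp₁, normalForm_eq_zero_iff_of_neg hp₂]

/-! ## Clamped coefficients -/

lemma clamp_pos_iff {a b x : ℝ} (ha : a ≤ 0) (hb : 0 < b) : 0 < clamp a b x ↔ 0 < x := by
  simp [clamp, ha.not_gt, hb]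

lemma clamp_neg_iff {a b x : ℝ} (ha : a < 0) (hb : 0 ≤ b) : clamp a b x < 0 ↔ x < 0 := by
  simp [clamp, ha, hb.not_gt]

/-- The coefficient `g(x, y) = k(x², y)` on the square `[0, r] × [-r, r]`, extended by clamping both
variables so that a local hypothesis on `k` at the origin makes `g` admissible globally. -/
def clampedCoeff (k : ℝ × ℝ → ℝ) (r x y : ℝ) : ℝ := k (clamp 0 r x ^ 2, clamp (-r) r y)

section ClampedCoeff

variable {k : ℝ × ℝ → ℝ} {r : ℝ}

lemma clampedCoeff_zero_left (hr : 0 ≤ r) (y : ℝ) :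
    clampedCoeff k r 0 y = k (0, clamp (-r) r y) := by
  rw [clampedCoeff, clamp_of_mem ⟨le_rfl, hr⟩, zero_pow two_ne_zero]

lemma eventually_clampedCoeff_eq (k : ℝ × ℝ → ℝ) (hr : 0 < r) :
    ∀ᶠ p : ℝ × ℝ in nhds 0, clampedCoeff k r |p.1| p.2 = k (p.1 ^ 2, p.2) := by
  filter_upwards [Metric.ball_mem_nhds (0 : ℝ × ℝ) hr] with p hp
  rw [mem_ball_zero_iff, Prod.norm_def, max_lt_iff] at hp
  rw [clampedCoeff, clamp_of_mem ⟨abs_nonneg _, hp.1.le⟩, clamp_of_mem (abs_le.1 hp.2.le), sq_abs]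

lemma abs_sub_sub_le_of_approximatesLinearOn {L : ℝ × ℝ →L[ℝ] ℝ} {S : Set (ℝ × ℝ)} {c : NNReal}
    (hk : ApproximatesLinearOn k L S c) {p q v : ℝ × ℝ} {a : ℝ} (hp : p ∈ S) (hq : q ∈ S)
    (hv : ‖v‖ = 1) (hpq : p - q = a • v) : |k p - k q - a * L v| ≤ c * |a| := by
  simpa [hpq, norm_smul, hv] using hk p hp q hq

lemma clamp_sq_clamp_mem (hr : 0 ≤ r) (x y : ℝ) :
    (clamp 0 r x ^ 2, clamp (-r) r y) ∈ Icc 0 (r ^ 2) ×ˢ Icc (-r) r :=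
  have hx := clamp_mem_Icc hr x
  ⟨⟨sq_nonneg _, pow_le_pow_left₀ hx.1 hx.2 2⟩, clamp_mem_Icc (neg_le_self hr) y⟩

section ApproximatesLinearOn

variable {L : ℝ × ℝ →L[ℝ] ℝ} {c : NNReal}
  (hk : ApproximatesLinearOn k L (Icc 0 (r ^ 2) ×ˢ Icc (-r) r) c)

include hk

lemma abs_clampedCoeff_sub_clampedCoeff_right_le (hr : 0 ≤ r) (x y y' : ℝ) :
    |clampedCoeff k r x y - clampedCoeff k r x y'| ≤ (|L (0, 1)| + c) * |y - y'| := by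
  set a := clamp (-r) r y - clamp (-r) r y'
  have happrox : |clampedCoeff k r x y - clampedCoeff k r x y' - a * L (0, 1)| ≤ c * |a| :=
    abs_sub_sub_le_of_approximatesLinearOn hk (clamp_sq_clamp_mem hr x y)
      (clamp_sq_clamp_mem hr x y') (by simp [Prod.norm_def]) (by ext <;> simp [a])
  calc |clampedCoeff k r x y - clampedCoeff k r x y'|
      ≤ |clampedCoeff k r x y - clampedCoeff k r x y' - a * L (0, 1)| + |a * L (0, 1)| :=
        sub_le_iff_le_add.1 (abs_sub_abs_le_abs_sub _ _)
    _ ≤ c * |a| + |a| * |L (0, 1)| := by rw [abs_mul]; gcongr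
    _ = (|L (0, 1)| + c) * |a| := by ring
    _ ≤ (|L (0, 1)| + c) * |y - y'| :=
        mul_le_mul_of_nonneg_left (abs_clamp_sub_clamp_le (-r) r y y') (by positivity)

lemma abs_clampedCoeff_sub_clampedCoeff_left_sub_le {x x' : ℝ} (hx : 0 ≤ x) (hxx' : x ≤ x')
    (hx' : x' ≤ r) (y : ℝ) :
    |clampedCoeff k r x' y - clampedCoeff k r x y - (x' ^ 2 - x ^ 2) * L (1, 0)| ≤
      c * (x' ^ 2 - x ^ 2) := by
  have hr : 0 ≤ r := hx.trans (hxx'.trans hx')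
  have happrox := abs_sub_sub_le_of_approximatesLinearOn hk (clamp_sq_clamp_mem hr x' y)
    (clamp_sq_clamp_mem hr x y) (v := (1, 0)) (a := x' ^ 2 - x ^ 2) (by simp [Prod.norm_def]) (by
      rw [clamp_of_mem ⟨hx, hxx'.trans hx'⟩, clamp_of_mem ⟨hx.trans hxx', hx'⟩]
      ext <;> simp)
  rwa [abs_of_nonneg (sub_nonneg.2 (pow_le_pow_left₀ hx hxx' 2))] at happrox

end ApproximatesLinearOn

lemma isAdmissible_clampedCoeff {L : ℝ × ℝ →L[ℝ] ℝ} {e : ℝ} (hr : 0 < r) (he : e = 1 ∨ e = -1)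
    (hk : ApproximatesLinearOn k L (Icc 0 (r ^ 2) ×ˢ Icc (-r) r) (1 / 16))
    (hL₁ : 1 ≤ e * L (1, 0)) (hL₂ : |L (0, 1)| ≤ 1 / 16) :
    IsAdmissible (clampedCoeff k r) r e := by
  refine ⟨hr, he, ?_, ?_, fun x y y' => ?_, fun x x' y hx hxx' hx' => ?_⟩
  · refine hk.continuousOn.comp_continuous (Continuous.prodMk ?_ ?_) fun p =>
      clamp_sq_clamp_mem hr.le p.1 p.2
    · exact ((continuous_clamp 0 r).comp continuous_fst).pow 2
    · exact (continuous_clamp (-r) r).comp continuous_snd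
  · obtain ⟨M, hM⟩ := (isCompact_Icc.prod isCompact_Icc).bddAbove_image hk.continuousOn
    exact ⟨M, fun x y => hM (mem_image_of_mem k (clamp_sq_clamp_mem hr.le x y))⟩
  · have hlip := abs_clampedCoeff_sub_clampedCoeff_right_le hk hr.le x y y'
    push_cast at hlip
    linarith [mul_le_mul_of_nonneg_right hL₂ (abs_nonneg (y - y'))]
  · have happrox := abs_clampedCoeff_sub_clampedCoeff_left_sub_le hk hx hxx' hx' y
    have hsq : 0 ≤ x' ^ 2 - x ^ 2 := sub_nonneg.2 (pow_le_pow_left₀ hx hxx' 2)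
    rw [abs_le] at happrox
    push_cast at happrox
    have := mul_le_mul_of_nonneg_left hL₁ hsq
    rcases he with rfl | rfl <;> linarith

theorem eventually_isAdmissible_clampedCoeff {a b e : ℝ} (hk : ContDiffAt ℝ 1 k 0)
    (he : e = 1 ∨ e = -1) (ha : HasDerivAt (fun s => k (s, 0)) a 0)
    (hb : HasDerivAt (fun y => k (0, y)) b 0) (hea : 1 ≤ e * a) (hb' : |b| ≤ 1 / 16) :
    ∀ᶠ r in nhdsWithin 0 (Ioi 0), IsAdmissible (clampedCoeff k r) r e := by
  have hderiv := (hk.differentiableAt one_ne_zero).hasFDerivAt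
  have hLa : fderiv ℝ k 0 (1, 0) = a :=
    (hderiv.hasLineDerivAt (1, 0)).unique (by simpa [HasLineDerivAt] using ha)
  have hLb : fderiv ℝ k 0 (0, 1) = b :=
    (hderiv.hasLineDerivAt (0, 1)).unique (by simpa [HasLineDerivAt] using hb)
  obtain ⟨N, hN, happrox⟩ := (hk.hasStrictFDerivAt one_ne_zero).approximates_deriv_on_nhds
    (c := 1 / 16) (Or.inr (by positivity))
  obtain ⟨η, hη, hball⟩ := Metric.mem_nhds_iff.1 hN
  filter_upwards [Ioo_mem_nhdsGT (lt_min hη one_pos)] with r ⟨hr, hrη⟩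
  rw [lt_min_iff] at hrη
  refine isAdmissible_clampedCoeff hr he (happrox.mono_set fun p hp => hball ?_) (hLa ▸ hea)
    (hLb ▸ hb')
  rw [mem_ball_zero_iff, Prod.norm_def, max_lt_iff, Real.norm_eq_abs, Real.norm_eq_abs,
    abs_of_nonneg hp.1.1]
  exact ⟨(hp.1.2.trans (pow_le_of_le_one hr.le hrη.2.le two_ne_zero)).trans_lt hrη.1,
    (abs_le.2 hp.2).trans_lt hrη.1⟩

end ClampedCoeff

/-! ## The two families -/

/-- The coefficient of the target family `dy² = targetCoeff ε t u (x², y) dx²`. -/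
def targetCoeff (ε t u : ℝ) (p : ℝ × ℝ) : ℝ := -(ε * p.1 + p.2 ^ 3 + u * p.2 + t)

/-- The surface `z = y² + εx⁴ + x²y³ + tx² + ux²y`. -/
def surface (ε t u : ℝ) (p : ℝ × ℝ) : ℝ :=
  p.2 ^ 2 + ε * p.1 ^ 4 + p.1 ^ 2 * p.2 ^ 3 + t * p.1 ^ 2 + u * p.1 ^ 2 * p.2

/-- A quarter of the discriminant `f_xy² - f_xx f_yy` of `surface ε t u`, as a function of
`(s, y) = (x², y)`. -/
def quarterDiscr (ε t u : ℝ) (p : ℝ × ℝ) : ℝ :=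
  p.1 * (3 * p.2 ^ 2 + u) ^ 2 - (1 + 3 * p.1 * p.2) * (6 * ε * p.1 + p.2 ^ 3 + u * p.2 + t)

/-- Half of `f_y` for `f = surface ε t u`, as a function of `(x², y)`. -/
def halfPdy (u : ℝ) (p : ℝ × ℝ) : ℝ := p.2 + 3 / 2 * p.1 * p.2 ^ 2 + u * p.1 / 2

/-- The radicand `1 + 6 s (z - u s / 2)` of the quadratic formula that solves
`z = halfPdy u (s, y)` for `y`. -/
def radicand (u : ℝ) (p : ℝ × ℝ) : ℝ := 1 + 6 * p.1 * (p.2 - u * p.1 / 2)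

/-- The solution `y` of `z = halfPdy u (s, y)` that is regular at `s = 0`, as a function of
`(s, z)`; the numerator of the quadratic formula is rationalised to allow `s = 0`. -/
def halfPdyInv (u : ℝ) (p : ℝ × ℝ) : ℝ := 2 * (p.2 - u * p.1 / 2) / (1 + √(radicand u p))

/-- The coefficient of the asymptotic BDE of `surface ε t u` in the coordinates
`(x, f_y / 2)`, as a function of `(x², f_y / 2)`. -/
def sourceCoeff (ε t u : ℝ) (p : ℝ × ℝ) : ℝ := quarterDiscr ε t u (p.1, halfPdyInv u p)

lemma hasDerivAt_neg_cubic (t u : ℝ) : HasDerivAt (fun y : ℝ => -(y ^ 3 + u * y + t)) (-u) 0 :=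
  (((hasDerivAt_pow 3 (0 : ℝ)).add ((hasDerivAt_id (0 : ℝ)).const_mul u)).add_const t).neg
    |>.congr_deriv (by simp)

section Target

variable (ε t u : ℝ)

lemma targetCoeff_zero_left (y : ℝ) : targetCoeff ε t u (0, y) = -(y ^ 3 + u * y + t) := by
  simp [targetCoeff]

lemma hasDerivAt_targetCoeff_left : HasDerivAt (fun s => targetCoeff ε t u (s, 0)) (-ε) 0 :=
  ((((hasDerivAt_id (0 : ℝ)).const_mul ε).add_const (0 ^ 3)).add_const (u * 0) |>.add_const t).neg
    |>.congr_deriv (by simp)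

lemma contDiff_targetCoeff : ContDiff ℝ 1 (targetCoeff ε t u) := by
  unfold targetCoeff
  fun_prop

end Target

section Source

variable (ε t u : ℝ)

lemma contDiffAt_halfPdyInv {p : ℝ × ℝ} (hp : 0 < radicand u p) :
    ContDiffAt ℝ 1 (halfPdyInv u) p := by
  have hradicand : ContDiff ℝ 1 (radicand u) := by unfold radicand; fun_prop
  exact ContDiffAt.div (by fun_prop)
    (contDiffAt_const.add (hradicand.contDiffAt.sqrt hp.ne')) (by positivity)

lemma contDiffAt_sourceCoeff_zero : ContDiffAt ℝ 1 (sourceCoeff ε t u) 0 := by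
  have hinv := contDiffAt_halfPdyInv u (p := 0) (by simp [radicand])
  unfold sourceCoeff quarterDiscr
  fun_prop

lemma halfPdyInv_zero_left (y : ℝ) : halfPdyInv u (0, y) = y := by
  simp only [halfPdyInv, radicand, mul_zero, zero_div, sub_zero, zero_mul, add_zero, Real.sqrt_one]
  ring

lemma sourceCoeff_zero_left (y : ℝ) : sourceCoeff ε t u (0, y) = -(y ^ 3 + u * y + t) := by
  simp [sourceCoeff, quarterDiscr, halfPdyInv_zero_left]

lemma hasDerivAt_halfPdyInv_left : HasDerivAt (fun s => halfPdyInv u (s, 0)) (-u / 2) 0 := by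
  have hs := hasDerivAt_id (0 : ℝ)
  have hshift : HasDerivAt (fun s : ℝ => 0 - u * s / 2) (-u / 2) 0 :=
    (((hs.const_mul u).div_const 2).const_sub 0).congr_deriv (by ring)
  have hradicand : HasDerivAt (fun s : ℝ => radicand u (s, 0)) 0 0 :=
    (((hs.const_mul 6).mul hshift).const_add 1).congr_deriv (by simp)
  have hdenom := (hradicand.sqrt (by simp [radicand])).const_add 1
  refine ((hshift.const_mul 2).div hdenom (by positivity)).congr_deriv ?_
  simp only [radicand, mul_zero, zero_div, sub_self, add_zero, Real.sqrt_one]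
  ring

lemma hasDerivAt_sourceCoeff_left :
    HasDerivAt (fun s => sourceCoeff ε t u (s, 0)) (-6 * ε + 3 * u ^ 2 / 2) 0 := by
  have hs := hasDerivAt_id (0 : ℝ)
  have hy := hasDerivAt_halfPdyInv_left u
  have h := (hs.mul ((((hy.pow 2).const_mul 3).add_const u).pow 2)).sub
    ((((hs.const_mul 3).mul hy).const_add 1).mul
      (((hs.const_mul (6 * ε)).add (hy.pow 3)).add (hy.const_mul u) |>.add_const t))
  refine h.congr_deriv ?_
  simp only [Pi.pow_apply, Pi.add_apply, Pi.mul_apply, halfPdyInv_zero_left, id_eq]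
  ring

end Source

/-! ## Equivalence of the clamped normal forms -/

section Clamped

variable {ε : ℝ} (hε : ε = 1 ∨ ε = -1) (t : ℝ) {u : ℝ} (hu : |u| ≤ 1 / 16)

include hε hu

lemma eventually_isAdmissible_clampedCoeff_sourceCoeff :
    ∀ᶠ r in nhdsWithin 0 (Ioi 0), IsAdmissible (clampedCoeff (sourceCoeff ε t u) r) r (-ε) := by
  have hu₂ : u ^ 2 ≤ 1 := (sq_le_one_iff_abs_le_one u).2 (hu.trans (by norm_num))
  refine eventually_isAdmissible_clampedCoeff (contDiffAt_sourceCoeff_zero ε t u)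
    (hε.symm.imp neg_eq_iff_eq_neg.2 (congrArg Neg.neg)) (hasDerivAt_sourceCoeff_left ε t u)
    (b := -u) ?_ ?_ (by rwa [abs_neg])
  · simp_rw [sourceCoeff_zero_left]
    exact hasDerivAt_neg_cubic t u
  · rcases hε with rfl | rfl <;> linarith [sq_nonneg u]

lemma eventually_isAdmissible_clampedCoeff_targetCoeff :
    ∀ᶠ r in nhdsWithin 0 (Ioi 0), IsAdmissible (clampedCoeff (targetCoeff ε t u) r) r (-ε) := by
  refine eventually_isAdmissible_clampedCoeff (contDiff_targetCoeff ε t u).contDiffAt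
    (hε.symm.imp neg_eq_iff_eq_neg.2 (congrArg Neg.neg)) (hasDerivAt_targetCoeff_left ε t u)
    (b := -u) ?_ ?_ (by rwa [abs_neg])
  · simp_rw [targetCoeff_zero_left]
    exact hasDerivAt_neg_cubic t u
  · rcases hε with rfl | rfl <;> norm_num

end Clamped

/-- The order isomorphism `x ↦ -exp (-x)` from the line onto the negative half-line. -/
def negExpNegOrderIso : ℝ ≃o Iio (0 : ℝ) where
  toFun x := ⟨-Real.exp (-x), mem_Iio.2 (neg_neg_of_pos (Real.exp_pos _))⟩
  invFun y := -Real.log (-y)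
  left_inv x := by simp
  right_inv y := Subtype.ext (by
    simp only [neg_neg, Real.exp_log (neg_pos.2 (mem_Iio.1 y.2))])
  map_rel_iff' {a b} := by
    rw [Equiv.coe_fn_mk, Subtype.mk_le_mk, neg_le_neg_iff, Real.exp_le_exp, neg_le_neg_iff]

lemma setOf_neg_cubic_clamp_pos_of_nonneg {r u : ℝ} (hr : 0 < r) (hu : 0 ≤ u) :
    {a | 0 < -(clamp (-r) r a ^ 3 + u * clamp (-r) r a)} = Iio 0 := by
  ext a
  rw [mem_ofPred_eq, mem_Iio, ← clamp_neg_iff (x := a) (neg_neg_of_pos hr) hr.le]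
  set c := clamp (-r) r a
  rw [show -(c ^ 3 + u * c) = -c * (c ^ 2 + u) by ring]
  refine ⟨fun h => neg_pos.1 (pos_of_mul_pos_left h (by positivity)), fun h => ?_⟩
  exact mul_pos (neg_pos.2 h) (add_pos_of_pos_of_nonneg (sq_pos_of_neg h) hu)

lemma setOf_neg_cubic_clamp_pos_of_sq_lt {r u : ℝ} (hr : 0 < r) (hru : r ^ 2 < -u) :
    {a | 0 < -(clamp (-r) r a ^ 3 + u * clamp (-r) r a)} = Ioi 0 := by
  ext a
  have hc := clamp_mem_Icc (neg_le_self hr.le) a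
  rw [mem_ofPred_eq, mem_Ioi, ← clamp_pos_iff (x := a) (neg_nonpos.2 hr.le) hr]
  set c := clamp (-r) r a
  rw [show -(c ^ 3 + u * c) = c * (-u - c ^ 2) by ring]
  exact mul_pos_iff_of_pos_right (sub_pos.2 ((sq_le_sq' hc.1 hc.2).trans_lt hru))

lemma topEquivAt0_of_neg_cubic_axis {g₁ g₂ : ℝ → ℝ → ℝ} {r u : ℝ} (H₁ : IsAdmissible g₁ r (-1))
    (H₂ : IsAdmissible g₂ r (-1))
    (hg₁ : ∀ a, g₁ 0 a = -(clamp (-r) r a ^ 3 + u * clamp (-r) r a))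
    (hg₂ : ∀ a, g₂ 0 a = -(clamp (-r) r a ^ 3 + u * clamp (-r) r a)) (hru : u < 0 → r ^ 2 < -u) :
    TopEquivAt0 (normalForm g₁) (normalForm g₂) := by
  have hr := H₁.pos
  have hax (a : ℝ) : g₁ 0 a = g₂ 0 a := (hg₁ a).trans (hg₂ a).symm
  have h₀ : g₁ 0 0 = 0 := by simp [hg₁, clamp_of_mem (show (0 : ℝ) ∈ Icc (-r) r by simp [hr.le])]
  rcases lt_or_ge u 0 with hu | hu
  · have hset : {a | 0 < g₁ 0 a} = Ioi 0 := by
      simpa only [hg₁] using setOf_neg_cubic_clamp_pos_of_sq_lt hr (hru hu)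
    exact H₁.topEquivAt0_of_decreasing_of_eq_zero H₂ hax h₀ (hset ▸ ordConnected_Ioi)
      (Real.expOrderIso.trans (OrderIso.setCongr _ _ hset.symm))
  · have hset : {a | 0 < g₁ 0 a} = Iio 0 := by
      simpa only [hg₁] using setOf_neg_cubic_clamp_pos_of_nonneg hr hu
    exact H₁.topEquivAt0_of_decreasing_of_eq_zero H₂ hax h₀ (hset ▸ ordConnected_Iio)
      (negExpNegOrderIso.trans (OrderIso.setCongr _ _ hset.symm))

theorem exists_topEquivAt0_normalForm_clampedCoeff {ε : ℝ} (hε : ε = 1 ∨ ε = -1) (t : ℝ) {u : ℝ}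
    (hu : |u| ≤ 1 / 16) :
    ∃ r > 0, TopEquivAt0 (normalForm (clampedCoeff (sourceCoeff ε t u) r))
      (normalForm (clampedCoeff (targetCoeff ε t u) r)) := by
  have hsq : ∀ᶠ r : ℝ in nhdsWithin 0 (Ioi 0), u < 0 → r ^ 2 < -u := by
    refine eventually_imp_distrib_left.2 fun hu₀ => nhdsWithin_le_nhds ?_
    exact (continuous_pow 2).continuousAt.eventually_lt_const (by simpa using hu₀)
  obtain ⟨r, H₁, H₂, hru⟩ := ((eventually_isAdmissible_clampedCoeff_sourceCoeff hε t hu).and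
    ((eventually_isAdmissible_clampedCoeff_targetCoeff hε t hu).and hsq)).exists
  have hr := H₁.pos
  refine ⟨r, hr, ?_⟩
  have hg₁ (a : ℝ) := (clampedCoeff_zero_left hr.le a).trans (sourceCoeff_zero_left ε t u _)
  have hg₂ (a : ℝ) := (clampedCoeff_zero_left hr.le a).trans (targetCoeff_zero_left ε t u _)
  have hax (a : ℝ) := (hg₁ a).trans (hg₂ a).symm
  have h₀ : clampedCoeff (sourceCoeff ε t u) r 0 0 = -t := by
    simp [hg₁, clamp_of_mem (show (0 : ℝ) ∈ Icc (-r) r by simp [hr.le])]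
  rcases lt_or_ge 0 t with ht | ht
  · exact topEquivAt0_normalForm_of_neg H₁.continuous H₂.continuous (by linarith)
      (by linarith [hax 0])
  rcases hε with rfl | rfl
  · rcases ht.lt_or_eq with ht | rfl
    · exact H₁.topEquivAt0_of_decreasing_of_pos H₂ hax (by linarith)
    · exact topEquivAt0_of_neg_cubic_axis H₁ H₂ (by simpa using hg₁) (by simpa using hg₂) hru
  · rw [neg_neg] at H₁ H₂
    exact H₁.topEquivAt0_of_increasing H₂ hax (by linarith)

/-! ## Straightening the asymptotic BDE of the surface -/

section Straightening

variable (u : ℝ) {s y z : ℝ}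

lemma radicand_halfPdy (s y : ℝ) : radicand u (s, halfPdy u (s, y)) = (1 + 3 * s * y) ^ 2 := by
  simp only [radicand, halfPdy]
  ring

lemma halfPdyInv_halfPdy (h : 0 < 1 + 3 * s * y) : halfPdyInv u (s, halfPdy u (s, y)) = y := by
  rw [halfPdyInv, radicand_halfPdy, Real.sqrt_sq h.le, div_eq_iff (by linarith)]
  simp only [halfPdy]
  ring

lemma one_add_mul_halfPdyInv (h : 0 ≤ radicand u (s, z)) :
    1 + 3 * s * halfPdyInv u (s, z) = √(radicand u (s, z)) := by
  have hsq := Real.sq_sqrt h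
  have hdenom : 1 + √(radicand u (s, z)) ≠ 0 := by positivity
  rw [halfPdyInv, mul_div_assoc', ← eq_sub_iff_add_eq', div_eq_iff hdenom]
  simp only [radicand] at hsq ⊢
  linear_combination -hsq

lemma halfPdy_halfPdyInv (h : 0 ≤ radicand u (s, z)) : halfPdy u (s, halfPdyInv u (s, z)) = z := by
  have hsqrt := one_add_mul_halfPdyInv u h
  have hmul : halfPdyInv u (s, z) * (1 + √(radicand u (s, z))) = 2 * (z - u * s / 2) :=
    div_mul_cancel₀ _ (by positivity)
  simp only [halfPdy]
  linear_combination halfPdyInv u (s, z) / 2 * hsqrt + hmul / 2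

lemma contDiffOn_straightening_symm :
    ContDiffOn ℝ 1 (fun q : ℝ × ℝ => (q.1, halfPdyInv u (q.1 ^ 2, q.2)))
      {q | 0 < radicand u (q.1 ^ 2, q.2)} := fun q hq =>
  have hcomp : ContDiffAt ℝ 1 (fun q : ℝ × ℝ => halfPdyInv u (q.1 ^ 2, q.2)) q :=
    (contDiffAt_halfPdyInv u hq).comp q (f := fun q : ℝ × ℝ => (q.1 ^ 2, q.2)) (by fun_prop)
  (contDiffAt_fst.prodMk hcomp).contDiffWithinAt

/-- The change of coordinates `(x, y) ↦ (x, f_y / 2)`, where `f = surface ε t u`. -/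
def straightening : OpenPartialHomeomorph (ℝ × ℝ) (ℝ × ℝ) where
  toFun p := (p.1, halfPdy u (p.1 ^ 2, p.2))
  invFun q := (q.1, halfPdyInv u (q.1 ^ 2, q.2))
  source := {p | 0 < 1 + 3 * p.1 ^ 2 * p.2}
  target := {q | 0 < radicand u (q.1 ^ 2, q.2)}
  map_source' p hp := by
    simpa only [mem_ofPred_eq, radicand_halfPdy] using pow_pos hp 2
  map_target' q hq := by
    simpa only [mem_ofPred_eq, one_add_mul_halfPdyInv u (le_of_lt hq)] using Real.sqrt_pos.2 hq
  left_inv' p hp := by simp only [halfPdyInv_halfPdy u hp]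
  right_inv' q hq := by simp only [halfPdy_halfPdyInv u (le_of_lt hq)]
  open_source := isOpen_lt continuous_const (by fun_prop)
  open_target := isOpen_lt continuous_const (by unfold radicand; fun_prop)
  continuousOn_toFun := by unfold halfPdy; fun_prop
  continuousOn_invFun := (contDiffOn_straightening_symm u).continuousOn

lemma straightening_zero : straightening u 0 = 0 := by
  simp [straightening, halfPdy]

lemma contDiff_straightening : ContDiff ℝ 1 (straightening u) := by
  change ContDiff ℝ 1 fun p : ℝ × ℝ => (p.1, halfPdy u (p.1 ^ 2, p.2))
  unfold halfPdy
  fun_prop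

lemma fderiv_straightening_apply (p v : ℝ × ℝ) : fderiv ℝ (straightening u) p v =
    (v.1, (1 + 3 * p.1 ^ 2 * p.2) * v.2 + p.1 * (3 * p.2 ^ 2 + u) * v.1) := by
  have hfst : HasFDerivAt (fun p : ℝ × ℝ => p.1) (ContinuousLinearMap.fst ℝ ℝ ℝ) p :=
    hasFDerivAt_fst
  have hsnd : HasFDerivAt (fun p : ℝ × ℝ => p.2) (ContinuousLinearMap.snd ℝ ℝ ℝ) p :=
    hasFDerivAt_snd
  have h : HasFDerivAt (straightening u) _ p := hfst.prodMk
    ((hsnd.add (((hfst.pow 2).const_mul (3 / 2)).mul (hsnd.pow 2))).add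
      (((hfst.pow 2).const_mul u).mul_const 2⁻¹))
  rw [h.fderiv]
  ext
  · simp
  · simp only [ContinuousLinearMap.prod_apply, add_apply, smul_apply, ContinuousLinearMap.coe_fst',
      ContinuousLinearMap.coe_snd', nsmul_eq_mul, smul_eq_mul]
    push_cast
    ring

end Straightening

section Surface

variable (ε t u : ℝ)

lemma pdx_surface : pdx (surface ε t u) =
    fun p => 4 * ε * p.1 ^ 3 + 2 * p.1 * p.2 ^ 3 + 2 * t * p.1 + 2 * u * p.1 * p.2 := by
  ext p
  have hx := hasDerivAt_id p.1
  refine (((((hx.pow 4).const_mul ε).const_add (p.2 ^ 2)).add ((hx.pow 2).mul_const (p.2 ^ 3))).add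
    ((hx.pow 2).const_mul t) |>.add (((hx.pow 2).const_mul u).mul_const p.2)).deriv.trans ?_
  simp only [id_eq, Nat.cast_ofNat]
  ring

lemma pdy_surface : pdy (surface ε t u) = fun p => 2 * halfPdy u (p.1 ^ 2, p.2) := by
  ext p
  have hy := hasDerivAt_id p.2
  refine ((((hy.pow 2).add_const (ε * p.1 ^ 4)).add ((hy.pow 3).const_mul (p.1 ^ 2))).add_const
    (t * p.1 ^ 2) |>.add (hy.const_mul (u * p.1 ^ 2))).deriv.trans ?_
  simp only [halfPdy, id_eq, Nat.cast_ofNat]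
  ring

lemma fxx_surface (p : ℝ × ℝ) : fxx (surface ε t u) p =
    2 * (6 * ε * p.1 ^ 2 + p.2 ^ 3 + u * p.2 + t) := by
  rw [fxx, pdx_surface]
  have hx := hasDerivAt_id p.1
  refine ((((hx.pow 3).const_mul (4 * ε)).add ((hx.const_mul 2).mul_const (p.2 ^ 3))).add
    (hx.const_mul (2 * t)) |>.add ((hx.const_mul (2 * u)).mul_const p.2)).deriv.trans ?_
  simp only [id_eq, Nat.cast_ofNat]
  ring

lemma fxy_surface (p : ℝ × ℝ) : fxy (surface ε t u) p = 2 * (p.1 * (3 * p.2 ^ 2 + u)) := by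
  rw [fxy, pdx_surface]
  have hy := hasDerivAt_id p.2
  refine ((((hy.pow 3).const_mul (2 * p.1)).const_add (4 * ε * p.1 ^ 3)).add_const
    (2 * t * p.1) |>.add (hy.const_mul (2 * u * p.1))).deriv.trans ?_
  simp only [id_eq, Nat.cast_ofNat]
  ring

lemma fyy_surface (p : ℝ × ℝ) : fyy (surface ε t u) p = 2 * (1 + 3 * p.1 ^ 2 * p.2) := by
  rw [fyy, pdy_surface]
  have hy := hasDerivAt_id p.2
  refine ((hy.add ((hy.pow 2).const_mul (3 / 2 * p.1 ^ 2))).add_const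
    (u * p.1 ^ 2 / 2) |>.const_mul 2).deriv.trans ?_
  simp only [id_eq, Nat.cast_ofNat]
  ring

lemma normalForm_sourceCoeff_straightening {p : ℝ × ℝ} (hp : p ∈ (straightening u).source)
    (v : ℝ × ℝ) :
    normalForm (fun x y => sourceCoeff ε t u (x ^ 2, y)) (straightening u p)
      (fderiv ℝ (straightening u) p v) =
      (1 + 3 * p.1 ^ 2 * p.2) / 2 * asymBDE (surface ε t u) p v := by
  have hcoeff : sourceCoeff ε t u (|(straightening u p).1| ^ 2, (straightening u p).2) =
      quarterDiscr ε t u (p.1 ^ 2, p.2) := by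
    rw [sq_abs, sourceCoeff]
    exact congrArg (fun y => quarterDiscr ε t u (p.1 ^ 2, y)) (halfPdyInv_halfPdy u hp)
  rw [normalForm, hcoeff, fderiv_straightening_apply, asymBDE, BDE, fxx_surface, fxy_surface,
    fyy_surface, quarterDiscr]
  ring

theorem topEquivAt0_asymBDE_surface :
    TopEquivAt0 (asymBDE (surface ε t u))
      (normalForm fun x y => sourceCoeff ε t u (x ^ 2, y)) := by
  refine topEquivAt0_of_diffeo (straightening u) (by simp [straightening]) (straightening_zero u)
    (contDiff_straightening u).contDiffOn (contDiffOn_straightening_symm u) fun p hp v => ?_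
  rw [normalForm_sourceCoeff_straightening ε t u hp, mul_eq_zero, or_iff_right]
  exact (half_pos hp).ne'

end Surface

lemma normalForm_targetCoeff (ε t u : ℝ) :
    normalForm (fun x y => targetCoeff ε t u (x ^ 2, y)) =
      BDE (fun _ => 1) (fun _ => 0) (fun p => ε * p.1 ^ 2 + p.2 ^ 3 + u * p.2 + t) := by
  ext p v
  simp only [normalForm, targetCoeff, BDE, sq_abs]
  ring

theorem topEquivAt0_asymBDE_surface_BDE {ε : ℝ} (hε : ε = 1 ∨ ε = -1) (t : ℝ) {u : ℝ}
    (hu : |u| ≤ 1 / 16) :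
    TopEquivAt0 (asymBDE (surface ε t u))
      (BDE (fun _ => 1) (fun _ => 0) (fun p => ε * p.1 ^ 2 + p.2 ^ 3 + u * p.2 + t)) := by
  obtain ⟨r, hr, hclamped⟩ := exists_topEquivAt0_normalForm_clampedCoeff hε t hu
  have heq (k : ℝ × ℝ → ℝ) : ∀ᶠ p : ℝ × ℝ in nhds 0, normalForm (clampedCoeff k r) p =
      normalForm (fun x y => k (x ^ 2, y)) p := by
    filter_upwards [eventually_clampedCoeff_eq k hr] with p hp
    ext v
    rw [normalForm, normalForm, hp, sq_abs]
  rw [← normalForm_targetCoeff]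
  exact (topEquivAt0_asymBDE_surface ε t u).trans <| (topEquivAt0_of_eventually_iff
    ((heq (sourceCoeff ε t u)).mono fun p hp v => by rw [hp])).trans <| hclamped.trans <|
    topEquivAt0_of_eventually_iff ((heq (targetCoeff ε t u)).mono fun p hp v => by rw [hp])

/-- the 2-parameter family of asymptotic BDEs of
`f(x,y;t,u) = y² + εx⁴ + x²y³ + tx² + ux²y`, `ε = ±1`, is fiber topologically
equivalent at `0` to the family `dy² + (εx² + y³ + uy + t)dx² = 0`. -/
theorem stmt14 (ε : ℝ) (hε : ε = 1 ∨ ε = -1) :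
    FiberTopEquivAt0
      (fun tu => asymBDE (fun p =>
        p.2 ^ 2 + ε * p.1 ^ 4 + p.1 ^ 2 * p.2 ^ 3 + tu.1 * p.1 ^ 2 + tu.2 * p.1 ^ 2 * p.2))
      (fun tu => BDE (fun _ => 1) (fun _ => 0)
        (fun p => ε * p.1 ^ 2 + p.2 ^ 3 + tu.2 * p.2 + tu.1)) := by
  refine ⟨{q | |q.2| < 1 / 16}, id, id, ?_, rfl, continuousOn_id, continuousOn_id,
    ⟨fun _ _ => rfl, fun _ _ => rfl⟩, ?_⟩
  · exact (isOpen_lt continuous_snd.abs continuous_const).mem_nhds (by simp)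
  · exact fun q hq => topEquivAt0_asymBDE_surface_BDE hε q.1 (le_of_lt hq)
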